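/- arXiv:2406.08400 — 3 statements merged into one kernel-verified Lean document; each statement's English description precedes it below -/
import Mathlib

section
/- For every b > 1/2 there exists a constant C > 0 such that for all Schwartz functions U₁, U₂, U₃, U₄ : ℝ² → ℂ one has ‖U₁U₂U₃U₄‖_{L²(ℝ²)} ≤ C · ∏_{i=1}^{4} ( ∫_{ℝ²} (1+|τ−ξ³|)^{2b} |Û_i(ξ,τ)|² dξ dτ )^{1/2}. -/
open MeasureTheory

section Aux

open scoped ENNReal

lemma hol3 {α : Type*} [MeasurableSpace α] {μ : Measure α} {f g h : α → ℝ≥0∞}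
    (hf : Measurable f) (hg : Measurable g) (hh : Measurable h) {p q r : ℝ}
    (hp : 0 ≤ p) (hq : 0 ≤ q) (hr : 0 ≤ r) (hpqr : p + q + r = 1) :
    ∫⁻ a, f a ^ p * g a ^ q * h a ^ r ∂μ
      ≤ (∫⁻ a, f a ∂μ) ^ p * (∫⁻ a, g a ∂μ) ^ q * (∫⁻ a, h a ∂μ) ^ r := by
  have := ENNReal.lintegral_prod_norm_pow_le (μ := μ) (Finset.univ : Finset (Fin 3))
    (f := ![f, g, h]) (p := ![p, q, r]) (by
      intro i _; fin_cases i
      · exact hf.aemeasurable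
      · exact hg.aemeasurable
      · exact hh.aemeasurable) (by simp [Fin.sum_univ_three, hpqr])
      (by intro i _; fin_cases i <;> simp [hp, hq, hr])
  simpa [Fin.prod_univ_three] using this

/-- Young's inequality `L^{4/3} * L^{4/3} → L^2`. -/
lemma young (f g : ℝ × ℝ → ℝ≥0∞) (hf : Measurable f) (hg : Measurable g) :
    ∫⁻ p, (∫⁻ q, f q * g (p - q)) ^ (2 : ℝ) ≤
      (∫⁻ p, f p ^ (4 / 3 : ℝ)) ^ (3 / 2 : ℝ) * (∫⁻ p, g p ^ (4 / 3 : ℝ)) ^ (3 / 2 : ℝ) := by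
  have key : ∀ p, (∫⁻ q, f q * g (p - q)) ^ (2 : ℝ) ≤
      (∫⁻ q, f q ^ (4 / 3 : ℝ) * g (p - q) ^ (4 / 3 : ℝ)) *
        ((∫⁻ p, f p ^ (4 / 3 : ℝ)) ^ (1 / 2 : ℝ) * (∫⁻ p, g p ^ (4 / 3 : ℝ)) ^ (1 / 2 : ℝ)) := by
    intro p
    have h := hol3 (μ := (volume : Measure (ℝ × ℝ)))
      (f := fun q => f q ^ (4 / 3 : ℝ) * g (p - q) ^ (4 / 3 : ℝ))
      (g := fun q => f q ^ (4 / 3 : ℝ)) (h := fun q => g (p - q) ^ (4 / 3 : ℝ))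
      (by fun_prop) (by fun_prop) (by fun_prop) (p := 1/2) (q := 1/4) (r := 1/4)
      (by norm_num) (by norm_num) (by norm_num) (by norm_num)
    have e : ∀ q, (f q ^ (4 / 3 : ℝ) * g (p - q) ^ (4 / 3 : ℝ)) ^ (1/2 : ℝ) *
        (f q ^ (4 / 3 : ℝ)) ^ (1/4 : ℝ) * (g (p - q) ^ (4 / 3 : ℝ)) ^ (1/4 : ℝ)
        = f q * g (p - q) := by
      intro q
      rw [ENNReal.mul_rpow_of_nonneg _ _ (by norm_num)]
      simp only [← ENNReal.rpow_mul]
      rw [mul_right_comm (f q ^ _), ← ENNReal.rpow_add_of_nonneg _ _ (by norm_num) (by norm_num),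
        mul_assoc, ← ENNReal.rpow_add_of_nonneg _ _ (by norm_num) (by norm_num)]
      norm_num
    simp only [e] at h
    rw [lintegral_sub_left_eq_self (fun q => g q ^ (4/3 : ℝ)) p] at h
    calc _ ≤ _ := ENNReal.rpow_le_rpow h (by norm_num : (0:ℝ) ≤ 2)
      _ = _ := by
        rw [ENNReal.mul_rpow_of_nonneg _ _ (by norm_num), ENNReal.mul_rpow_of_nonneg _ _ (by norm_num)]
        simp only [← ENNReal.rpow_mul]
        norm_num [mul_assoc]
  calc _ ≤ _ := lintegral_mono key
    _ = (∫⁻ p, ∫⁻ q, f q ^ (4 / 3 : ℝ) * g (p - q) ^ (4 / 3 : ℝ)) *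
        ((∫⁻ p, f p ^ (4 / 3 : ℝ)) ^ (1 / 2 : ℝ) * (∫⁻ p, g p ^ (4 / 3 : ℝ)) ^ (1 / 2 : ℝ)) := by
        rw [lintegral_mul_const]
        exact Measurable.lintegral_prod_right' (f := fun z : (ℝ × ℝ) × (ℝ × ℝ) =>
          f z.2 ^ (4 / 3 : ℝ) * g (z.1 - z.2) ^ (4 / 3 : ℝ)) (by fun_prop)
    _ = ((∫⁻ p, f p ^ (4 / 3 : ℝ)) * (∫⁻ p, g p ^ (4 / 3 : ℝ))) *
        ((∫⁻ p, f p ^ (4 / 3 : ℝ)) ^ (1 / 2 : ℝ) * (∫⁻ p, g p ^ (4 / 3 : ℝ)) ^ (1 / 2 : ℝ)) := by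
        congr 1
        rw [lintegral_lintegral_swap (by fun_prop)]
        rw [← lintegral_mul_const _ (by fun_prop)]
        refine lintegral_congr fun q => ?_
        rw [lintegral_const_mul _ (by fun_prop),
          lintegral_sub_right_eq_self (fun q => g q ^ (4/3 : ℝ)) q]
    _ = _ := by
        rw [mul_mul_mul_comm]
        congr 1
        · nth_rw 1 [← ENNReal.rpow_one (∫⁻ p, f p ^ (4 / 3 : ℝ))]
          rw [← ENNReal.rpow_add_of_nonneg _ _ (by norm_num) (by norm_num)]; norm_num
        · nth_rw 1 [← ENNReal.rpow_one (∫⁻ p, g p ^ (4 / 3 : ℝ))]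
          rw [← ENNReal.rpow_add_of_nonneg _ _ (by norm_num) (by norm_num)]; norm_num

/-- local integrability of `|u|^{-1/2}` -/
noncomputable def rr (u : ℝ) : ℝ≥0∞ :=
  (Set.Icc (-3 : ℝ) 3).indicator (fun u => ENNReal.ofReal |u| ^ (-(1/2) : ℝ)) u

lemma measurable_rr : Measurable rr := by
  unfold rr
  exact Measurable.indicator (by fun_prop) measurableSet_Icc

lemma rr_fin : ∫⁻ u, rr u < ∞ := by
  unfold rr
  rw [lintegral_indicator measurableSet_Icc]
  have h : IntegrableOn (fun u : ℝ => |u| ^ (-(1/2) : ℝ)) (Set.Icc (-3 : ℝ) 3) := by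
    have h1 : IntervalIntegrable (fun u : ℝ => u ^ (-(1/2) : ℝ)) volume 0 3 :=
      intervalIntegral.intervalIntegrable_rpow' (by norm_num)
    have h1' : IntervalIntegrable (fun u : ℝ => |u| ^ (-(1/2) : ℝ)) volume 0 3 := by
      refine h1.congr ?_
      intro u hu
      rw [Set.uIoc_of_le (by norm_num)] at hu
      simp only [abs_of_pos hu.1]
    have h2 : IntervalIntegrable (fun u : ℝ => |u| ^ (-(1/2) : ℝ)) volume (-3) 0 := by
      have := h1'.comp_sub_left 0
      simpa using this.symm
    have h3 := h2.trans h1'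
    rwa [intervalIntegrable_iff_integrableOn_Icc_of_le (by norm_num)] at h3
  have := h.lintegral_lt_top
  refine lt_of_le_of_lt (le_of_eq ?_) this
  refine lintegral_congr_ae (ae_restrict_of_ae ?_)
  have : ∀ᵐ u : ℝ, u ≠ 0 := by simp [ae_iff]
  filter_upwards [this] with u hu
  rw [ENNReal.ofReal_rpow_of_pos (abs_pos.2 hu)]

lemma jap_fin (m : ℝ) (hm : 1 < m) : ∫⁻ u : ℝ, ENNReal.ofReal (1 + |u|) ^ (-m) < ∞ := by
  have := (integrable_one_add_norm (E := ℝ) (μ := volume) (r := m) (by simpa using hm)).lintegral_lt_top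
  refine lt_of_le_of_lt (le_of_eq ?_) this
  refine lintegral_congr fun u => ?_
  rw [ENNReal.ofReal_rpow_of_pos (by positivity)]; rfl

/-- The kernel `M(x,y) = |x²-y²|^{-1/2} |y|^{-1/2} |x|^{1/2}`. -/
noncomputable def MM (x y : ℝ) : ℝ≥0∞ :=
  ENNReal.ofReal |x ^ 2 - y ^ 2| ^ (-(1/2) : ℝ) * ENNReal.ofReal |y| ^ (-(1/2) : ℝ) *
    ENNReal.ofReal |x| ^ ((1/2) : ℝ)

lemma le_rr (u : ℝ) (h : |u| ≤ 3) : ENNReal.ofReal |u| ^ (-(1/2) : ℝ) = rr u := by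
  unfold rr
  rw [Set.indicator_of_mem (Set.mem_Icc.2 (abs_le.1 h))]

lemma pow_bd {A B c : ℝ} (hc : 0 < c) (h : c * B ≤ A) :
    ENNReal.ofReal A ^ (-(1/2) : ℝ) ≤
      ENNReal.ofReal c ^ (-(1/2) : ℝ) * ENNReal.ofReal B ^ (-(1/2) : ℝ) := by
  rw [← ENNReal.mul_rpow_of_ne_top ENNReal.ofReal_ne_top ENNReal.ofReal_ne_top,
    ← ENNReal.ofReal_mul hc.le, ENNReal.rpow_neg, ENNReal.rpow_neg, ENNReal.inv_le_inv]
  exact ENNReal.rpow_le_rpow (ENNReal.ofReal_le_ofReal h) (by norm_num)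

lemma MM_bd (u : ℝ) : MM 1 u ≤ ENNReal.ofReal (1/16) ^ (-(1/2) : ℝ) *
    (rr u + rr (u - 1) + rr (u + 1) + ENNReal.ofReal (1 + |u|) ^ (-(3/2) : ℝ)) := by
  have e : MM 1 u = ENNReal.ofReal (|1 - u ^ 2| * |u|) ^ (-(1/2) : ℝ) := by
    unfold MM
    rw [ENNReal.ofReal_mul (abs_nonneg _),
      ENNReal.mul_rpow_of_ne_top ENNReal.ofReal_ne_top ENNReal.ofReal_ne_top]
    simp
  rw [e]
  have hf : |1 - u ^ 2| = |u - 1| * |u + 1| := by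
    rw [← abs_mul, abs_sub_comm]; ring_nf
  have hc : (0:ℝ) < 1/16 := by norm_num
  rw [hf]
  by_cases h1 : |u| ≤ 1/2
  · have h1' := abs_le.1 h1
    refine (pow_bd (B := |u|) hc ?_).trans (mul_le_mul_right ?_ _)
    · refine mul_le_mul_of_nonneg_right ?_ (abs_nonneg _)
      rw [abs_of_nonpos (by linarith), abs_of_nonneg (by linarith)]
      nlinarith
    · rw [le_rr u (by linarith)]
      rw [add_assoc, add_assoc]; exact le_self_add
  push Not at h1
  by_cases h2 : |u| ≤ 2
  · have h2' := abs_le.1 h2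
    by_cases h3 : 0 ≤ u
    · rw [abs_of_nonneg h3] at h1
      refine (pow_bd (B := |u - 1|) hc ?_).trans (mul_le_mul_right ?_ _)
      · rw [abs_of_nonneg (by linarith : 0 ≤ u + 1), abs_of_nonneg h3]
        have := abs_nonneg (u - 1)
        rw [mul_assoc, mul_comm]
        refine mul_le_mul_of_nonneg_left ?_ this
        nlinarith
      · rw [le_rr (u - 1) (abs_le.2 ⟨by linarith, by linarith⟩)]
        rw [add_comm (rr u), add_assoc, add_assoc]; exact le_self_add
    · push Not at h3
      rw [abs_of_neg h3] at h1
      refine (pow_bd (B := |u + 1|) hc ?_).trans (mul_le_mul_right ?_ _)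
      · rw [abs_of_nonpos (by linarith : u - 1 ≤ 0), abs_of_neg h3]
        have := abs_nonneg (u + 1)
        rw [mul_right_comm]
        refine mul_le_mul_of_nonneg_right ?_ this
        nlinarith
      · rw [le_rr (u + 1) (abs_le.2 ⟨by linarith, by linarith⟩)]
        rw [add_comm _ (rr (u + 1)), add_assoc]; exact le_self_add
  push Not at h2
  refine (pow_bd (B := (1 + |u|) ^ 3) hc ?_).trans (mul_le_mul_right ?_ _)
  · have : |u - 1| * |u + 1| = |u| ^ 2 - 1 := by
      rw [← hf, abs_sub_comm, ← sq_abs u, abs_of_nonneg (by nlinarith)]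
    rw [this]
    set v := |u|
    nlinarith [mul_pos (sub_pos.2 h2) (sub_pos.2 h2), mul_pos (mul_pos (sub_pos.2 h2) (sub_pos.2 h2)) (sub_pos.2 h2)]
  · refine le_trans (le_of_eq ?_) le_add_self
    rw [ENNReal.ofReal_pow (by positivity), ← ENNReal.rpow_natCast, ← ENNReal.rpow_mul]
    norm_num

lemma MM_one_fin : ∫⁻ u, MM 1 u < ∞ := by
  refine lt_of_le_of_lt (lintegral_mono MM_bd) ?_
  have m := measurable_rr
  have h1 : ∫⁻ u, rr (u - 1) = ∫⁻ u, rr u := lintegral_sub_right_eq_self rr 1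
  have h2 : ∫⁻ u, rr (u + 1) = ∫⁻ u, rr u := lintegral_add_right_eq_self rr 1
  rw [lintegral_const_mul _ (by fun_prop), lintegral_add_left (by fun_prop),
    lintegral_add_left (by fun_prop), lintegral_add_left (by fun_prop), h1, h2]
  refine ENNReal.mul_lt_top ?_ ?_
  · rw [ENNReal.ofReal_rpow_of_pos (by norm_num)]; exact ENNReal.ofReal_lt_top
  · simp only [ENNReal.add_lt_top]
    exact ⟨⟨⟨rr_fin, rr_fin⟩, rr_fin⟩, jap_fin _ (by norm_num)⟩

lemma measurable_MM : Measurable (fun z : ℝ × ℝ => MM z.1 z.2) := by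
  unfold MM
  have h1 : Measurable (fun z : ℝ × ℝ => ENNReal.ofReal |z.1 ^ 2 - z.2 ^ 2|) := by fun_prop
  have h2 : Measurable (fun z : ℝ × ℝ => ENNReal.ofReal |z.2|) := by fun_prop
  have h3 : Measurable (fun z : ℝ × ℝ => ENNReal.ofReal |z.1|) := by fun_prop
  exact ((h1.pow_const _).mul (h2.pow_const _)).mul (h3.pow_const _)

lemma MM_scale (x u : ℝ) (hx : x ≠ 0) : ENNReal.ofReal |x| * MM x (x * u) = MM 1 u := by
  have hX0 : ENNReal.ofReal |x| ≠ 0 := by simpa using hx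
  have hXt : ENNReal.ofReal |x| ≠ ∞ := ENNReal.ofReal_ne_top
  unfold MM
  have e1 : ENNReal.ofReal |x ^ 2 - (x * u) ^ 2| =
      ENNReal.ofReal |x| ^ (2 : ℝ) * ENNReal.ofReal |1 ^ 2 - u ^ 2| := by
    rw [ENNReal.ofReal_rpow_of_nonneg (abs_nonneg _) (by norm_num),
      ← ENNReal.ofReal_mul (by positivity)]
    congr 1
    rw [Real.rpow_two, ← abs_pow, ← abs_mul]
    ring_nf
  have e2 : ENNReal.ofReal |x * u| = ENNReal.ofReal |x| * ENNReal.ofReal |u| := by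
    rw [abs_mul, ENNReal.ofReal_mul (abs_nonneg _)]
  rw [e1, e2]
  set X := ENNReal.ofReal |x|
  rw [ENNReal.mul_rpow_of_ne_top (ENNReal.rpow_ne_top_of_nonneg (by norm_num) hXt)
      ENNReal.ofReal_ne_top, ENNReal.mul_rpow_of_ne_top hXt ENNReal.ofReal_ne_top,
    ← ENNReal.rpow_mul]
  have h1 : X * X ^ ((2:ℝ) * -(1/2)) = 1 := by
    norm_num [ENNReal.rpow_neg_one]
    exact ENNReal.mul_inv_cancel hX0 hXt
  have h2 : X ^ (-(1/2) : ℝ) * X ^ (1/2 : ℝ) = 1 := by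
    rw [← ENNReal.rpow_add _ _ hX0 hXt]; norm_num
  set A := ENNReal.ofReal |1 ^ 2 - u ^ 2| ^ (-(1/2) : ℝ)
  set B := ENNReal.ofReal |u| ^ (-(1/2) : ℝ)
  calc _ = (X * X ^ ((2:ℝ) * -(1/2))) * (X ^ (-(1/2) : ℝ) * X ^ (1/2 : ℝ)) * (A * B) := by ring
    _ = _ := by rw [h1, h2]; simp

attribute [irreducible] MM

lemma measurable_MM_left (x : ℝ) : Measurable (fun y => MM x y) := by
  have h : Measurable (Function.uncurry MM) := measurable_MM
  exact h.of_uncurry_left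

lemma MM_int (x : ℝ) (hx : x ≠ 0) : ∫⁻ y, MM x y = ∫⁻ u, MM 1 u := by
  have hm := measurable_MM_left x
  conv_lhs => rw [← Real.smul_map_volume_mul_left hx]
  rw [lintegral_smul_measure, lintegral_map hm (by fun_prop),
    smul_eq_mul, ← lintegral_const_mul _ (by fun_prop)]
  exact lintegral_congr fun u => MM_scale x u hx
lemma MM_pair (x y : ℝ) (hx : x ≠ 0) (hy : y ≠ 0) :
    MM x y ^ (1/3 : ℝ) * MM y x ^ (1/3 : ℝ) = ENNReal.ofReal |x ^ 2 - y ^ 2| ^ (-(1/3) : ℝ) := by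
  have hX0 : ENNReal.ofReal |x| ≠ 0 := by simpa using hx
  have hXt : ENNReal.ofReal |x| ≠ ∞ := ENNReal.ofReal_ne_top
  have hY0 : ENNReal.ofReal |y| ≠ 0 := by simpa using hy
  have hYt : ENNReal.ofReal |y| ≠ ∞ := ENNReal.ofReal_ne_top
  unfold MM
  rw [abs_sub_comm (y ^ 2), ← ENNReal.mul_rpow_of_nonneg _ _ (by norm_num)]
  set X := ENNReal.ofReal |x|
  set Y := ENNReal.ofReal |y|
  set D := ENNReal.ofReal |x ^ 2 - y ^ 2|
  have h1 : X ^ (-(1/2) : ℝ) * X ^ (1/2 : ℝ) = 1 := by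
    rw [← ENNReal.rpow_add _ _ hX0 hXt]; norm_num
  have h2 : Y ^ (-(1/2) : ℝ) * Y ^ (1/2 : ℝ) = 1 := by
    rw [← ENNReal.rpow_add _ _ hY0 hYt]; norm_num
  have h3 : D ^ (-(1/2) : ℝ) * Y ^ (-(1/2) : ℝ) * X ^ (1/2 : ℝ) *
      (D ^ (-(1/2) : ℝ) * X ^ (-(1/2) : ℝ) * Y ^ (1/2 : ℝ)) = D ^ (-1 : ℝ) := by
    calc _ = (D ^ (-(1/2) : ℝ) * D ^ (-(1/2) : ℝ)) * (X ^ (-(1/2) : ℝ) * X ^ (1/2 : ℝ)) *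
          (Y ^ (-(1/2) : ℝ) * Y ^ (1/2 : ℝ)) := by ring
      _ = _ := by
        rw [h1, h2, mul_one, mul_one, ← sq, ← ENNReal.rpow_two, ← ENNReal.rpow_mul]
        norm_num
  rw [h3, ← ENNReal.rpow_mul]
  norm_num

lemma ae_ne_fst (c : ℝ) : ∀ᵐ z : ℝ × ℝ, z.1 ≠ c := by
  have h : ∀ᵐ u : ℝ, u ≠ c := by simp [ae_iff]
  exact Measure.quasiMeasurePreserving_fst.ae h

lemma ae_ne_snd (c : ℝ) : ∀ᵐ z : ℝ × ℝ, z.2 ≠ c := by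
  have h : ∀ᵐ u : ℝ, u ≠ c := by simp [ae_iff]
  exact Measure.quasiMeasurePreserving_snd.ae h

lemma hls (h₁ h₂ : ℝ → ℝ≥0∞) (m₁ : Measurable h₁) (m₂ : Measurable h₂) :
    ∫⁻ z : ℝ × ℝ, h₁ z.1 * h₂ z.2 * ENNReal.ofReal |z.1 ^ 2 - z.2 ^ 2| ^ (-(1/3) : ℝ) ≤
      (∫⁻ u, MM 1 u) ^ (2/3 : ℝ) * ((∫⁻ x, h₁ x ^ (3/2 : ℝ)) ^ (2/3 : ℝ) *
        (∫⁻ x, h₂ x ^ (3/2 : ℝ)) ^ (2/3 : ℝ)) := by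
  have mM := measurable_MM
  have mM' : Measurable (fun z : ℝ × ℝ => MM z.2 z.1) :=
    Measurable.comp (g := fun z : ℝ × ℝ => MM z.1 z.2) measurable_MM measurable_swap
  have n₁ : Measurable (fun z : ℝ × ℝ => h₁ z.1 ^ (3/2 : ℝ)) :=
    (m₁.comp measurable_fst).pow_const _
  have n₂ : Measurable (fun z : ℝ × ℝ => h₂ z.2 ^ (3/2 : ℝ)) :=
    (m₂.comp measurable_snd).pow_const _
  have H := hol3 (μ := (volume : Measure (ℝ × ℝ)))
    (f := fun z => h₁ z.1 ^ (3/2 : ℝ) * h₂ z.2 ^ (3/2 : ℝ))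
    (g := fun z => h₁ z.1 ^ (3/2 : ℝ) * MM z.1 z.2)
    (h := fun z => h₂ z.2 ^ (3/2 : ℝ) * MM z.2 z.1)
    (n₁.mul n₂) (n₁.mul mM) (n₂.mul mM') (p := 1/3) (q := 1/3) (r := 1/3)
    (by norm_num) (by norm_num) (by norm_num) (by norm_num)
  have a1 : ∫⁻ z : ℝ × ℝ, h₁ z.1 ^ (3/2 : ℝ) * h₂ z.2 ^ (3/2 : ℝ) =
      (∫⁻ x, h₁ x ^ (3/2 : ℝ)) * (∫⁻ x, h₂ x ^ (3/2 : ℝ)) :=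
    lintegral_prod_mul (m₁.pow_const _).aemeasurable (m₂.pow_const _).aemeasurable
  have ne0 : ∀ᵐ u : ℝ, u ≠ 0 := by simp [ae_iff]
  have a2 : ∫⁻ z : ℝ × ℝ, h₁ z.1 ^ (3/2 : ℝ) * MM z.1 z.2 =
      (∫⁻ x, h₁ x ^ (3/2 : ℝ)) * ∫⁻ u, MM 1 u := by
    rw [Measure.volume_eq_prod, lintegral_prod _ (Measurable.aemeasurable (by fun_prop)),
      ← lintegral_mul_const _ (m₁.pow_const _)]
    refine lintegral_congr_ae ?_
    filter_upwards [ne0] with x hx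
    rw [lintegral_const_mul _ (measurable_MM_left x), MM_int x hx]
  have a3 : ∫⁻ z : ℝ × ℝ, h₂ z.2 ^ (3/2 : ℝ) * MM z.2 z.1 =
      (∫⁻ x, h₂ x ^ (3/2 : ℝ)) * ∫⁻ u, MM 1 u := by
    rw [Measure.volume_eq_prod, lintegral_prod_symm _ (Measurable.aemeasurable (by fun_prop)),
      ← lintegral_mul_const _ (m₂.pow_const _)]
    refine lintegral_congr_ae ?_
    filter_upwards [ne0] with x hx
    rw [lintegral_const_mul _ (measurable_MM_left x), MM_int x hx]
  rw [a1, a2, a3] at H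
  refine le_trans (le_of_eq ?_) (H.trans (le_of_eq ?_))
  · refine lintegral_congr_ae ?_
    filter_upwards [ae_ne_fst 0, ae_ne_snd 0] with z hz1 hz2
    rw [← MM_pair _ _ hz1 hz2]
    simp only [ENNReal.mul_rpow_of_nonneg _ _ (by norm_num : (0:ℝ) ≤ 1/3), ← ENNReal.rpow_mul]
    have e : ∀ t : ℝ≥0∞, t = t ^ ((3/2 : ℝ) * (1/3)) * t ^ ((3/2 : ℝ) * (1/3)) := fun t => by
      rw [← ENNReal.rpow_add_of_nonneg _ _ (by norm_num) (by norm_num)]; norm_num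
    nth_rw 1 [e (h₁ z.1), e (h₂ z.2)]
    ring
  · simp only [ENNReal.mul_rpow_of_nonneg _ _ (by norm_num : (0:ℝ) ≤ 1/3)]
    have e : ∀ t : ℝ≥0∞, t ^ (2/3 : ℝ) = t ^ (1/3 : ℝ) * t ^ (1/3 : ℝ) := fun t => by
      rw [← ENNReal.rpow_add_of_nonneg _ _ (by norm_num) (by norm_num)]; norm_num
    simp only [e]
    ring

/-- substitution bound -/
lemma subst_bd (g : ℝ → ℝ≥0∞) (ξ T : ℝ) (hξ : ξ ≠ 0) :
    ∫⁻ x, g (T - x ^ 3 - (ξ - x) ^ 3) * ENNReal.ofReal |x ^ 2 - (ξ - x) ^ 2| ≤ 2 * ∫⁻ σ, g σ := by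
  set φ : ℝ → ℝ := fun x => T - x ^ 3 - (ξ - x) ^ 3 with hφ
  have hd : ∀ x, HasDerivAt φ (-3 * (x ^ 2 - (ξ - x) ^ 2)) x := by
    intro x
    have h1 := ((hasDerivAt_id x).pow 3)
    have h2 := (((hasDerivAt_id x).const_sub ξ).pow 3)
    have h3 := (h1.const_sub T).sub h2
    have hv : -3 * (x ^ 2 - (ξ - x) ^ 2) =
        -(((3 : ℕ) : ℝ) * id x ^ (3 - 1) * 1) - ((3 : ℕ) : ℝ) * (ξ - id x) ^ (3 - 1) * -1 := by
      simp
      ring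
    rw [hv]
    exact h3
  have hinj : ∀ s : Set ℝ, (∀ x ∈ s, ∀ y ∈ s, x + y ≠ ξ) → Set.InjOn φ s := by
    intro s hs x hx y hy h
    have h' : 3 * ξ * (x - y) * (x + y - ξ) = 0 := by
      simp only [hφ] at h
      linear_combination -h
    have hne : x + y - ξ ≠ 0 := sub_ne_zero.2 (hs x hx y hy)
    simp [hξ, hne, sub_eq_zero] at h'
    exact h'
  have hle : ∀ s : Set ℝ, MeasurableSet s → (∀ x ∈ s, ∀ y ∈ s, x + y ≠ ξ) →
      ∫⁻ x in s, g (φ x) * ENNReal.ofReal |x ^ 2 - (ξ - x) ^ 2| ≤ ∫⁻ σ, g σ := by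
    intro s hs hs'
    have := lintegral_image_eq_lintegral_abs_deriv_mul hs
      (fun x _ => (hd x).hasDerivWithinAt) (hinj s hs') g
    calc _ ≤ ∫⁻ x in s, ENNReal.ofReal |-3 * (x ^ 2 - (ξ - x) ^ 2)| * g (φ x) := by
          refine lintegral_mono fun x => ?_
          rw [mul_comm]
          refine mul_le_mul_left (ENNReal.ofReal_le_ofReal ?_) _
          rw [abs_mul]
          norm_num
          linarith [abs_nonneg (x ^ 2 - (ξ - x) ^ 2)]
      _ = ∫⁻ x in φ '' s, g x := this.symm
      _ ≤ _ := setLIntegral_le_lintegral _ _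
  have hsplit : (Set.univ : Set ℝ) =ᵐ[volume] (Set.Iio (ξ/2) ∪ Set.Ioi (ξ/2) : Set ℝ) := by
    have : ∀ᵐ u : ℝ, u ≠ ξ/2 := by simp [ae_iff]
    filter_upwards [this] with u hu
    apply propext
    show u ∈ Set.univ ↔ u ∈ Set.Iio (ξ/2) ∪ Set.Ioi (ξ/2)
    simpa using hu
  rw [← setLIntegral_univ, setLIntegral_congr hsplit]
  refine (lintegral_union_le _ _ _).trans ?_
  rw [two_mul]
  refine add_le_add (hle _ measurableSet_Iio ?_) (hle _ measurableSet_Ioi ?_)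
  · intro x hx y hy h
    simp only [Set.mem_Iio] at hx hy
    linarith
  · intro x hx y hy h
    simp only [Set.mem_Ioi] at hx hy
    linarith

/-- The modulation weight. -/
noncomputable def jw (q : ℝ × ℝ) : ℝ≥0∞ := ENNReal.ofReal (1 + |q.2 - q.1 ^ 3|)

lemma measurable_jw : Measurable jw := by unfold jw; fun_prop

lemma jw_ne_zero (q : ℝ × ℝ) : jw q ≠ 0 := by
  unfold jw
  simp only [ne_eq, ENNReal.ofReal_eq_zero, not_le]
  positivity

lemma jw_ne_top (q : ℝ × ℝ) : jw q ≠ ∞ := ENNReal.ofReal_ne_top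

/-- The kernel integral appearing in Hölder's inequality. -/
lemma kernel_bd (m : ℝ) (p : ℝ × ℝ) (hp : p.1 ≠ 0) :
    ∫⁻ q : ℝ × ℝ, jw q ^ (-m) * jw (p - q) ^ (-m) *
      ENNReal.ofReal |q.1 ^ 2 - (p.1 - q.1) ^ 2| ≤
      2 * (∫⁻ u : ℝ, ENNReal.ofReal (1 + |u|) ^ (-m)) ^ 2 := by
  set g : ℝ → ℝ≥0∞ := fun u => ENNReal.ofReal (1 + |u|) ^ (-m) with hg
  have mg : Measurable g := by
    have : Measurable (fun u : ℝ => ENNReal.ofReal (1 + |u|)) := by fun_prop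
    exact this.pow_const _
  have e1 : ∀ q : ℝ × ℝ, jw q ^ (-m) * jw (p - q) ^ (-m) =
      g (q.2 - q.1 ^ 3) * g (p.2 - q.2 - (p.1 - q.1) ^ 3) := fun q => rfl
  simp only [e1]
  rw [Measure.volume_eq_prod, lintegral_prod _ (Measurable.aemeasurable (by fun_prop))]
  simp only
  have e3 : ∀ x : ℝ, ∫⁻ y, g (y - x ^ 3) * g (p.2 - y - (p.1 - x) ^ 3) *
      ENNReal.ofReal |x ^ 2 - (p.1 - x) ^ 2| =
      ∫⁻ y, g y * (g (p.2 - y - x ^ 3 - (p.1 - x) ^ 3) *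
      ENNReal.ofReal |x ^ 2 - (p.1 - x) ^ 2|) := by
    intro x
    rw [← lintegral_add_right_eq_self _ (x ^ 3)]
    refine lintegral_congr fun y => ?_
    rw [mul_assoc]
    congr 3 <;> ring
  simp only [e3]
  rw [lintegral_lintegral_swap (Measurable.aemeasurable (by fun_prop))]
  calc _ ≤ ∫⁻ y, g y * (2 * ∫⁻ σ, g σ) := by
        refine lintegral_mono fun y => ?_
        rw [lintegral_const_mul _ (by fun_prop)]
        exact mul_le_mul_right (subst_bd g p.1 (p.2 - y) hp) _
    _ = _ := by
        rw [lintegral_mul_const _ mg]; ring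

/-- one-dimensional Hölder in modulation -/
lemma mod_holder (b : ℝ) (F : ℝ × ℝ → ℝ≥0∞) (mF : Measurable F) :
    ∫⁻ x, (∫⁻ s, F (x, s) ^ (4/3 : ℝ) * jw (x, s) ^ (2 * b / 3)) ^ (3/2 : ℝ) ≤
    (∫⁻ u : ℝ, ENNReal.ofReal (1 + |u|) ^ (-(2 * b))) ^ (1/2 : ℝ) *
      ∫⁻ p, jw p ^ (2 * b) * F p ^ (2 : ℝ) := by
  have mj := measurable_jw
  have mw : ∀ a : ℝ, Measurable (fun q => jw q ^ a) := fun a => mj.pow_const a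
  have mF2 : Measurable (fun q => F q ^ (2 : ℝ)) := mF.pow_const _
  have mG : Measurable (fun p => jw p ^ (2 * b) * F p ^ (2 : ℝ)) := (mw _).mul mF2
  have mGx : ∀ x : ℝ, Measurable (fun s => jw (x, s) ^ (2 * b) * F (x, s) ^ (2 : ℝ)) :=
    fun x => mG.comp (measurable_prodMk_left (x := x))
  have mwx : ∀ (a x : ℝ), Measurable (fun s => jw (x, s) ^ a) :=
    fun a x => (mw a).comp (measurable_prodMk_left (x := x))
  rw [Measure.volume_eq_prod, lintegral_prod _ mG.aemeasurable,
    ← lintegral_const_mul _ mG.lintegral_prod_right']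
  refine lintegral_mono fun x => ?_
  have H := ENNReal.lintegral_mul_norm_pow_le (μ := (volume : Measure ℝ))
    (f := fun s => jw (x, s) ^ (2 * b) * F (x, s) ^ (2 : ℝ))
    (g := fun s => jw (x, s) ^ (-(2 * b))) (mGx x).aemeasurable (mwx _ x).aemeasurable
    (p := 2/3) (q := 1/3) (by norm_num) (by norm_num) (by norm_num)
  have e1 : ∀ s, (jw (x, s) ^ (2 * b) * F (x, s) ^ (2 : ℝ)) ^ (2/3 : ℝ) *
      (jw (x, s) ^ (-(2 * b))) ^ (1/3 : ℝ) = F (x, s) ^ (4/3 : ℝ) * jw (x, s) ^ (2 * b / 3) := by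
    intro s
    rw [ENNReal.mul_rpow_of_nonneg _ _ (by norm_num), ← ENNReal.rpow_mul, ← ENNReal.rpow_mul,
      ← ENNReal.rpow_mul, mul_comm (jw (x, s) ^ _), mul_assoc,
      ← ENNReal.rpow_add _ _ (jw_ne_zero _) (jw_ne_top _)]
    congr 2
    · norm_num
    · ring
  simp only [e1] at H
  have e2 : ∫⁻ s, jw (x, s) ^ (-(2 * b)) = ∫⁻ u : ℝ, ENNReal.ofReal (1 + |u|) ^ (-(2 * b)) :=
    lintegral_sub_right_eq_self (fun u : ℝ => ENNReal.ofReal (1 + |u|) ^ (-(2 * b))) (x ^ 3)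
  rw [e2] at H
  refine (ENNReal.rpow_le_rpow H (by norm_num : (0:ℝ) ≤ 3/2)).trans (le_of_eq ?_)
  rw [ENNReal.mul_rpow_of_nonneg _ _ (by norm_num), ← ENNReal.rpow_mul, ← ENNReal.rpow_mul]
  norm_num
  rw [mul_comm]

/-- The weighted `L²` norm (squared). -/
noncomputable def NN (b : ℝ) (F : ℝ × ℝ → ℝ≥0∞) : ℝ≥0∞ := ∫⁻ p, jw p ^ (2 * b) * F p ^ (2 : ℝ)

lemma bilin_pt (b : ℝ) (F₁ F₂ : ℝ × ℝ → ℝ≥0∞) (m₁ : Measurable F₁) (m₂ : Measurable F₂)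
    (p : ℝ × ℝ) (hp : p.1 ≠ 0) :
    (∫⁻ q, F₁ q * F₂ (p - q)) ^ (4/3 : ℝ) ≤
      (∫⁻ q, (F₁ q ^ (4/3 : ℝ) * jw q ^ (2 * b / 3)) *
        (F₂ (p - q) ^ (4/3 : ℝ) * jw (p - q) ^ (2 * b / 3)) *
        ENNReal.ofReal |q.1 ^ 2 - (p.1 - q.1) ^ 2| ^ (-(1/3) : ℝ)) *
      (2 * (∫⁻ u : ℝ, ENNReal.ofReal (1 + |u|) ^ (-(2 * b))) ^ 2) ^ (1/3 : ℝ) := by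
  have mj := measurable_jw
  have mw : ∀ a : ℝ, Measurable (fun q => jw q ^ a) := fun a => mj.pow_const a
  have mw' : ∀ a : ℝ, Measurable (fun q => jw (p - q) ^ a) := fun a => (mw a).comp (by fun_prop)
  have mD : Measurable (fun q : ℝ × ℝ => ENNReal.ofReal |q.1 ^ 2 - (p.1 - q.1) ^ 2|) := by fun_prop
  have mD' : Measurable (fun q : ℝ × ℝ =>
    ENNReal.ofReal |q.1 ^ 2 - (p.1 - q.1) ^ 2| ^ (-(1/3) : ℝ)) := mD.pow_const _
  have n₁ : Measurable (fun q => F₁ q ^ (4/3 : ℝ)) := m₁.pow_const _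
  have n₂ : Measurable (fun q => F₂ (p - q) ^ (4/3 : ℝ)) := (m₂.comp (by fun_prop)).pow_const _
  have H := ENNReal.lintegral_mul_norm_pow_le (μ := (volume : Measure (ℝ × ℝ)))
    (f := fun q => (F₁ q ^ (4/3 : ℝ) * jw q ^ (2 * b / 3)) *
        (F₂ (p - q) ^ (4/3 : ℝ) * jw (p - q) ^ (2 * b / 3)) *
        ENNReal.ofReal |q.1 ^ 2 - (p.1 - q.1) ^ 2| ^ (-(1/3) : ℝ))
    (g := fun q => jw q ^ (-(2 * b)) * jw (p - q) ^ (-(2 * b)) *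
      ENNReal.ofReal |q.1 ^ 2 - (p.1 - q.1) ^ 2|)
    (((n₁.mul (mw _)).mul (n₂.mul (mw' _))).mul mD').aemeasurable
    (((mw _).mul (mw' _)).mul mD).aemeasurable
    (p := 3/4) (q := 1/4) (by norm_num) (by norm_num) (by norm_num)
  have E : ∫⁻ q, F₁ q * F₂ (p - q) = ∫⁻ q,
      ((F₁ q ^ (4/3 : ℝ) * jw q ^ (2 * b / 3)) *
        (F₂ (p - q) ^ (4/3 : ℝ) * jw (p - q) ^ (2 * b / 3)) *
        ENNReal.ofReal |q.1 ^ 2 - (p.1 - q.1) ^ 2| ^ (-(1/3) : ℝ)) ^ (3/4 : ℝ) *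
      (jw q ^ (-(2 * b)) * jw (p - q) ^ (-(2 * b)) *
      ENNReal.ofReal |q.1 ^ 2 - (p.1 - q.1) ^ 2|) ^ (1/4 : ℝ) := by
    refine lintegral_congr_ae ?_
    filter_upwards [ae_ne_fst (p.1 / 2)] with q hq
    have hD0 : ENNReal.ofReal |q.1 ^ 2 - (p.1 - q.1) ^ 2| ≠ 0 := by
      simp only [ne_eq, ENNReal.ofReal_eq_zero, not_le, abs_pos]
      intro h
      have h' : p.1 * (q.1 - p.1 / 2) = 0 := by linear_combination h / 2
      simp [hp, sub_eq_zero] at h'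
      exact hq h'
    have hDt : ENNReal.ofReal |q.1 ^ 2 - (p.1 - q.1) ^ 2| ≠ ∞ := ENNReal.ofReal_ne_top
    have hj : ∀ q, jw q ^ (2 * b / 3 * (3/4)) * jw q ^ (-(2 * b) * (1/4)) = 1 := by
      intro q
      rw [← ENNReal.rpow_add _ _ (jw_ne_zero _) (jw_ne_top _)]
      ring_nf
      simp
    set D := ENNReal.ofReal |q.1 ^ 2 - (p.1 - q.1) ^ 2|
    have hDD : D ^ (-(1/3) * (3/4) : ℝ) * D ^ (1/4 : ℝ) = 1 := by
      rw [← ENNReal.rpow_add _ _ hD0 hDt]; norm_num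
    have hF : ∀ t : ℝ≥0∞, t ^ ((4/3 : ℝ) * (3/4)) = t := by intro t; norm_num
    simp only [ENNReal.mul_rpow_of_nonneg _ _ (by norm_num : (0:ℝ) ≤ 3/4),
      ENNReal.mul_rpow_of_nonneg _ _ (by norm_num : (0:ℝ) ≤ 1/4), ← ENNReal.rpow_mul, hF]
    calc F₁ q * F₂ (p - q) = F₁ q * F₂ (p - q) *
          (jw q ^ (2 * b / 3 * (3/4)) * jw q ^ (-(2 * b) * (1/4))) *
          (jw (p - q) ^ (2 * b / 3 * (3/4)) * jw (p - q) ^ (-(2 * b) * (1/4))) *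
          (D ^ (-(1/3) * (3/4) : ℝ) * D ^ (1/4 : ℝ)) := by
            rw [hj, hj, hDD]; simp
      _ = _ := by ring
  rw [← E] at H
  have H2 := H.trans (mul_le_mul_right (ENNReal.rpow_le_rpow (kernel_bd (2 * b) p hp)
    (by norm_num : (0:ℝ) ≤ 1/4)) _)
  refine (ENNReal.rpow_le_rpow H2 (by norm_num : (0:ℝ) ≤ 4/3)).trans (le_of_eq ?_)
  rw [ENNReal.mul_rpow_of_nonneg _ _ (by norm_num), ← ENNReal.rpow_mul, ← ENNReal.rpow_mul]
  norm_num

/-- The constant. -/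
noncomputable def CC (b : ℝ) : ℝ≥0∞ :=
  (∫⁻ u, MM 1 u) ^ (2/3 : ℝ) *
    (((∫⁻ u : ℝ, ENNReal.ofReal (1 + |u|) ^ (-(2 * b))) ^ (1/2 : ℝ)) ^ (2/3 : ℝ) *
    ((∫⁻ u : ℝ, ENNReal.ofReal (1 + |u|) ^ (-(2 * b))) ^ (1/2 : ℝ)) ^ (2/3 : ℝ)) *
  (2 * (∫⁻ u : ℝ, ENNReal.ofReal (1 + |u|) ^ (-(2 * b))) ^ 2) ^ (1/3 : ℝ)

lemma CC_lt_top (b : ℝ) (hb : 1/2 < b) : CC b < ∞ := by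
  have h1 := MM_one_fin
  have h2 := jap_fin (2 * b) (by linarith)
  unfold CC
  refine ENNReal.mul_lt_top (ENNReal.mul_lt_top ?_ (ENNReal.mul_lt_top ?_ ?_)) ?_ <;>
    refine ENNReal.rpow_lt_top_of_nonneg (by norm_num) ?_
  · exact h1.ne
  · exact (ENNReal.rpow_lt_top_of_nonneg (by norm_num) h2.ne).ne
  · exact (ENNReal.rpow_lt_top_of_nonneg (by norm_num) h2.ne).ne
  · exact (ENNReal.mul_lt_top (by simp) (ENNReal.pow_lt_top h2)).ne

lemma bilin (b : ℝ) (F₁ F₂ : ℝ × ℝ → ℝ≥0∞) (m₁ : Measurable F₁) (m₂ : Measurable F₂) :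
    ∫⁻ p, (∫⁻ q, F₁ q * F₂ (p - q)) ^ (4/3 : ℝ) ≤
      CC b * (NN b F₁ ^ (2/3 : ℝ) * NN b F₂ ^ (2/3 : ℝ)) := by
  have mj := measurable_jw
  have mw : ∀ a : ℝ, Measurable (fun q => jw q ^ a) := fun a => mj.pow_const a
  set J := ∫⁻ u : ℝ, ENNReal.ofReal (1 + |u|) ^ (-(2 * b)) with hJ
  set H₁ : ℝ × ℝ → ℝ≥0∞ := fun q => F₁ q ^ (4/3 : ℝ) * jw q ^ (2 * b / 3) with hH₁
  set H₂ : ℝ × ℝ → ℝ≥0∞ := fun q => F₂ q ^ (4/3 : ℝ) * jw q ^ (2 * b / 3) with hH₂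
  have n₁ : Measurable H₁ := (m₁.pow_const _).mul (mw _)
  have n₂ : Measurable H₂ := (m₂.pow_const _).mul (mw _)
  set K : ℝ × ℝ → ℝ≥0∞ := fun z => ENNReal.ofReal |z.1 ^ 2 - z.2 ^ 2| ^ (-(1/3) : ℝ) with hK
  have mK : Measurable K := by
    have : Measurable (fun z : ℝ × ℝ => ENNReal.ofReal |z.1 ^ 2 - z.2 ^ 2|) := by fun_prop
    exact this.pow_const _
  have s1 : ∫⁻ p, (∫⁻ q, F₁ q * F₂ (p - q)) ^ (4/3 : ℝ) ≤
      ∫⁻ p : ℝ × ℝ, (∫⁻ q : ℝ × ℝ, H₁ q * H₂ (p - q) * K (q.1, p.1 - q.1)) * (2 * J ^ 2) ^ (1/3 : ℝ) := by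
    refine lintegral_mono_ae ?_
    filter_upwards [ae_ne_fst 0] with p hp
    exact bilin_pt b F₁ F₂ m₁ m₂ p hp
  have mbig : Measurable (fun z : (ℝ × ℝ) × (ℝ × ℝ) =>
      H₁ z.2 * H₂ (z.1 - z.2) * K (z.2.1, z.1.1 - z.2.1)) := by fun_prop
  have s2 : ∫⁻ p : ℝ × ℝ, ∫⁻ q : ℝ × ℝ, H₁ q * H₂ (p - q) * K (q.1, p.1 - q.1) =
      ∫⁻ q : ℝ × ℝ, ∫⁻ q' : ℝ × ℝ, H₁ q * H₂ q' * K (q.1, q'.1) := by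
    rw [lintegral_lintegral_swap mbig.aemeasurable]
    refine lintegral_congr fun q => ?_
    exact lintegral_sub_right_eq_self (fun q' => H₁ q * H₂ q' * K (q.1, q'.1)) q
  set h₁ : ℝ → ℝ≥0∞ := fun x => ∫⁻ s, H₁ (x, s) with hh₁
  set h₂ : ℝ → ℝ≥0∞ := fun x => ∫⁻ s, H₂ (x, s) with hh₂
  have k₁ : Measurable h₁ := n₁.lintegral_prod_right'
  have k₂ : Measurable h₂ := n₂.lintegral_prod_right'
  have s3 : ∫⁻ q : ℝ × ℝ, ∫⁻ q' : ℝ × ℝ, H₁ q * H₂ q' * K (q.1, q'.1) =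
      ∫⁻ z : ℝ × ℝ, h₁ z.1 * h₂ z.2 * K z := by
    have i1 : ∀ q : ℝ × ℝ, ∫⁻ q' : ℝ × ℝ, H₁ q * H₂ q' * K (q.1, q'.1) =
        H₁ q * ∫⁻ y, h₂ y * K (q.1, y) := by
      intro q
      rw [Measure.volume_eq_prod, lintegral_prod _ (Measurable.aemeasurable (by fun_prop)),
        ← lintegral_const_mul _ (by fun_prop)]
      refine lintegral_congr fun y => ?_
      simp only
      rw [lintegral_mul_const _ (by fun_prop), lintegral_const_mul _ (by fun_prop), mul_assoc]
    simp only [i1]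
    have mk : Measurable (fun x : ℝ => ∫⁻ y, h₂ y * K (x, y)) :=
      Measurable.lintegral_prod_right' (f := fun z : ℝ × ℝ => h₂ z.2 * K z) (by fun_prop)
    rw [Measure.volume_eq_prod, lintegral_prod _ (Measurable.aemeasurable (by fun_prop)),
      lintegral_prod _ (Measurable.aemeasurable (by fun_prop))]
    refine lintegral_congr fun x => ?_
    simp only
    rw [lintegral_mul_const _ (by fun_prop), ← lintegral_const_mul _ (by fun_prop)]
    exact lintegral_congr fun y => (mul_assoc _ _ _).symm
  have s4 := hls h₁ h₂ k₁ k₂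
  have t₁ := mod_holder b F₁ m₁
  have t₂ := mod_holder b F₂ m₂
  rw [lintegral_mul_const _ mbig.lintegral_prod_right', s2, s3] at s1
  refine s1.trans ?_
  have s5 := s4.trans (mul_le_mul_right (mul_le_mul'
    (ENNReal.rpow_le_rpow t₁ (by norm_num : (0:ℝ) ≤ 2/3))
    (ENNReal.rpow_le_rpow t₂ (by norm_num : (0:ℝ) ≤ 2/3))) _)
  refine (mul_le_mul_left s5 _).trans (le_of_eq ?_)
  unfold CC NN
  rw [← hJ]
  simp only [ENNReal.mul_rpow_of_nonneg _ _ (by norm_num : (0:ℝ) ≤ 2/3)]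
  ring

abbrev VV := WithLp 2 (ℝ × ℝ)

noncomputable def eV : VV ≃L[ℝ] ℝ × ℝ := WithLp.prodContinuousLinearEquiv 2 ℝ ℝ ℝ

noncomputable def LL : (ℝ × ℝ) ≃L[ℝ] VV :=
  eV.symm.trans (ContinuousLinearEquiv.smulLeft
    (Units.mk0 (-(2 * Real.pi)⁻¹ : ℝ) (by simp [Real.pi_ne_zero])))

lemma LL_apply (p : ℝ × ℝ) : LL p = (-(2 * Real.pi)⁻¹ : ℝ) • (WithLp.toLp 2 p : VV) := rfl

open scoped FourierTransform SchwartzMap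

/-- Pull back to the Euclidean plane. -/
noncomputable def pull (U : 𝓢(ℝ × ℝ, ℂ)) : 𝓢(VV, ℂ) :=
  SchwartzMap.compCLMOfContinuousLinearEquiv ℂ eV U

lemma pull_apply (U : 𝓢(ℝ × ℝ, ℂ)) (v : VV) : pull U v = U v.ofLp := rfl

/-- The Fourier transform as a Schwartz function on `ℝ × ℝ`. -/
noncomputable def ftS (U : 𝓢(ℝ × ℝ, ℂ)) : 𝓢(ℝ × ℝ, ℂ) :=
  SchwartzMap.compCLMOfContinuousLinearEquiv ℂ LL (𝓕⁻ (pull U))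

lemma ftS_apply' (U : 𝓢(ℝ × ℝ, ℂ)) (p : ℝ × ℝ) : ftS U p = (𝓕⁻ (pull U)) (LL p) := rfl

lemma ftS_apply (U : 𝓢(ℝ × ℝ, ℂ)) (p : ℝ × ℝ) : ftS U p =
    ∫ q : ℝ × ℝ, Complex.exp (-Complex.I * (q.1 * p.1 + q.2 * p.2)) * U q := by
  rw [ftS_apply', SchwartzMap.fourierInv_coe, Real.fourierInv_eq',
    ← (WithLp.volume_preserving_toLp ℝ ℝ).integral_comp
      (MeasurableEquiv.toLp 2 (ℝ × ℝ)).measurableEmbedding]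
  refine integral_congr_ae (Filter.Eventually.of_forall fun q => ?_)
  simp only [pull_apply, smul_eq_mul]
  congr 2
  rw [LL_apply, inner_smul_right, WithLp.prod_inner_apply]
  have h2 : (2 * Real.pi) * (-(2 * Real.pi)⁻¹) = -1 := by
    have := Real.pi_ne_zero
    field_simp
  rw [← mul_assoc, h2]
  simp
  ring

lemma LL_map : ∃ c : ℝ≥0∞, c ≠ 0 ∧ c ≠ ∞ ∧
    ∀ f : VV → ℝ≥0∞, Measurable f → ∫⁻ v, f v = c * ∫⁻ p, f (LL p) := by
  have i : (Measure.map LL volume).IsAddHaarMeasure := LL.isAddHaarMeasure_map volume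
  have h := Measure.isAddLeftInvariant_eq_smul (volume : Measure VV) (Measure.map LL volume)
  have h0 := Measure.addHaarScalarFactor_pos_of_isAddHaarMeasure (volume : Measure VV)
    (Measure.map LL volume)
  refine ⟨_, ENNReal.coe_ne_zero.2 h0.ne', ENNReal.coe_ne_top, fun f hf => ?_⟩
  conv_lhs => rw [h]
  rw [lintegral_smul_measure, lintegral_map hf LL.continuous.measurable]
  rfl

noncomputable def mulS (A B : 𝓢(ℝ × ℝ, ℂ)) : 𝓢(ℝ × ℝ, ℂ) :=
  SchwartzMap.pairing (ContinuousLinearMap.mul ℂ ℂ) A B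

lemma mulS_apply (A B : 𝓢(ℝ × ℝ, ℂ)) (p : ℝ × ℝ) : mulS A B p = A p * B p := rfl

lemma sch_sq {E : Type*} [NormedAddCommGroup E] [NormedSpace ℝ E] [MeasurableSpace E] [BorelSpace E]
    [SecondCountableTopology E]
    (μ : Measure E) [μ.HasTemperateGrowth] (f : 𝓢(E, ℂ)) :
    ∫⁻ x, ‖f x‖ₑ ^ (2 : ℝ) ∂μ = ENNReal.ofReal (∫ x, ‖f x‖ ^ 2 ∂μ) := by
  rw [ofReal_integral_eq_lintegral_ofReal]
  · refine lintegral_congr fun x => ?_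
    rw [ENNReal.ofReal_pow (norm_nonneg _), ofReal_norm, ENNReal.rpow_two]
  · exact (f.memLp 2 μ).integrable_norm_pow (by norm_num)
  · exact Filter.Eventually.of_forall fun x => by positivity

lemma planch : ∃ c : ℝ≥0∞, c ≠ ∞ ∧
    (∀ U : 𝓢(ℝ × ℝ, ℂ), ∫⁻ p, ‖U p‖ₑ ^ (2 : ℝ) = c * ∫⁻ p, ‖ftS U p‖ₑ ^ (2 : ℝ)) ∧
    (∀ A B : 𝓢(ℝ × ℝ, ℂ), ∀ p, ‖ftS (mulS A B) p‖ₑ ≤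
      c * ∫⁻ q, ‖ftS A q‖ₑ * ‖ftS B (p - q)‖ₑ) := by
  obtain ⟨c, -, hc, h⟩ := LL_map
  refine ⟨c, hc, fun U => ?_, fun A B p => ?_⟩
  · have h1 := h (fun v => ‖(𝓕⁻ (pull U)) v‖ₑ ^ (2 : ℝ))
      ((𝓕⁻ (pull U)).continuous.measurable.enorm.pow_const _)
    refine Eq.trans ?_ h1
    rw [sch_sq volume (𝓕⁻ (pull U)), ← SchwartzMap.integral_norm_sq_fourier,
      FourierTransform.fourier_fourierInv_eq, ← sch_sq volume (pull U),
      ← (WithLp.volume_preserving_toLp ℝ ℝ).lintegral_comp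
        ((pull U).continuous.measurable.enorm.pow_const _)]
    rfl
  · have e : pull (mulS A B) = 𝓕 (SchwartzMap.convolution (ContinuousLinearMap.mul ℂ ℂ)
        (𝓕⁻ (pull A)) (𝓕⁻ (pull B))) := by
      rw [SchwartzMap.fourier_convolution, FourierTransform.fourier_fourierInv_eq,
        FourierTransform.fourier_fourierInv_eq]
      rfl
    rw [ftS_apply', e, FourierTransform.fourierInv_fourier_eq, SchwartzMap.convolution_apply,
      convolution_def]
    refine (enorm_integral_le_lintegral_enorm _).trans (le_of_eq ?_)
    have mA := (𝓕⁻ (pull A)).continuous.measurable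
    have mB := (𝓕⁻ (pull B)).continuous.measurable
    have := h (fun t => ‖(𝓕⁻ (pull A)) t‖ₑ * ‖(𝓕⁻ (pull B)) (LL p - t)‖ₑ) (by fun_prop)
    simp only [← map_sub] at this
    simpa [enorm_mul, ftS_apply'] using this

lemma wt_integrable (b : ℝ) (hb : 1/2 < b) (f : 𝓢(ℝ × ℝ, ℂ)) :
    Integrable (fun p : ℝ × ℝ => (1 + |p.2 - p.1 ^ 3|) ^ (2 * b) * ‖f p‖ ^ 2) := by
  obtain ⟨k, hk⟩ := exists_nat_ge (6 * b)
  set S := SchwartzMap.seminorm ℝ 0 0 f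
  have hS : ∀ p, ‖f p‖ ≤ S := fun p => SchwartzMap.norm_le_seminorm ℝ f p
  have i1 := f.integrable_pow_mul volume k
  have i0 := f.integrable_pow_mul volume 0
  have i2 : Integrable (fun p : ℝ × ℝ => (2:ℝ) ^ (k - 1) * S * (‖p‖ ^ 0 * ‖f p‖ + ‖p‖ ^ k * ‖f p‖)) :=
    (i0.add i1).const_mul _
  refine i2.mono' ?_ (Filter.Eventually.of_forall fun p => ?_)
  · refine Measurable.aestronglyMeasurable ?_
    have := f.continuous.measurable
    have h1 : Measurable (fun p : ℝ × ℝ => 1 + |p.2 - p.1 ^ 3|) := by fun_prop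
    exact (h1.pow_const _).mul (this.norm.pow_const _)
  · have h1 : |p.1| ≤ ‖p‖ := norm_fst_le p
    have h2 : |p.2| ≤ ‖p‖ := norm_snd_le p
    have hr : 0 ≤ ‖p‖ := norm_nonneg p
    have h3 : 1 + |p.2 - p.1 ^ 3| ≤ (1 + ‖p‖) ^ 3 := by
      have : |p.2 - p.1 ^ 3| ≤ |p.2| + |p.1| ^ 3 := by
        rw [← abs_pow]; exact abs_sub _ _
      have h4 : |p.1| ^ 3 ≤ ‖p‖ ^ 3 := pow_le_pow_left₀ (abs_nonneg _) h1 3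
      nlinarith [sq_nonneg ‖p‖]
    have h5 : (1 + |p.2 - p.1 ^ 3|) ^ (2 * b) ≤ (1 + ‖p‖) ^ k := by
      calc _ ≤ ((1 + ‖p‖) ^ 3) ^ (2 * b) := Real.rpow_le_rpow (by positivity) h3 (by linarith)
        _ = (1 + ‖p‖) ^ (6 * b) := by
          rw [← Real.rpow_natCast, ← Real.rpow_mul (by positivity)]
          congr 1; push_cast; ring
        _ ≤ (1 + ‖p‖) ^ (k : ℝ) := Real.rpow_le_rpow_of_exponent_le (by linarith) hk
        _ = _ := Real.rpow_natCast _ _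
    have h6 : (1 + ‖p‖) ^ k ≤ 2 ^ (k - 1) * (1 ^ k + ‖p‖ ^ k) := add_pow_le (by norm_num) hr k
    rw [Real.norm_of_nonneg (by positivity)]
    calc _ ≤ (2 ^ (k - 1) * (1 ^ k + ‖p‖ ^ k)) * (S * ‖f p‖) := by
          refine mul_le_mul (h5.trans h6) ?_ (by positivity) (by positivity)
          rw [sq]
          exact mul_le_mul_of_nonneg_right (hS p) (norm_nonneg _)
      _ = _ := by simp; ring

/-- The real Bourgain norm squared. -/
noncomputable def RN (b : ℝ) (U : 𝓢(ℝ × ℝ, ℂ)) : ℝ :=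
  ∫ p : ℝ × ℝ, (1 + |p.2 - p.1 ^ 3|) ^ (2 * b) *
            ‖∫ q : ℝ × ℝ, Complex.exp (-Complex.I * (q.1 * p.1 + q.2 * p.2)) * U q‖ ^ 2

lemma RN_nonneg (b : ℝ) (U : 𝓢(ℝ × ℝ, ℂ)) : 0 ≤ RN b U :=
  integral_nonneg fun p => by positivity

lemma NN_eq (b : ℝ) (hb : 1/2 < b) (U : 𝓢(ℝ × ℝ, ℂ)) :
    NN b (fun p => ‖ftS U p‖ₑ) = ENNReal.ofReal (RN b U) := by
  unfold NN RN
  simp only [← ftS_apply]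
  rw [ofReal_integral_eq_lintegral_ofReal (wt_integrable b hb (ftS U))
    (Filter.Eventually.of_forall fun x => by positivity)]
  refine lintegral_congr fun p => ?_
  rw [ENNReal.ofReal_mul (by positivity), ENNReal.ofReal_pow (norm_nonneg _), ofReal_norm,
    ENNReal.rpow_two, ← ENNReal.ofReal_rpow_of_pos (by positivity)]
  rfl

lemma pair_bd (b : ℝ) (c : ℝ≥0∞)
    (h : ∀ A B : 𝓢(ℝ × ℝ, ℂ), ∀ p, ‖ftS (mulS A B) p‖ₑ ≤
      c * ∫⁻ q, ‖ftS A q‖ₑ * ‖ftS B (p - q)‖ₑ) (A B : 𝓢(ℝ × ℝ, ℂ)) :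
    (∫⁻ p, ‖ftS (mulS A B) p‖ₑ ^ (4/3 : ℝ)) ^ (3/2 : ℝ) ≤
      c ^ (2 : ℝ) * CC b ^ (3/2 : ℝ) *
        (NN b (fun p => ‖ftS A p‖ₑ) * NN b (fun p => ‖ftS B p‖ₑ)) := by
  have mA := (ftS A).continuous.measurable.enorm
  have mB := (ftS B).continuous.measurable.enorm
  have mconv : Measurable (fun p => ∫⁻ q, ‖ftS A q‖ₑ * ‖ftS B (p - q)‖ₑ) :=
    Measurable.lintegral_prod_right' (f := fun z : (ℝ × ℝ) × (ℝ × ℝ) =>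
      ‖ftS A z.2‖ₑ * ‖ftS B (z.1 - z.2)‖ₑ) (by fun_prop)
  have h1 : ∫⁻ p, ‖ftS (mulS A B) p‖ₑ ^ (4/3 : ℝ) ≤ c ^ (4/3 : ℝ) *
      (CC b * (NN b (fun p => ‖ftS A p‖ₑ) ^ (2/3 : ℝ) * NN b (fun p => ‖ftS B p‖ₑ) ^ (2/3 : ℝ))) := by
    calc _ ≤ ∫⁻ p, c ^ (4/3 : ℝ) * (∫⁻ q, ‖ftS A q‖ₑ * ‖ftS B (p - q)‖ₑ) ^ (4/3 : ℝ) := by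
          refine lintegral_mono fun p => ?_
          rw [← ENNReal.mul_rpow_of_nonneg _ _ (by norm_num)]
          exact ENNReal.rpow_le_rpow (h A B p) (by norm_num)
      _ ≤ _ := by
          rw [lintegral_const_mul _ (mconv.pow_const _)]
          exact mul_le_mul_right (bilin b (fun p => ‖ftS A p‖ₑ) (fun p => ‖ftS B p‖ₑ) mA mB) _
  refine (ENNReal.rpow_le_rpow h1 (by norm_num : (0:ℝ) ≤ 3/2)).trans (le_of_eq ?_)
  simp only [ENNReal.mul_rpow_of_nonneg _ _ (by norm_num : (0:ℝ) ≤ 3/2), ← ENNReal.rpow_mul]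
  norm_num [mul_assoc]

lemma quad (b : ℝ) (hb : 1/2 < b) : ∃ K : ℝ≥0∞, K ≠ ∞ ∧ ∀ U₁ U₂ U₃ U₄ : 𝓢(ℝ × ℝ, ℂ),
    eLpNorm (fun p : ℝ × ℝ => U₁ p * U₂ p * U₃ p * U₄ p) 2 volume ≤
      K * (ENNReal.ofReal (RN b U₁) * ENNReal.ofReal (RN b U₂) *
        ENNReal.ofReal (RN b U₃) * ENNReal.ofReal (RN b U₄)) ^ (1/2 : ℝ) := by
  obtain ⟨c, hc, h1, h2⟩ := planch
  set L := c ^ (2 : ℝ) * CC b ^ (3/2 : ℝ) with hL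
  have hLt : L ≠ ∞ := by
    refine (ENNReal.mul_lt_top ?_ ?_).ne <;> refine ENNReal.rpow_lt_top_of_nonneg (by norm_num) ?_
    · exact hc
    · exact (CC_lt_top b hb).ne
  refine ⟨(c * c ^ (2 : ℝ) * (L * L)) ^ (1/2 : ℝ), ?_, fun U₁ U₂ U₃ U₄ => ?_⟩
  · refine (ENNReal.rpow_lt_top_of_nonneg (by norm_num) ?_).ne
    refine ENNReal.mul_ne_top (ENNReal.mul_ne_top hc ?_) (ENNReal.mul_ne_top hLt hLt)
    exact (ENNReal.rpow_lt_top_of_nonneg (by norm_num) hc).ne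
  rw [← ENNReal.mul_rpow_of_nonneg _ _ (by norm_num),
    eLpNorm_eq_lintegral_rpow_enorm_toReal (by norm_num) (by norm_num)]
  simp only [ENNReal.toReal_ofNat]
  refine ENNReal.rpow_le_rpow ?_ (by norm_num)
  set A := mulS U₁ U₂
  set B := mulS U₃ U₄
  have e : ∀ p, U₁ p * U₂ p * U₃ p * U₄ p = mulS A B p := by
    intro p
    simp only [A, B, mulS_apply]
    ring
  simp only [e]
  have mA := (ftS A).continuous.measurable.enorm
  have mB := (ftS B).continuous.measurable.enorm
  have mconv : Measurable (fun p => ∫⁻ q, ‖ftS A q‖ₑ * ‖ftS B (p - q)‖ₑ) :=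
    Measurable.lintegral_prod_right' (f := fun z : (ℝ × ℝ) × (ℝ × ℝ) =>
      ‖ftS A z.2‖ₑ * ‖ftS B (z.1 - z.2)‖ₑ) (by fun_prop)
  rw [h1]
  have h3 : ∫⁻ p, ‖ftS (mulS A B) p‖ₑ ^ (2 : ℝ) ≤ c ^ (2 : ℝ) *
      ∫⁻ p, (∫⁻ q, ‖ftS A q‖ₑ * ‖ftS B (p - q)‖ₑ) ^ (2 : ℝ) := by
    rw [← lintegral_const_mul _ (mconv.pow_const _)]
    refine lintegral_mono fun p => ?_
    rw [← ENNReal.mul_rpow_of_nonneg _ _ (by norm_num)]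
    exact ENNReal.rpow_le_rpow (h2 A B p) (by norm_num)
  have h4 := young (fun p => ‖ftS A p‖ₑ) (fun p => ‖ftS B p‖ₑ) mA mB
  have h5 := mul_le_mul' (pair_bd b c h2 U₁ U₂) (pair_bd b c h2 U₃ U₄)
  rw [NN_eq b hb, NN_eq b hb, NN_eq b hb, NN_eq b hb] at h5
  calc _ ≤ c * (c ^ (2 : ℝ) * _) :=
        mul_le_mul_right (h3.trans (mul_le_mul_right (h4.trans h5) _)) _
    _ = _ := by rw [← hL]; ring

end Aux

/-- Quadrilinear estimate (Lemma 2.3 of the paper):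
`‖U₁U₂U₃U₄‖_{L²(ℝ²)} ≤ C ∏ ‖U_i‖_{X^{0,b}}` for `b > 1/2`. -/
theorem quadrilinear_L2 (b : ℝ) (hb : 1 / 2 < b) :
    ∃ C > 0, ∀ U₁ U₂ U₃ U₄ : SchwartzMap (ℝ × ℝ) ℂ,
      eLpNorm (fun p : ℝ × ℝ => U₁ p * U₂ p * U₃ p * U₄ p) 2 volume ≤
        ENNReal.ofReal (C *
          ((∫ p : ℝ × ℝ, (1 + |p.2 - p.1 ^ 3|) ^ (2 * b) *
            ‖∫ q : ℝ × ℝ, Complex.exp (-Complex.I * (q.1 * p.1 + q.2 * p.2)) * U₁ q‖ ^ 2) ^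
            ((1 : ℝ) / 2) *
          (∫ p : ℝ × ℝ, (1 + |p.2 - p.1 ^ 3|) ^ (2 * b) *
            ‖∫ q : ℝ × ℝ, Complex.exp (-Complex.I * (q.1 * p.1 + q.2 * p.2)) * U₂ q‖ ^ 2) ^
            ((1 : ℝ) / 2) *
          (∫ p : ℝ × ℝ, (1 + |p.2 - p.1 ^ 3|) ^ (2 * b) *
            ‖∫ q : ℝ × ℝ, Complex.exp (-Complex.I * (q.1 * p.1 + q.2 * p.2)) * U₃ q‖ ^ 2) ^
            ((1 : ℝ) / 2) *
          (∫ p : ℝ × ℝ, (1 + |p.2 - p.1 ^ 3|) ^ (2 * b) *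
            ‖∫ q : ℝ × ℝ, Complex.exp (-Complex.I * (q.1 * p.1 + q.2 * p.2)) * U₄ q‖ ^ 2) ^
            ((1 : ℝ) / 2))) := by
  obtain ⟨K, hK, h⟩ := quad b hb
  refine ⟨K.toReal + 1, by positivity, fun U₁ U₂ U₃ U₄ => (h U₁ U₂ U₃ U₄).trans ?_⟩
  change _ ≤ ENNReal.ofReal ((K.toReal + 1) * (RN b U₁ ^ ((1 : ℝ) / 2) * RN b U₂ ^ ((1 : ℝ) / 2) *
    RN b U₃ ^ ((1 : ℝ) / 2) * RN b U₄ ^ ((1 : ℝ) / 2)))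
  have n1 := RN_nonneg b U₁
  have n2 := RN_nonneg b U₂
  have n3 := RN_nonneg b U₃
  have n4 := RN_nonneg b U₄
  rw [← Real.mul_rpow n1 n2, ← Real.mul_rpow (by positivity) n3,
    ← Real.mul_rpow (by positivity) n4, ENNReal.ofReal_mul (by positivity),
    ← ENNReal.ofReal_mul n1, ← ENNReal.ofReal_mul (by positivity),
    ← ENNReal.ofReal_mul (by positivity),
    ENNReal.ofReal_rpow_of_nonneg (by positivity) (by norm_num)]
  refine mul_le_mul_left ?_ _
  exact (ENNReal.le_ofReal_iff_toReal_le hK (by positivity)).2 (by linarith)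
end

section
/- Let σ ≥ 0, s ∈ ℝ and −1/2 < b < 1/2. There exists a constant C > 0, depending only on b, such that for every interval I ⊂ ℝ and every Schwartz function u : ℝ² → ℂ one has ‖χ_I u‖_{X^{σ,s,b}} ≤ C ‖u‖_{X^{σ,s,b}}, where (χ_I u)(x,t) = u(x,t) if t ∈ I and 0 otherwise. -/
open MeasureTheory ENNReal
open scoped FourierTransform SchwartzMap ContDiff

lemma aux_fourier_cont {h : ℝ → ℂ} (h1 : Integrable h) : Continuous (𝓕 h) :=
  VectorFourier.fourierIntegral_continuous Real.continuous_fourierChar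
    (by fun_prop) h1

lemma aux_plancherel {h : ℝ → ℂ} (h1 : Integrable h) (h2 : MemLp h 2) :
    ∫⁻ x, ‖𝓕 h x‖ₑ ^ 2 = ∫⁻ x, ‖h x‖ₑ ^ 2 := by
  obtain ⟨F, hF⟩ : ∃ F : Lp ℂ 2 (volume : Measure ℝ), F = 𝓕 (h2.toLp h) := ⟨_, rfl⟩
  have hFl : LocallyIntegrable F volume := by
    have q : (1:ℝ≥0∞) ≤ 2 := by norm_num
    exact (Lp.memLp F).locallyIntegrable q
  have hFl' : LocallyIntegrable (𝓕 h) volume := (aux_fourier_cont h1).locallyIntegrable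
  have key : ∀ᵐ x, F x = 𝓕 h x := by
    apply ae_eq_of_integral_contDiff_smul_eq
    · exact hFl
    · exact hFl'
    · intro g hg hgs
      have hgs' : HasCompactSupport (fun x => (g x : ℂ)) := hgs.comp_left (g := fun r : ℝ => (r : ℂ)) Complex.ofReal_zero
      have hg' : ContDiff ℝ ∞ (fun x => (g x : ℂ)) := Complex.ofRealCLM.contDiff.comp hg
      set φ : 𝓢(ℝ, ℂ) := hgs'.toSchwartzMap hg' with hφ
      have e0 : ∀ x, φ x = (g x : ℂ) := fun x => rfl
      have e1 := congrArg (fun T => T φ) (Lp.fourier_toTemperedDistribution_eq (h2.toLp h))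
      simp only [TemperedDistribution.fourier_apply, Lp.toTemperedDistribution_apply] at e1
      rw [← hF] at e1
      have e2 := VectorFourier.integral_fourierIntegral_smul_eq_flip (μ := volume) (ν := volume)
        (L := innerₗ ℝ) (f := φ) (g := h) Real.continuous_fourierChar (by fun_prop) φ.integrable h1
      rw [flip_innerₗ] at e2
      have e3 : ∫ x, (𝓕 φ) x • (h2.toLp h) x = ∫ x, (𝓕 φ) x • h x := by
        apply integral_congr_ae
        filter_upwards [h2.coeFn_toLp] with x hx
        rw [hx]
      rw [e3] at e1
      have e4 : ∫ x, (𝓕 φ) x • h x = ∫ x, φ x • 𝓕 h x := e2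
      rw [e4] at e1
      simp only [e0] at e1
      simpa using e1.symm
  have n1 := Lp.norm_fourier_eq (h2.toLp h)
  rw [← hF] at n1
  have n2 : eLpNorm (𝓕 h) 2 volume = eLpNorm h 2 volume := by
    rw [← eLpNorm_congr_ae key, ← eLpNorm_congr_ae h2.coeFn_toLp]
    rw [Lp.norm_def, Lp.norm_def] at n1
    exact (ENNReal.toReal_eq_toReal_iff' (Lp.eLpNorm_ne_top _) (Lp.eLpNorm_ne_top _)).1 n1
  rw [eLpNorm_eq_lintegral_rpow_enorm_toReal (by norm_num) (by norm_num),
    eLpNorm_eq_lintegral_rpow_enorm_toReal (by norm_num) (by norm_num)] at n2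
  have := ENNReal.rpow_left_injective (x := (1:ℝ) / (2:ℝ≥0∞).toReal) (by norm_num) n2
  simpa using this
/-- The symmetric majorant kernel. -/
noncomputable def auxH (β m n : ℝ) : ℝ := (min m n) ^ (-β) * (max m n) ^ (β - 1)

lemma auxH_comm (β m n : ℝ) : auxH β m n = auxH β n m := by
  unfold auxH; rw [min_comm, max_comm]

/-- Pointwise estimate. -/
lemma aux_ker {b m n : ℝ} (hb : |b| ≤ 1) (hm : 0 < m) (hn : 0 < n) :
    |m ^ b - n ^ b| ≤ n ^ b * (|m - n| * auxH |b| m n) := by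
  have key : ∀ r : ℝ, 0 < r → |r ^ b - 1| ≤ |r - 1| * auxH |b| r 1 := by
    intro r hr
    have hb0 := abs_nonneg b
    unfold auxH
    rcases le_total 1 r with h | h
    · rw [min_eq_right h, max_eq_left h, Real.one_rpow, one_mul, abs_of_nonneg (by linarith : 0 ≤ r-1),
        Real.rpow_sub hr, Real.rpow_one]
      have h1 : 1 ≤ r ^ |b| := Real.one_le_rpow h hb0
      have h2 : r ^ |b| ≤ r := by simpa using Real.rpow_le_rpow_of_exponent_le h hb
      have h3 : (r - 1) * (r ^ |b| / r) = r ^ |b| - r^|b| / r := by field_simp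
      have h4 : r ^ |b| / r ≤ 1 := (div_le_one hr).2 h2
      rcases le_total 0 b with hb' | hb'
      · rw [abs_of_nonneg hb'] at *
        rw [abs_of_nonneg (by linarith), h3]; linarith
      · have e : r ^ b = (r ^ |b|)⁻¹ := by rw [abs_of_nonpos hb', Real.rpow_neg hr.le, inv_inv]
        rw [e, abs_sub_comm, abs_of_nonneg (by linarith [inv_le_one_of_one_le₀ h1])]
        have h5 : r⁻¹ ≤ (r ^ |b|)⁻¹ := inv_anti₀ (by linarith) h2
        have h6 : 1 - r⁻¹ ≤ (r-1) * (r^|b| / r) := by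
          have : 1 - r⁻¹ = (r-1) * (1 / r) := by field_simp
          rw [this]; gcongr
        linarith
    · rw [min_eq_left h, max_eq_right h, Real.one_rpow, mul_one, abs_of_nonpos (by linarith : r-1 ≤ 0),
        Real.rpow_neg hr.le]
      have h0 : 0 < r ^ |b| := by positivity
      have h1 : r ^ |b| ≤ 1 := Real.rpow_le_one hr.le h hb0
      have h2 : r ≤ r ^ |b| := by simpa using Real.rpow_le_rpow_of_exponent_ge hr h hb
      have h3 : 1 ≤ (r ^ |b|)⁻¹ := (one_le_inv₀ h0).2 h1
      rcases le_total 0 b with hb' | hb'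
      · rw [abs_of_nonneg hb'] at *
        rw [abs_of_nonpos (by linarith)]
        nlinarith
      · have e : r ^ b = (r ^ |b|)⁻¹ := by rw [abs_of_nonpos hb', Real.rpow_neg hr.le, inv_inv]
        rw [e, abs_of_nonneg (by linarith)]
        have : (r ^ |b|)⁻¹ - 1 = (1 - r^|b|) * (r ^ |b|)⁻¹ := by field_simp
        rw [this]; gcongr; linarith
  have k := key (m / n) (by positivity)
  have e1 : m ^ b - n ^ b = n ^ b * ((m/n)^b - 1) := by
    rw [Real.div_rpow hm.le hn.le]; field_simp
  have e2 : |m - n| = n * |m / n - 1| := by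
    rw [← abs_of_pos hn, ← abs_mul, abs_of_pos hn]; congr 1; field_simp
  have e3 : n * auxH |b| m n = auxH |b| (m/n) 1 := by
    unfold auxH
    have a1 : min (m/n) 1 = min m n / n := by rw [← min_div_div_right hn.le, div_self hn.ne']
    have a2 : max (m/n) 1 = max m n / n := by rw [← max_div_div_right hn.le, div_self hn.ne']
    have p1 : 0 < min m n := lt_min hm hn
    have p2 : 0 < max m n := lt_max_of_lt_left hm
    rw [a1, a2, Real.div_rpow p1.le hn.le, Real.div_rpow p2.le hn.le, Real.rpow_neg hn.le,
      Real.rpow_sub hn, Real.rpow_one]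
    field_simp
  rw [e1, abs_mul, abs_of_pos (by positivity : 0 < n ^ b), e2]
  gcongr
  calc _ ≤ _ := k
    _ = _ := by rw [← e3]; ring
lemma auxH_nonneg (β : ℝ) {m n : ℝ} (hm : 0 ≤ m) (hn : 0 ≤ n) : 0 ≤ auxH β m n := by
  unfold auxH
  have : 0 ≤ min m n := le_min hm hn
  have : 0 ≤ max m n := le_max_of_le_left hm
  positivity

lemma aux_schur_Ioi {β m : ℝ} (h0 : 0 ≤ β) (h : β < 1/2) (hm : 0 < m) :
    ∫⁻ n in Set.Ioi 0, ENNReal.ofReal (auxH β m n * n ^ (-(1/2) : ℝ)) ≤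
      ENNReal.ofReal (2 / (1/2 - β) * m ^ (-(1/2) : ℝ)) := by
  have hd : 0 < 1/2 - β := by linarith
  rw [← Set.Ioc_union_Ioi_eq_Ioi hm.le]
  refine (lintegral_union_le _ _ _).trans ?_
  have A : ∫⁻ n in Set.Ioc 0 m, ENNReal.ofReal (auxH β m n * n ^ (-(1/2) : ℝ)) =
      ENNReal.ofReal (1 / (1/2 - β) * m ^ (-(1/2) : ℝ)) := by
    have e : ∀ n ∈ Set.Ioc 0 m, ENNReal.ofReal (auxH β m n * n ^ (-(1/2) : ℝ)) =
        ENNReal.ofReal (m ^ (β - 1) * n ^ (-β - 1/2)) := by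
      intro n hn
      unfold auxH
      rw [min_eq_right hn.2, max_eq_left hn.2, sub_eq_add_neg (-β), Real.rpow_add hn.1]
      congr 1; ring
    rw [setLIntegral_congr_fun measurableSet_Ioc e, ← ofReal_integral_eq_lintegral_ofReal]
    · rw [integral_const_mul, ← intervalIntegral.integral_of_le hm.le, integral_rpow (Or.inl (by linarith)),
        Real.zero_rpow (by linarith)]
      congr 1
      rw [show -β - 1/2 + 1 = 1/2 - β by ring, sub_zero, mul_div_assoc', ← Real.rpow_add hm]
      rw [show β - 1 + (1/2 - β) = -(1/2) by ring]; field_simp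
    · refine Integrable.const_mul ?_ _
      have := (intervalIntegral.intervalIntegrable_rpow' (a := 0) (b := m) (r := -β - 1/2) (by linarith)).1
      exact this
    · refine (ae_restrict_iff' measurableSet_Ioc).2 (Filter.Eventually.of_forall fun n hn => ?_)
      have := hn.1
      simp only [Pi.zero_apply]; positivity
  have B : ∫⁻ n in Set.Ioi m, ENNReal.ofReal (auxH β m n * n ^ (-(1/2) : ℝ)) =
      ENNReal.ofReal (1 / (1/2 - β) * m ^ (-(1/2) : ℝ)) := by
    have e : ∀ n ∈ Set.Ioi m, ENNReal.ofReal (auxH β m n * n ^ (-(1/2) : ℝ)) =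
        ENNReal.ofReal (m ^ (-β) * n ^ (β - 3/2)) := by
      intro n hn
      have hn' : m < n := hn
      have hn0 : 0 < n := hm.trans hn'
      unfold auxH
      rw [min_eq_left hn'.le, max_eq_right hn'.le, show β - 3/2 = (β - 1) + -(1/2) by ring, Real.rpow_add hn0]
      congr 1; ring
    rw [setLIntegral_congr_fun measurableSet_Ioi e, ← ofReal_integral_eq_lintegral_ofReal]
    · rw [integral_const_mul, integral_Ioi_rpow_of_lt (by linarith) hm]
      congr 1
      rw [show β - 3/2 + 1 = β - 1/2 by ring, mul_div_assoc', mul_neg, ← Real.rpow_add hm]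
      rw [show -β + (β - 1/2) = -(1/2) by ring, show β - 1/2 = -(1/2 - β) by ring, neg_div_neg_eq]; field_simp
    · exact (integrableOn_Ioi_rpow_of_lt (by linarith) hm).const_mul _
    · refine (ae_restrict_iff' measurableSet_Ioi).2 (Filter.Eventually.of_forall fun n hn => ?_)
      have : 0 < n := hm.trans hn
      simp only [Pi.zero_apply]; positivity
  rw [A, B, ← ENNReal.ofReal_add (by positivity) (by positivity)]
  apply le_of_eq; congr 1; ring

lemma aux_lintegral_affine (F : ℝ → ℝ≥0∞) {c : ℝ} (hc : 0 < c) (d : ℝ) :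
    ∫⁻ y, F (c * y + d) = ENNReal.ofReal c⁻¹ * ∫⁻ y, F y := by
  have h1 : ∫⁻ y, F (c * y + d) = ∫⁻ y, F (c * y) := by
    rw [← lintegral_add_right_eq_self (fun y => F (c * y)) (d / c)]
    congr 1; ext y; congr 1; field_simp
  rw [h1]
  have h2 := Real.map_volume_mul_left hc.ne'
  have h3 : ∫⁻ y, F y ∂(Measure.map (c * ·) volume) = ∫⁻ y, F (c * y) :=
    lintegral_map_equiv F (Homeomorph.mulLeft₀ c hc.ne').toMeasurableEquiv
  rw [← h3, h2, lintegral_smul_measure, abs_of_pos (by positivity)]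
  rfl

lemma aux_schur_int {β c m : ℝ} (h0 : 0 ≤ β) (h : β < 1/2) (hm : 0 < m) (hc : 0 < c) :
    ∫⁻ y : ℝ, ENNReal.ofReal (auxH β m (1 + c * |y|) * (1 + c * |y|) ^ (-(1/2) : ℝ)) ≤
      ENNReal.ofReal (4 / (c * (1/2 - β)) * m ^ (-(1/2) : ℝ)) := by
  have hd : 0 < 1/2 - β := by linarith
  set G : ℝ → ℝ≥0∞ := fun n => ENNReal.ofReal (auxH β m n * n ^ (-(1/2) : ℝ)) with hG
  set F : ℝ → ℝ≥0∞ := (Set.Ioi 0).indicator G with hF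
  have b1 : ∀ y : ℝ, ENNReal.ofReal (auxH β m (1 + c * |y|) * (1 + c * |y|) ^ (-(1/2) : ℝ)) ≤
      F (c * y + 1) + F (c * (-y) + 1) := by
    intro y
    have hp : 0 < 1 + c * |y| := by positivity
    rcases le_total 0 y with hy | hy
    · refine le_trans ?_ le_self_add
      rw [abs_of_nonneg hy] at *
      rw [hF, Set.indicator_of_mem (by simpa [add_comm] using hp), hG, add_comm]
    · refine le_trans ?_ le_add_self
      rw [abs_of_nonpos hy] at *
      rw [hF, Set.indicator_of_mem (by simpa [add_comm] using hp), hG, add_comm]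
  have hGm : Measurable G := by
    rw [hG]; unfold auxH; fun_prop
  have hFm : Measurable F := hGm.indicator measurableSet_Ioi
  calc _ ≤ ∫⁻ y : ℝ, (F (c * y + 1) + F (c * (-y) + 1)) := lintegral_mono b1
    _ = ENNReal.ofReal c⁻¹ * (∫⁻ y, F y) + ENNReal.ofReal c⁻¹ * (∫⁻ y, F y) := by
      rw [lintegral_add_left (by fun_prop), lintegral_neg_eq_self (fun y => F (c * y + 1)),
        aux_lintegral_affine F hc]
    _ ≤ ENNReal.ofReal c⁻¹ * ENNReal.ofReal (2 / (1/2 - β) * m ^ (-(1/2) : ℝ)) +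
        ENNReal.ofReal c⁻¹ * ENNReal.ofReal (2 / (1/2 - β) * m ^ (-(1/2) : ℝ)) := by
      rw [hF, lintegral_indicator measurableSet_Ioi]
      gcongr <;> exact aux_schur_Ioi h0 h hm
    _ = _ := by
      rw [← ENNReal.ofReal_mul (by positivity), ← ENNReal.ofReal_add (by positivity) (by positivity)]
      congr 1; field_simp; ring

lemma aux_cs {α : Type*} [MeasurableSpace α] {μ : Measure α} {f g : α → ℝ≥0∞} (hf : AEMeasurable f μ)
    (hg : AEMeasurable g μ) :
    (∫⁻ a, f a * g a ∂μ) ^ 2 ≤ (∫⁻ a, f a ^ 2 ∂μ) * ∫⁻ a, g a ^ 2 ∂μ := by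
  have := ENNReal.lintegral_mul_le_Lp_mul_Lq μ Real.HolderConjugate.two_two hf hg
  calc _ ≤ _ := pow_le_pow_left' this 2
    _ = _ := by
      rw [mul_pow, ← ENNReal.rpow_natCast, ← ENNReal.rpow_natCast, ← ENNReal.rpow_mul, ← ENNReal.rpow_mul]
      norm_num

lemma aux_schur {β c : ℝ} (h0 : 0 ≤ β) (h : β < 1/2) (hc : 0 < c) {g : ℝ → ℝ≥0∞} (hg : Measurable g) :
    ∫⁻ x : ℝ, (∫⁻ y : ℝ, ENNReal.ofReal (auxH β (1 + c * |x|) (1 + c * |y|)) * g y) ^ 2 ≤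
      ENNReal.ofReal (4 / (c * (1/2 - β))) ^ 2 * ∫⁻ y, g y ^ 2 := by
  have hd : 0 < 1/2 - β := by linarith
  set S := 4 / (c * (1/2 - β)) with hS
  have hS0 : 0 < S := by positivity
  set m : ℝ → ℝ := fun x => 1 + c * |x| with hmdef
  have hm : ∀ x, 0 < m x := fun x => by simp only [hmdef]; positivity
  have mm : Measurable m := by simp only [hmdef]; fun_prop
  have mH : Measurable (fun p : ℝ × ℝ => auxH β (m p.1) (m p.2)) := by
    unfold auxH; fun_prop
  have hH : ∀ x y, 0 ≤ auxH β (m x) (m y) := fun x y => auxH_nonneg β (hm x).le (hm y).le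
  have step : ∀ x, (∫⁻ y : ℝ, ENNReal.ofReal (auxH β (m x) (m y)) * g y) ^ 2 ≤
      ENNReal.ofReal (S * m x ^ (-(1/2) : ℝ)) *
        ∫⁻ y, ENNReal.ofReal (auxH β (m x) (m y) * m y ^ (1/2 : ℝ)) * g y ^ 2 := by
    intro x
    have mHx : Measurable (fun y : ℝ => auxH β (m x) (m y)) := by unfold auxH; fun_prop
    have e : ∀ y, ENNReal.ofReal (auxH β (m x) (m y)) * g y =
        ENNReal.ofReal (Real.sqrt (auxH β (m x) (m y)) * m y ^ (-(1/4) : ℝ)) *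
        (ENNReal.ofReal (Real.sqrt (auxH β (m x) (m y)) * m y ^ ((1/4) : ℝ)) * g y) := by
      intro y
      rw [← mul_assoc, ← ENNReal.ofReal_mul (mul_nonneg (Real.sqrt_nonneg _) (Real.rpow_nonneg (hm y).le _))]
      congr 2
      calc _ = (Real.sqrt (auxH β (m x) (m y)) * Real.sqrt (auxH β (m x) (m y))) *
            (m y ^ (-(1/4) : ℝ) * m y ^ ((1/4) : ℝ)) := by
              rw [Real.mul_self_sqrt (hH x y), ← Real.rpow_add (hm y)]; simp
        _ = _ := by ring
    have pw : ∀ (y t : ℝ), ENNReal.ofReal (Real.sqrt (auxH β (m x) (m y)) * m y ^ t) ^ 2 =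
        ENNReal.ofReal (auxH β (m x) (m y) * m y ^ (2 * t)) := by
      intro y t
      rw [← ENNReal.ofReal_pow (mul_nonneg (Real.sqrt_nonneg _) (Real.rpow_nonneg (hm y).le _)), mul_pow,
        Real.sq_sqrt (hH x y), ← Real.rpow_mul_natCast (hm y).le, mul_comm t]; norm_num
    simp_rw [e]
    refine (aux_cs (by fun_prop) (by fun_prop)).trans ?_
    simp_rw [mul_pow, pw]
    norm_num only
    gcongr
    have := aux_schur_int h0 h (hm x) hc
    norm_num only at this
    exact this
  calc _ ≤ ∫⁻ x, ENNReal.ofReal (S * m x ^ (-(1/2) : ℝ)) *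
        ∫⁻ y, ENNReal.ofReal (auxH β (m x) (m y) * m y ^ (1/2 : ℝ)) * g y ^ 2 := lintegral_mono step
    _ = ∫⁻ x, ∫⁻ y, ENNReal.ofReal (S * m x ^ (-(1/2) : ℝ)) *
        (ENNReal.ofReal (auxH β (m x) (m y) * m y ^ (1/2 : ℝ)) * g y ^ 2) := by
      congr 1; ext x
      rw [lintegral_const_mul]
      unfold auxH; fun_prop
    _ = ∫⁻ y, ∫⁻ x, ENNReal.ofReal (S * m x ^ (-(1/2) : ℝ)) *
        (ENNReal.ofReal (auxH β (m x) (m y) * m y ^ (1/2 : ℝ)) * g y ^ 2) := by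
      apply lintegral_lintegral_swap
      simp only [Function.uncurry_def]
      fun_prop
    _ = ∫⁻ y, (∫⁻ x, ENNReal.ofReal (auxH β (m y) (m x) * m x ^ (-(1/2) : ℝ))) *
        (ENNReal.ofReal (S * m y ^ (1/2 : ℝ)) * g y ^ 2) := by
      congr 1; ext y
      rw [← lintegral_mul_const]
      · congr 1; ext x
        rw [← mul_assoc, ← mul_assoc, ← ENNReal.ofReal_mul (mul_nonneg hS0.le (Real.rpow_nonneg (hm x).le _)),
          ← ENNReal.ofReal_mul (mul_nonneg (hH y x) (Real.rpow_nonneg (hm x).le _)), auxH_comm β (m x)]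
        congr 2; ring
      · unfold auxH; fun_prop
    _ ≤ ∫⁻ y, ENNReal.ofReal (S * m y ^ (-(1/2) : ℝ)) *
        (ENNReal.ofReal (S * m y ^ (1/2 : ℝ)) * g y ^ 2) := by
      gcongr with y
      exact aux_schur_int h0 h (hm y) hc
    _ = ∫⁻ y, ENNReal.ofReal S ^ 2 * g y ^ 2 := by
      congr 1; ext y
      rw [← mul_assoc, ← ENNReal.ofReal_mul (mul_nonneg hS0.le (Real.rpow_nonneg (hm y).le _)),
        ← ENNReal.ofReal_pow hS0.le]
      congr 2
      calc _ = S ^ 2 * (m y ^ (-(1/2) : ℝ) * m y ^ ((1/2) : ℝ)) := by ring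
        _ = _ := by rw [← Real.rpow_add (hm y)]; simp
    _ = _ := by rw [lintegral_const_mul _ (by fun_prop)]

/-- The Fourier transform of the indicator of `I`. -/
noncomputable def auxK (I : Set ℝ) (z : ℝ) : ℂ :=
  ∫ t in I, Complex.exp (((-2 * Real.pi * t * z : ℝ) : ℂ) * Complex.I)

lemma auxK_bound {I : Set ℝ} (hI : I.OrdConnected) {R : ℝ} (hR : I ⊆ Set.Icc (-R) R) {z : ℝ}
    (hz : z ≠ 0) : ‖auxK I z‖ ≤ 1 / (Real.pi * |z|) := by
  unfold auxK
  have hzp : 0 < |z| := abs_pos.2 hz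
  have hpi := Real.pi_pos
  rcases I.eq_empty_or_nonempty with rfl | hne
  · simp; positivity
  have hb : BddBelow I := ⟨-R, fun x hx => (hR hx).1⟩
  have ha : BddAbove I := ⟨R, fun x hx => (hR hx).2⟩
  have s1 : Set.Ioo (sInf I) (sSup I) ⊆ I := by
    intro x hx
    obtain ⟨p, hp, hpx⟩ := exists_lt_of_csInf_lt hne hx.1
    obtain ⟨q, hq, hxq⟩ := exists_lt_of_lt_csSup hne hx.2
    exact hI.out hp hq ⟨hpx.le, hxq.le⟩
  have s2 : I ⊆ Set.Icc (sInf I) (sSup I) := subset_Icc_csInf_csSup hb ha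
  have hle : sInf I ≤ sSup I := csInf_le_csSup hne hb ha
  have hae : I =ᵐ[volume] Set.Ioc (sInf I) (sSup I) := by
    refine Filter.EventuallyLE.antisymm ?_ ?_
    · exact (LE.le.eventuallyLE s2).trans Ioc_ae_eq_Icc.symm.le
    · exact Ioo_ae_eq_Ioc.symm.le.trans (LE.le.eventuallyLE s1)
  rw [setIntegral_congr_set hae, ← intervalIntegral.integral_of_le hle]
  set c : ℂ := ((-2 * Real.pi * z : ℝ) : ℂ) * Complex.I with hc
  have hc0 : c ≠ 0 := by
    simp [hc, hz, hpi.ne']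
  have e : ∀ t : ℝ, Complex.exp (((-2 * Real.pi * t * z : ℝ) : ℂ) * Complex.I) =
      Complex.exp (c * t) := by
    intro t; congr 1; rw [hc]; push_cast; ring
  simp_rw [e]
  rw [integral_exp_mul_complex hc0, norm_div]
  have nc : ‖c‖ = 2 * Real.pi * |z| := by
    rw [hc]; simp [abs_of_pos hpi]
  have ne1 : ∀ t : ℝ, ‖Complex.exp (c * t)‖ = 1 := by
    intro t; rw [← e]; exact Complex.norm_exp_ofReal_mul_I _
  rw [nc]
  calc _ ≤ 2 / (2 * Real.pi * |z|) := by
        gcongr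
        refine (norm_sub_le _ _).trans ?_
        rw [ne1, ne1]; norm_num
    _ = _ := by field_simp

lemma aux_fourierInv_eq (f : ℝ → ℂ) (t : ℝ) :
    𝓕⁻ f t = ∫ y, Complex.exp (((2 * Real.pi * t * y : ℝ) : ℂ) * Complex.I) * f y := by
  rw [Real.fourierInv_eq_fourier_neg, Real.fourier_real_eq_integral_exp_smul]
  congr 1; ext y; rw [smul_eq_mul]; congr 4; ring

lemma aux_fourierInv_cont {h : ℝ → ℂ} (h1 : Integrable h) : Continuous (𝓕⁻ h) := by
  have : 𝓕⁻ h = fun t => 𝓕 h (-t) := by ext t; exact Real.fourierInv_eq_fourier_neg _ _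
  rw [this]
  exact (aux_fourier_cont h1).comp continuous_neg

lemma aux_fourierInv_bound (f : ℝ → ℂ) (t : ℝ) : ‖𝓕⁻ f t‖ ≤ ∫ y, ‖f y‖ := by
  rw [aux_fourierInv_eq]
  refine (norm_integral_le_integral_norm _).trans (le_of_eq ?_)
  congr 1; ext y; rw [norm_mul, Complex.norm_exp_ofReal_mul_I, one_mul]

lemma aux_swap {I : Set ℝ} (hIm : MeasurableSet I) (hIf : volume I ≠ ⊤) {f : ℝ → ℂ}
    (hf : Integrable f) (x : ℝ) :
    𝓕 (I.indicator (𝓕⁻ f)) x = ∫ y, auxK I (x - y) * f y := by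
  have e0 : 𝓕 (I.indicator (𝓕⁻ f)) x = ∫ t in I, ∫ y,
      Complex.exp (((-2 * Real.pi * t * (x - y) : ℝ) : ℂ) * Complex.I) * f y := by
    rw [Real.fourier_real_eq_integral_exp_smul, ← integral_indicator hIm]
    congr 1; ext t
    by_cases ht : t ∈ I
    · rw [Set.indicator_of_mem ht, Set.indicator_of_mem ht, aux_fourierInv_eq, smul_eq_mul,
        ← integral_const_mul]
      congr 1; ext y
      rw [← mul_assoc, ← Complex.exp_add]
      congr 2; push_cast; ring
    · rw [Set.indicator_of_notMem ht, Set.indicator_of_notMem ht, smul_zero]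
  have : IsFiniteMeasure (volume.restrict I) := ⟨by
    rw [Measure.restrict_apply_univ]; exact lt_top_iff_ne_top.2 hIf⟩
  rw [e0, integral_integral_swap]
  · congr 1; ext y
    rw [integral_mul_const]; rfl
  · have h1 : Integrable (fun p : ℝ × ℝ => f p.2) ((volume.restrict I).prod volume) :=
      hf.comp_snd _
    refine Integrable.bdd_mul (c := 1) h1 ?_ ?_
    · apply Continuous.aestronglyMeasurable; fun_prop
    · exact Filter.Eventually.of_forall fun p => (Complex.norm_exp_ofReal_mul_I _).le

/-- The weight. -/
noncomputable def auxW (b x : ℝ) : ℝ := (1 + 2 * Real.pi * |x|) ^ b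

lemma auxW_pos (b x : ℝ) : 0 < auxW b x := by
  unfold auxW; have := Real.pi_pos; positivity

lemma auxW_meas (b : ℝ) : Measurable (auxW b) := by unfold auxW; fun_prop

lemma aux_comm_bound {b : ℝ} (hb : |b| < 1/2) {I : Set ℝ} (hI : I.OrdConnected) {R : ℝ}
    (hR : I ⊆ Set.Icc (-R) R) (x y : ℝ) :
    ‖auxK I (x - y)‖ * |auxW b x - auxW b y| ≤
      2 * (auxW b y * auxH |b| (1 + 2 * Real.pi * |x|) (1 + 2 * Real.pi * |y|)) := by
  have hpi := Real.pi_pos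
  have hH : 0 ≤ auxH |b| (1 + 2 * Real.pi * |x|) (1 + 2 * Real.pi * |y|) :=
    auxH_nonneg _ (by positivity) (by positivity)
  have hW := auxW_pos b y
  by_cases hxy : x = y
  · subst hxy; simp; positivity
  have hz : x - y ≠ 0 := sub_ne_zero.2 hxy
  have hzp := abs_pos.2 hz
  have h1 := auxK_bound hI hR hz
  have h2 := aux_ker (b := b) (m := 1 + 2 * Real.pi * |x|) (n := 1 + 2 * Real.pi * |y|)
    (by linarith) (by positivity) (by positivity)
  have h3 : |(1 + 2 * Real.pi * |x|) - (1 + 2 * Real.pi * |y|)| ≤ 2 * Real.pi * |x - y| := by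
    rw [show (1 + 2 * Real.pi * |x|) - (1 + 2 * Real.pi * |y|) = 2 * Real.pi * (|x| - |y|) by ring,
      abs_mul, abs_of_pos (by positivity : 0 < 2 * Real.pi)]
    refine mul_le_mul_of_nonneg_left ?_ (by positivity)
    exact abs_abs_sub_abs_le_abs_sub x y
  calc _ ≤ 1 / (Real.pi * |x - y|) * (auxW b y * (2 * Real.pi * |x - y| *
        auxH |b| (1 + 2 * Real.pi * |x|) (1 + 2 * Real.pi * |y|))) := by
        apply mul_le_mul h1 _ (abs_nonneg _) (by positivity)
        refine h2.trans ?_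
        unfold auxW at hW ⊢
        gcongr
    _ = _ := by field_simp

/-- The constant. -/
noncomputable def auxC (b : ℝ) : ℝ≥0∞ :=
  2 + 2 * (2 * ENNReal.ofReal (4 / (2 * Real.pi * (1/2 - |b|)))) ^ 2

lemma aux_one_dim_bdd {b : ℝ} (hb : |b| < 1/2) {I : Set ℝ} (hI : I.OrdConnected) {R : ℝ}
    (hR : I ⊆ Set.Icc (-R) R) {w : ℝ → ℂ} (hwc : Continuous w) (hw : Integrable w)
    (hf : Integrable (𝓕 w)) (hg1 : Integrable (fun x => (auxW b x : ℂ) * 𝓕 w x))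
    (hg2 : MemLp (fun x => (auxW b x : ℂ) * 𝓕 w x) 2) :
    ∫⁻ x, ‖(auxW b x : ℂ) * 𝓕 (I.indicator w) x‖ₑ ^ 2 ≤
      auxC b * ∫⁻ x, ‖(auxW b x : ℂ) * 𝓕 w x‖ₑ ^ 2 := by
  have hIm : MeasurableSet I := hI.measurableSet
  have hIf : volume I ≠ ⊤ := ne_top_of_le_ne_top (by simp) (measure_mono hR)
  set f := 𝓕 w with hfdef
  set g : ℝ → ℂ := fun x => (auxW b x : ℂ) * f x with hg
  have hwf : w = 𝓕⁻ f := (hwc.fourierInv_fourier_eq hw hf).symm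
  have hfc : Continuous f := aux_fourier_cont hw
  set G := 𝓕⁻ g with hG
  have hGc : Continuous G := aux_fourierInv_cont hg1
  have : IsFiniteMeasure (volume.restrict I) := ⟨by
    rw [Measure.restrict_apply_univ]; exact lt_top_iff_ne_top.2 hIf⟩
  have hL : ∀ p : ℝ≥0∞, MemLp (I.indicator G) p := by
    intro p
    rw [memLp_indicator_iff_restrict hIm]
    exact MemLp.of_bound hGc.aestronglyMeasurable _
      (Filter.Eventually.of_forall fun t => aux_fourierInv_bound g t)
  have hGi : Integrable (I.indicator G) := memLp_one_iff_integrable.1 (hL 1)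
  have P1 : ∫⁻ x, ‖𝓕 (I.indicator G) x‖ₑ ^ 2 ≤ ∫⁻ x, ‖g x‖ₑ ^ 2 := by
    rw [aux_plancherel hGi (hL 2), ← aux_plancherel hg1 hg2,
      ← lintegral_neg_eq_self (fun x => ‖𝓕 g x‖ₑ ^ 2)]
    refine lintegral_mono fun x => ?_
    rw [← Real.fourierInv_eq_fourier_neg]
    gcongr
    exact enorm_indicator_le_enorm_self _ _
  have hgm : Measurable (fun y => ‖g y‖ₑ) := by
    have := auxW_meas b
    have := hfc.measurable
    simp only [hg]; fun_prop
  -- commutator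
  have hKm : ∀ z, ‖auxK I z‖ ≤ (volume I).toReal := by
    intro z
    unfold auxK
    refine (norm_setIntegral_le_of_norm_le_const (C := 1) (lt_top_iff_ne_top.2 hIf)
      (fun t _ => (Complex.norm_exp_ofReal_mul_I _).le)).trans ?_
    rw [one_mul]; rfl
  have hKc : Continuous (auxK I) := by
    have : auxK I = 𝓕 (I.indicator (fun _ => (1:ℂ))) := by
      ext z
      rw [Real.fourier_real_eq_integral_exp_smul, auxK, ← integral_indicator hIm]
      congr 1; ext t
      by_cases ht : t ∈ I <;> simp [ht]
    rw [this]
    exact aux_fourier_cont ((integrable_indicator_iff hIm).2 (integrableOn_const hIf))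
  have hint : ∀ (h : ℝ → ℂ) (x : ℝ), Integrable h → Integrable (fun y => auxK I (x - y) * h y) := by
    intro h x hh
    refine Integrable.bdd_mul (c := (volume I).toReal) hh ?_ ?_
    · exact (hKc.comp (by fun_prop : Continuous fun y => x - y)).aestronglyMeasurable
    · exact Filter.Eventually.of_forall fun y => hKm _
  set T : ℝ → ℝ≥0∞ := fun x => ∫⁻ y, ENNReal.ofReal
    (auxH |b| (1 + 2 * Real.pi * |x|) (1 + 2 * Real.pi * |y|)) * ‖g y‖ₑ with hT
  have C1 : ∀ x, ‖(auxW b x : ℂ) * 𝓕 (I.indicator w) x‖ₑ ≤ ‖𝓕 (I.indicator G) x‖ₑ + 2 * T x := by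
    intro x
    have e1 : 𝓕 (I.indicator w) x = ∫ y, auxK I (x - y) * f y := by
      rw [hwf]; exact aux_swap hIm hIf hf x
    have e2 : 𝓕 (I.indicator G) x = ∫ y, auxK I (x - y) * g y := aux_swap hIm hIf hg1 x
    have e3 : (auxW b x : ℂ) * 𝓕 (I.indicator w) x = 𝓕 (I.indicator G) x +
        ∫ y, auxK I (x - y) * ((auxW b x : ℂ) - auxW b y) * f y := by
      rw [e1, e2, ← integral_const_mul, ← sub_eq_iff_eq_add', ← integral_sub]
      · congr 1; ext y; simp only [hg]; ring
      · exact (hint f x hf).const_mul _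
      · exact hint g x hg1
    rw [e3]
    refine (enorm_add_le _ _).trans ?_
    gcongr
    refine (enorm_integral_le_lintegral_enorm _).trans ?_
    rw [hT, ← lintegral_const_mul' _ _ (by norm_num)]
    refine lintegral_mono fun y => ?_
    have hH : 0 ≤ auxH |b| (1 + 2 * Real.pi * |x|) (1 + 2 * Real.pi * |y|) := by
      have := Real.pi_pos
      exact auxH_nonneg _ (by positivity) (by positivity)
    have hW := auxW_pos b y
    have := aux_comm_bound hb hI hR x y
    simp only [← ofReal_norm, hg]
    rw [← ENNReal.ofReal_mul hH, ← ENNReal.ofReal_ofNat, ← ENNReal.ofReal_mul (by norm_num)]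
    apply ENNReal.ofReal_le_ofReal
    rw [norm_mul, norm_mul, norm_mul, ← Complex.ofReal_sub, Complex.norm_real, Complex.norm_real,
      Real.norm_eq_abs, Real.norm_eq_abs, abs_of_pos hW]
    calc _ ≤ _ := mul_le_mul_of_nonneg_right this (norm_nonneg _)
      _ = _ := by ring
  have hSch := aux_schur (β := |b|) (c := 2 * Real.pi) (abs_nonneg b) hb
    (by have := Real.pi_pos; positivity) hgm
  have sq : ∀ a c : ℝ≥0∞, (a + c) ^ 2 ≤ 2 * a ^ 2 + 2 * c ^ 2 := by
    intro a c
    have := ENNReal.rpow_add_le_mul_rpow_add_rpow a c (p := 2) (by norm_num)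
    norm_num at this
    rwa [mul_add] at this
  have hGm : Measurable fun x => ‖𝓕 (I.indicator G) x‖ₑ := (aux_fourier_cont hGi).measurable.enorm
  calc _ ≤ ∫⁻ x, (2 * ‖𝓕 (I.indicator G) x‖ₑ ^ 2 + 2 * 2 ^ 2 * T x ^ 2) := by
        refine lintegral_mono fun x => ?_
        refine (pow_le_pow_left' (C1 x) 2).trans ((sq _ _).trans (le_of_eq ?_))
        rw [mul_pow, mul_assoc]
    _ = 2 * (∫⁻ x, ‖𝓕 (I.indicator G) x‖ₑ ^ 2) + 2 * 2 ^ 2 * ∫⁻ x, T x ^ 2 := by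
        rw [lintegral_add_left (by fun_prop), lintegral_const_mul' _ _ (by norm_num),
          lintegral_const_mul' _ _ (by finiteness)]
    _ ≤ 2 * (∫⁻ x, ‖g x‖ₑ ^ 2) + 2 * 2 ^ 2 *
        (ENNReal.ofReal (4 / (2 * Real.pi * (1/2 - |b|))) ^ 2 * ∫⁻ x, ‖g x‖ₑ ^ 2) := by
        gcongr
    _ = _ := by
        unfold auxC
        change _ = (2 + 2 * (2 * ENNReal.ofReal (4 / (2 * Real.pi * (1/2 - |b|)))) ^ 2) *
          (∫⁻ x, ‖g x‖ₑ ^ 2)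
        ring

lemma aux_one_dim {b : ℝ} (hb : |b| < 1/2) {I : Set ℝ} (hI : I.OrdConnected)
    {w : ℝ → ℂ} (hwc : Continuous w) (hw : Integrable w)
    (hf : Integrable (𝓕 w)) (hg1 : Integrable (fun x => (auxW b x : ℂ) * 𝓕 w x))
    (hg2 : MemLp (fun x => (auxW b x : ℂ) * 𝓕 w x) 2) :
    ∫⁻ x, ‖(auxW b x : ℂ) * 𝓕 (I.indicator w) x‖ₑ ^ 2 ≤
      auxC b * ∫⁻ x, ‖(auxW b x : ℂ) * 𝓕 w x‖ₑ ^ 2 := by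
  set J : ℕ → Set ℝ := fun n => I ∩ Set.Icc (-(n:ℝ)) n with hJ
  have hJo : ∀ n, (J n).OrdConnected := fun n => hI.inter Set.ordConnected_Icc
  have hB : ∀ n, ∫⁻ x, ‖(auxW b x : ℂ) * 𝓕 ((J n).indicator w) x‖ₑ ^ 2 ≤
      auxC b * ∫⁻ x, ‖(auxW b x : ℂ) * 𝓕 w x‖ₑ ^ 2 := fun n =>
    aux_one_dim_bdd hb (hJo n) (R := n) Set.inter_subset_right hwc hw hf hg1 hg2
  have hlim : ∀ x, Filter.Tendsto (fun n => 𝓕 ((J n).indicator w) x) Filter.atTop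
      (nhds (𝓕 (I.indicator w) x)) := by
    intro x
    simp_rw [Real.fourier_real_eq_integral_exp_smul]
    refine tendsto_integral_of_dominated_convergence (fun t => ‖w t‖) ?_ hw.norm ?_ ?_
    · intro n
      have := (hw.indicator (hJo n).measurableSet).aestronglyMeasurable
      have h2 : AEStronglyMeasurable
          (fun t : ℝ => Complex.exp (((-2 * Real.pi * t * x : ℝ) : ℂ) * Complex.I)) volume := by
        apply Continuous.aestronglyMeasurable; fun_prop
      exact h2.smul this
    · intro n
      refine Filter.Eventually.of_forall fun t => ?_
      rw [norm_smul, Complex.norm_exp_ofReal_mul_I, one_mul]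
      exact norm_indicator_le_norm_self _ _
    · refine Filter.Eventually.of_forall fun t => ?_
      refine tendsto_const_nhds.congr' ?_
      filter_upwards [Filter.eventually_ge_atTop ⌈|t|⌉₊] with n hn
      have hn' : |t| ≤ n := (Nat.le_ceil _).trans (by exact_mod_cast hn)
      have : t ∈ J n ↔ t ∈ I := ⟨fun h => h.1, fun h => ⟨h, abs_le.1 hn'⟩⟩
      by_cases ht : t ∈ I
      · rw [Set.indicator_of_mem ht, Set.indicator_of_mem (this.2 ht)]
      · rw [Set.indicator_of_notMem ht, Set.indicator_of_notMem (fun h => ht (this.1 h))]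
  have hlim2 : ∀ x, Filter.Tendsto (fun n => ‖(auxW b x : ℂ) * 𝓕 ((J n).indicator w) x‖ₑ ^ 2)
      Filter.atTop (nhds (‖(auxW b x : ℂ) * 𝓕 (I.indicator w) x‖ₑ ^ 2)) := fun x =>
    ((ENNReal.continuous_pow 2).tendsto _).comp
      ((continuous_enorm.tendsto _).comp ((hlim x).const_mul _))
  calc _ = ∫⁻ x, Filter.liminf (fun n => ‖(auxW b x : ℂ) * 𝓕 ((J n).indicator w) x‖ₑ ^ 2)
        Filter.atTop := by
        congr 1; ext x; exact (hlim2 x).liminf_eq.symm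
    _ ≤ Filter.liminf (fun n => ∫⁻ x, ‖(auxW b x : ℂ) * 𝓕 ((J n).indicator w) x‖ₑ ^ 2)
        Filter.atTop := by
        refine lintegral_liminf_le fun n => ?_
        have h1 := (aux_fourier_cont (hw.indicator (hJo n).measurableSet)).measurable
        have h2 := auxW_meas b
        fun_prop
    _ ≤ _ := Filter.liminf_le_of_frequently_le' (Filter.Frequently.of_forall hB)

/-- Space-time Fourier transform of the statement's convention. -/
noncomputable def auxU (v : ℝ × ℝ → ℂ) (p : ℝ × ℝ) : ℂ :=
  ∫ q : ℝ × ℝ, Complex.exp (-Complex.I * (q.1 * p.1 + q.2 * p.2)) * v q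

lemma aux_exp_norm (a c : ℝ) (d e : ℝ) :
    ‖Complex.exp (-Complex.I * (a * c + d * e))‖ = 1 := by
  have : -Complex.I * ((a:ℂ) * c + d * e) = ((-(a * c + d * e) : ℝ) : ℂ) * Complex.I := by
    push_cast; ring
  rw [this]; exact Complex.norm_exp_ofReal_mul_I _

lemma aux_schwartz_bound (E : Type*) [NormedAddCommGroup E] [NormedSpace ℝ E]
    (u : SchwartzMap E ℂ) (k : ℕ) : ∃ K, ∀ p, (1 + ‖p‖) ^ k * ‖u p‖ ≤ K := by
  refine ⟨2 ^ k * (Finset.Iic ((k, 0) : ℕ × ℕ)).sup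
    (fun m => SchwartzMap.seminorm ℝ m.1 m.2) u, fun p => ?_⟩
  have := SchwartzMap.one_add_le_sup_seminorm_apply (𝕜 := ℝ) (m := (k, 0)) le_rfl le_rfl u p
  simpa only [norm_iteratedFDeriv_zero] using this

lemma aux_U_decay (u : SchwartzMap (ℝ × ℝ) ℂ) :
    ∃ K, ∀ p : ℝ × ℝ, (1 + |p.2|) ^ 2 * ‖auxU u p‖ ≤ K := by
  set e := WithLp.prodContinuousLinearEquiv 2 ℝ ℝ ℝ with he
  set v : SchwartzMap (WithLp 2 (ℝ × ℝ)) ℂ := SchwartzMap.compCLMOfContinuousLinearEquiv ℝ e u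
    with hv
  obtain ⟨K, hK⟩ := aux_schwartz_bound _ (𝓕 v) 2
  have hpi := Real.pi_pos
  have hpi3 := Real.pi_gt_three
  refine ⟨(2 * Real.pi) ^ 2 * K, fun p => ?_⟩
  set P : WithLp 2 (ℝ × ℝ) := WithLp.toLp 2 ((2 * Real.pi)⁻¹ * p.1, (2 * Real.pi)⁻¹ * p.2) with hP
  have h1 : (𝓕 v) P = auxU u p := by
    rw [SchwartzMap.fourier_coe, Real.fourier_eq']
    unfold auxU
    rw [← (WithLp.volume_preserving_toLp ℝ ℝ).integral_comp
      (MeasurableEquiv.toLp 2 (ℝ × ℝ)).measurableEmbedding]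
    congr 1; ext q
    have hvq : v (WithLp.toLp 2 q) = u q := rfl
    rw [hvq, smul_eq_mul, WithLp.prod_inner_apply]
    congr 2
    simp [hP]
    field_simp
  have h2 : |(2 * Real.pi)⁻¹ * p.2| ≤ ‖P‖ := WithLp.norm_snd_le (p := 2) ℝ P
  rw [abs_mul, abs_of_pos (by positivity : 0 < (2 * Real.pi)⁻¹)] at h2
  have h3 : 1 + |p.2| ≤ 2 * Real.pi * (1 + ‖P‖) := by
    have : |p.2| = 2 * Real.pi * ((2 * Real.pi)⁻¹ * |p.2|) := by field_simp
    rw [this]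
    nlinarith
  have := hK P
  rw [h1] at this
  calc _ ≤ (2 * Real.pi * (1 + ‖P‖)) ^ 2 * ‖auxU u p‖ := by gcongr
    _ = (2 * Real.pi) ^ 2 * ((1 + ‖P‖) ^ 2 * ‖auxU u p‖) := by ring
    _ ≤ _ := by gcongr

/-- Time profile at fixed spatial frequency. -/
noncomputable def auxw (u : SchwartzMap (ℝ × ℝ) ℂ) (ξ t : ℝ) : ℂ :=
  ∫ x : ℝ, Complex.exp (-Complex.I * (x * ξ + t * ((ξ ^ 3 : ℝ) : ℂ))) * u (x, t)

lemma auxw_cont (u : SchwartzMap (ℝ × ℝ) ℂ) (ξ : ℝ) : Continuous (auxw u ξ) := by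
  obtain ⟨K, hK⟩ := aux_schwartz_bound _ u 2
  have hu := u.continuous
  unfold auxw
  refine continuous_of_dominated (bound := fun x => K * (1 + x ^ 2)⁻¹) ?_ ?_ ?_ ?_
  · intro t
    apply Continuous.aestronglyMeasurable; fun_prop
  · intro t
    refine Filter.Eventually.of_forall fun x => ?_
    rw [norm_mul, aux_exp_norm, one_mul, ← div_eq_mul_inv, le_div_iff₀ (by positivity)]
    have h1 : |x| ≤ ‖(x, t)‖ := norm_fst_le (x, t)
    calc _ = (1 + |x| ^ 2) * ‖u (x, t)‖ := by rw [sq_abs]; ring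
      _ ≤ (1 + ‖(x, t)‖) ^ 2 * ‖u (x, t)‖ := by
        gcongr
        nlinarith [abs_nonneg x]
      _ ≤ K := hK _
  · exact integrable_inv_one_add_sq.const_mul K
  · refine Filter.Eventually.of_forall fun x => ?_
    fun_prop

lemma aux_prod_int {v : ℝ × ℝ → ℂ} (hv : Integrable v) (p : ℝ × ℝ) :
    Integrable (fun q : ℝ × ℝ => Complex.exp (-Complex.I * (q.1 * p.1 + q.2 * p.2)) * v q) := by
  refine Integrable.bdd_mul (c := 1) hv ?_ ?_
  · apply Continuous.aestronglyMeasurable; fun_prop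
  · exact Filter.Eventually.of_forall fun q => (aux_exp_norm _ _ _ _).le

lemma auxw_int (u : SchwartzMap (ℝ × ℝ) ℂ) (ξ : ℝ) : Integrable (auxw u ξ) :=
  (aux_prod_int u.integrable (ξ, ξ ^ 3)).integral_prod_right

lemma auxw_fourier (u : SchwartzMap (ℝ × ℝ) ℂ) {I : Set ℝ} (hI : MeasurableSet I) (ξ η : ℝ) :
    𝓕 (I.indicator (auxw u ξ)) η =
      auxU (Set.indicator {r : ℝ × ℝ | r.2 ∈ I} (fun r => u r)) (ξ, 2 * Real.pi * η + ξ ^ 3) := by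
  have hm : MeasurableSet {r : ℝ × ℝ | r.2 ∈ I} := measurable_snd hI
  have hint : Integrable (Set.indicator {r : ℝ × ℝ | r.2 ∈ I} (fun r => u r)) :=
    u.integrable.indicator hm
  unfold auxU
  rw [Measure.volume_eq_prod, integral_prod_symm]
  swap
  · exact aux_prod_int hint (ξ, 2 * Real.pi * η + ξ ^ 3)
  rw [Real.fourier_real_eq_integral_exp_smul]
  congr 1; ext t
  by_cases ht : t ∈ I
  · rw [Set.indicator_of_mem ht, auxw, smul_eq_mul, ← integral_const_mul]
    congr 1; ext x
    rw [Set.indicator_of_mem (by exact ht), ← mul_assoc, ← Complex.exp_add]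
    congr 2; push_cast; ring
  · rw [Set.indicator_of_notMem ht, smul_zero]
    symm
    apply integral_eq_zero_of_ae
    refine Filter.Eventually.of_forall fun x => ?_
    simp only
    rw [Set.indicator_of_notMem (by exact ht), mul_zero]; rfl

lemma auxw_fourier' (u : SchwartzMap (ℝ × ℝ) ℂ) (ξ η : ℝ) :
    𝓕 (auxw u ξ) η = auxU u (ξ, 2 * Real.pi * η + ξ ^ 3) := by
  have := auxw_fourier u MeasurableSet.univ ξ η
  simpa using this

lemma aux_decay_int {b : ℝ} (hb : |b| < 1/2) {f : ℝ → ℂ} (hf : Continuous f) {K : ℝ}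
    (hK : ∀ η, (1 + 2 * Real.pi * |η|) ^ 2 * ‖f η‖ ≤ K) :
    Integrable (fun x => (auxW b x : ℂ) * f x) ∧ MemLp (fun x => (auxW b x : ℂ) * f x) 2 := by
  have hpi := Real.pi_pos
  have hpi3 := Real.pi_gt_three
  have hK0 : 0 ≤ K := le_trans (by positivity) (hK 0)
  have hWm := auxW_meas b
  have hm : AEStronglyMeasurable (fun x => (auxW b x : ℂ) * f x) volume := by
    have := hf.measurable
    exact Measurable.aestronglyMeasurable (by fun_prop)
  have bd : ∀ x, ‖(auxW b x : ℂ) * f x‖ ≤ K * (1 + ‖x‖) ^ (-(3/2) : ℝ) := by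
    intro x
    have hM : 1 ≤ 1 + 2 * Real.pi * |x| := by have : 0 ≤ 2 * Real.pi * |x| := by positivity
                                              linarith
    have hM0 : 0 < 1 + 2 * Real.pi * |x| := by linarith
    rw [norm_mul, Complex.norm_real, Real.norm_eq_abs, abs_of_pos (auxW_pos b x)]
    have h1 : ‖f x‖ ≤ K * (1 + 2 * Real.pi * |x|) ^ (-2 : ℝ) := by
      rw [Real.rpow_neg hM0.le, ← div_eq_mul_inv, le_div_iff₀ (by positivity), mul_comm]
      have := hK x
      rw [← Real.rpow_natCast] at this
      exact_mod_cast this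
    have h2 : auxW b x ≤ (1 + 2 * Real.pi * |x|) ^ (1/2 : ℝ) :=
      Real.rpow_le_rpow_of_exponent_le hM ((le_abs_self b).trans hb.le)
    calc _ ≤ (1 + 2 * Real.pi * |x|) ^ (1/2 : ℝ) * (K * (1 + 2 * Real.pi * |x|) ^ (-2 : ℝ)) := by
          gcongr
      _ = K * (1 + 2 * Real.pi * |x|) ^ (-(3/2) : ℝ) := by
          rw [mul_left_comm, ← Real.rpow_add hM0]; norm_num
      _ ≤ _ := by
          rw [Real.norm_eq_abs]
          refine mul_le_mul_of_nonneg_left ?_ hK0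
          apply Real.rpow_le_rpow_of_nonpos (by positivity) _ (by norm_num)
          nlinarith [abs_nonneg x]
  have hi : Integrable (fun x => (auxW b x : ℂ) * f x) := by
    refine Integrable.mono' ((integrable_one_add_norm (E := ℝ) (r := 3/2) (by norm_num)).const_mul K) hm ?_
    exact Filter.Eventually.of_forall bd
  refine ⟨hi, ?_⟩
  rw [memLp_two_iff_integrable_sq_norm hm]
  simp_rw [sq]
  refine Integrable.bdd_mul (c := K) hi.norm hm.norm ?_
  refine Filter.Eventually.of_forall fun x => ?_
  rw [norm_norm]
  refine (bd x).trans ?_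
  have : (1 + ‖x‖) ^ (-(3/2) : ℝ) ≤ 1 :=
    Real.rpow_le_one_of_one_le_of_nonpos (by linarith [norm_nonneg x]) (by norm_num)
  nlinarith

lemma aux_slice {b : ℝ} (hb : |b| < 1/2) {I : Set ℝ} (hI : I.OrdConnected)
    (u : SchwartzMap (ℝ × ℝ) ℂ) (ξ : ℝ) :
    ∫⁻ η, ‖(auxW b η : ℂ) * auxU (Set.indicator {r : ℝ × ℝ | r.2 ∈ I} (fun r => u r))
        (ξ, 2 * Real.pi * η + ξ ^ 3)‖ₑ ^ 2 ≤
      auxC b * ∫⁻ η, ‖(auxW b η : ℂ) * auxU u (ξ, 2 * Real.pi * η + ξ ^ 3)‖ₑ ^ 2 := by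
  have hpi := Real.pi_pos
  obtain ⟨K, hK⟩ := aux_U_decay u
  have hc : Continuous (𝓕 (auxw u ξ)) := aux_fourier_cont (auxw_int u ξ)
  have hd : ∀ η, (1 + 2 * Real.pi * |η|) ^ 2 * ‖𝓕 (auxw u ξ) η‖ ≤ (1 + |ξ ^ 3|) ^ 2 * K := by
    intro η
    rw [auxw_fourier']
    have h1 := hK (ξ, 2 * Real.pi * η + ξ ^ 3)
    simp only at h1
    have h2 : 1 + 2 * Real.pi * |η| ≤ (1 + |ξ ^ 3|) * (1 + |2 * Real.pi * η + ξ ^ 3|) := by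
      have : 2 * Real.pi * |η| ≤ |2 * Real.pi * η + ξ ^ 3| + |ξ ^ 3| := by
        have e : 2 * Real.pi * |η| = |(2 * Real.pi * η + ξ ^ 3) - ξ ^ 3| := by
          rw [add_sub_cancel_right, abs_mul, abs_of_pos (by positivity : 0 < 2 * Real.pi)]
        rw [e]; exact abs_sub _ _
      nlinarith [abs_nonneg (ξ ^ 3), abs_nonneg (2 * Real.pi * η + ξ ^ 3),
        mul_nonneg (abs_nonneg (ξ ^ 3)) (abs_nonneg (2 * Real.pi * η + ξ ^ 3))]
    calc _ ≤ ((1 + |ξ ^ 3|) * (1 + |2 * Real.pi * η + ξ ^ 3|)) ^ 2 *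
          ‖auxU u (ξ, 2 * Real.pi * η + ξ ^ 3)‖ := by gcongr
      _ = (1 + |ξ ^ 3|) ^ 2 * ((1 + |2 * Real.pi * η + ξ ^ 3|) ^ 2 *
          ‖auxU u (ξ, 2 * Real.pi * η + ξ ^ 3)‖) := by ring
      _ ≤ _ := by gcongr
  obtain ⟨i1, i2⟩ := aux_decay_int hb hc hd
  have i0 : Integrable (𝓕 (auxw u ξ)) := by
    have := (aux_decay_int (b := 0) (by norm_num) hc hd).1
    simpa [auxW] using this
  have := aux_one_dim hb hI (auxw_cont u ξ) (auxw_int u ξ) i0 i1 i2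
  simp_rw [auxw_fourier u hI.measurableSet, auxw_fourier'] at this
  exact this

lemma auxU_meas {v : ℝ × ℝ → ℂ} (hv : Integrable v) : Measurable (auxU v) := by
  unfold auxU
  apply Continuous.measurable
  refine continuous_of_dominated (bound := fun q => ‖v q‖) ?_ ?_ hv.norm ?_
  · intro p; exact (aux_prod_int hv p).aestronglyMeasurable
  · intro p
    refine Filter.Eventually.of_forall fun q => ?_
    rw [norm_mul, aux_exp_norm, one_mul]
  · refine Filter.Eventually.of_forall fun q => ?_
    fun_prop

/-- The statement's squared norm. -/
noncomputable def auxN (σ s b : ℝ) (v : ℝ × ℝ → ℂ) : ℝ≥0∞ :=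
  ∫⁻ p : ℝ × ℝ, ENNReal.ofReal ((Real.cosh (σ * |p.1|)) ^ 2 * (1 + |p.1|) ^ (2 * s) *
    (1 + |p.2 - p.1 ^ 3|) ^ (2 * b)) * (‖auxU v p‖₊ : ℝ≥0∞) ^ 2

lemma auxN_eq (σ s b : ℝ) {v : ℝ × ℝ → ℂ} (hv : Integrable v) :
    auxN σ s b v = ∫⁻ ξ, ENNReal.ofReal ((Real.cosh (σ * |ξ|)) ^ 2 * (1 + |ξ|) ^ (2 * s) *
      (2 * Real.pi)) * ∫⁻ η, ‖(auxW b η : ℂ) * auxU v (ξ, 2 * Real.pi * η + ξ ^ 3)‖ₑ ^ 2 := by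
  have hpi := Real.pi_pos
  have hU := auxU_meas hv
  unfold auxN
  rw [Measure.volume_eq_prod, lintegral_prod _ (by fun_prop)]
  congr 1; ext ξ
  have key := aux_lintegral_affine (fun τ => ENNReal.ofReal ((1 + |τ - ξ ^ 3|) ^ (2 * b)) *
    (‖auxU v (ξ, τ)‖₊ : ℝ≥0∞) ^ 2) (c := 2 * Real.pi) (by positivity) (ξ ^ 3)
  have e1 : ∀ η, ‖(auxW b η : ℂ) * auxU v (ξ, 2 * Real.pi * η + ξ ^ 3)‖ₑ ^ 2 =
      ENNReal.ofReal ((1 + |2 * Real.pi * η + ξ ^ 3 - ξ ^ 3|) ^ (2 * b)) *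
      (‖auxU v (ξ, 2 * Real.pi * η + ξ ^ 3)‖₊ : ℝ≥0∞) ^ 2 := by
    intro η
    rw [enorm_mul, mul_pow, add_sub_cancel_right, abs_mul,
      abs_of_pos (by positivity : 0 < 2 * Real.pi)]
    congr 1
    rw [← ofReal_norm, Complex.norm_real, Real.norm_eq_abs, abs_of_pos (auxW_pos b η),
      ← ENNReal.ofReal_pow (auxW_pos b η).le, auxW, ← Real.rpow_mul_natCast (by positivity)]
    congr 2; push_cast; ring
  simp_rw [e1]
  rw [key, ENNReal.ofReal_mul (by positivity), mul_assoc, ← mul_assoc (ENNReal.ofReal (2 * Real.pi)),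
    ← ENNReal.ofReal_mul (by positivity), mul_inv_cancel₀ (by positivity), ENNReal.ofReal_one, one_mul,
    ← lintegral_const_mul _ (by fun_prop)]
  congr 1; ext τ
  rw [← mul_assoc, ← ENNReal.ofReal_mul (by positivity)]

lemma auxN_le {b : ℝ} (hb : |b| < 1/2) (σ s : ℝ) {I : Set ℝ} (hI : I.OrdConnected)
    (u : SchwartzMap (ℝ × ℝ) ℂ) :
    auxN σ s b (Set.indicator {r : ℝ × ℝ | r.2 ∈ I} (fun r => u r)) ≤ auxC b * auxN σ s b u := by
  have hm : MeasurableSet {r : ℝ × ℝ | r.2 ∈ I} := measurable_snd hI.measurableSet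
  have hC : auxC b ≠ ⊤ := by unfold auxC; finiteness
  rw [auxN_eq σ s b (u.integrable.indicator hm), auxN_eq σ s b u.integrable,
    ← lintegral_const_mul' _ _ hC]
  refine lintegral_mono fun ξ => ?_
  rw [mul_left_comm (auxC b)]
  exact mul_le_mul_right (aux_slice hb hI u ξ) _



/-- Lemma 2.1 of the paper: for `σ ≥ 0`, `s ∈ ℝ`, `−1/2 < b < 1/2`, multiplication by
the characteristic function of a time interval is bounded on `X^{σ,s,b}` (Bourgain norm
with hyperbolic-cosine weight), with constant depending only on `b`. -/
theorem chi_interval_bounded (b : ℝ) (hb : b ∈ Set.Ioo (-(1 / 2) : ℝ) (1 / 2)) :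
    ∃ C > 0, ∀ (σ s : ℝ), 0 ≤ σ → ∀ I : Set ℝ, I.OrdConnected →
      ∀ u : SchwartzMap (ℝ × ℝ) ℂ,
      (∫⁻ p : ℝ × ℝ,
          ENNReal.ofReal ((Real.cosh (σ * |p.1|)) ^ 2 * (1 + |p.1|) ^ (2 * s) *
            (1 + |p.2 - p.1 ^ 3|) ^ (2 * b)) *
          (‖∫ q : ℝ × ℝ, Complex.exp (-Complex.I * (q.1 * p.1 + q.2 * p.2)) *
              Set.indicator {r : ℝ × ℝ | r.2 ∈ I} (fun r => u r) q‖₊ : ℝ≥0∞) ^ 2) ^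
        ((1 : ℝ) / 2) ≤
      ENNReal.ofReal C *
      (∫⁻ p : ℝ × ℝ,
          ENNReal.ofReal ((Real.cosh (σ * |p.1|)) ^ 2 * (1 + |p.1|) ^ (2 * s) *
            (1 + |p.2 - p.1 ^ 3|) ^ (2 * b)) *
          (‖∫ q : ℝ × ℝ, Complex.exp (-Complex.I * (q.1 * p.1 + q.2 * p.2)) * u q‖₊ :
            ℝ≥0∞) ^ 2) ^ ((1 : ℝ) / 2) := by
  have hb' : |b| < 1/2 := abs_lt.2 ⟨by linarith [hb.1], hb.2⟩
  have hC : auxC b ≠ ⊤ := by unfold auxC; finiteness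
  have hC0 : auxC b ≠ 0 := by unfold auxC; simp
  have hpos : 0 < (auxC b).toReal := ENNReal.toReal_pos hC0 hC
  refine ⟨(auxC b).toReal ^ ((1:ℝ)/2), by positivity, ?_⟩
  intro σ s _ I hI u
  have h := auxN_le hb' σ s hI u
  have h2 := ENNReal.rpow_le_rpow h (by norm_num : (0:ℝ) ≤ 1/2)
  rw [ENNReal.mul_rpow_of_nonneg _ _ (by norm_num)] at h2
  rw [← ENNReal.ofReal_rpow_of_pos hpos, ENNReal.ofReal_toReal hC]
  exact h2
end

section
/- Let s > 3/4. There exists a constant C > 0 such that for every T with 0 < T ≤ 1 and every Schwartz function u₀ : ℝ → ℂ one has ( ∫_ℝ ( sup_{|t| ≤ T} |(e^{−t∂_x³}u₀)(x)| )² dx )^{1/2} ≤ C ( ∫_ℝ (1+|ξ|)^{2s} |û₀(ξ)|² dξ )^{1/2}. -/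
open MeasureTheory ENNReal

/-- phase -/
noncomputable def airyPh (x t ξ : ℝ) : ℂ :=
  Complex.exp (Complex.I * ((x : ℂ) * ξ + (t : ℂ) * (ξ : ℂ) ^ 3))

lemma airyPh_norm (x t ξ : ℝ) : ‖airyPh x t ξ‖ = 1 := by
  have : airyPh x t ξ = Complex.exp (((x * ξ + t * ξ ^ 3 : ℝ) : ℂ) * Complex.I) := by
    unfold airyPh; congr 1; push_cast; ring
  rw [this, Complex.norm_exp_ofReal_mul_I]

lemma airyPh_cont : Continuous (fun p : ℝ × ℝ × ℝ => airyPh p.1 p.2.1 p.2.2) := by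
  unfold airyPh; fun_prop

lemma airyPh_mul_conj (x t y r ξ : ℝ) :
    airyPh x t ξ * (starRingEnd ℂ) (airyPh y r ξ) = airyPh (x - y) (t - r) ξ := by
  unfold airyPh
  rw [← Complex.exp_conj, ← Complex.exp_add]
  congr 1
  simp only [map_mul, map_add, map_pow, Complex.conj_I, Complex.conj_ofReal]
  push_cast; ring

lemma airyPh_conj (x t ξ : ℝ) :
    (starRingEnd ℂ) (airyPh x t ξ) = airyPh (-x) (-t) ξ := by
  unfold airyPh
  rw [← Complex.exp_conj]
  congr 1
  simp only [map_mul, map_add, map_pow, Complex.conj_I, Complex.conj_ofReal]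
  push_cast; ring

lemma airyPh_neg (x t ξ : ℝ) : airyPh x t (-ξ) = airyPh (-x) (-t) ξ := by
  unfold airyPh
  congr 1
  push_cast; ring

lemma airyPh_hasDerivAt (x t ξ : ℝ) :
    HasDerivAt (airyPh x t) (airyPh x t ξ * (Complex.I * ((x + 3 * t * ξ ^ 2 : ℝ) : ℂ))) ξ := by
  unfold airyPh
  have h1 : HasDerivAt (fun z : ℂ => Complex.I * ((x : ℂ) * z + (t : ℂ) * z ^ 3))
      (Complex.I * ((x : ℂ) * 1 + (t : ℂ) * (3 * (ξ:ℂ) ^ 2))) (ξ : ℂ) := by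
    refine HasDerivAt.const_mul _ (((hasDerivAt_id _).const_mul _).add ?_)
    exact ((hasDerivAt_pow 3 (ξ:ℂ)).const_mul (t:ℂ)).congr_deriv (by norm_num)
  have := h1.cexp.comp_ofReal
  convert this using 1
  push_cast; ring

/-- Integration by parts, exact. -/
lemma airy_ibp (x t a b : ℝ) (f f' : ℝ → ℝ)
    (hf : ∀ ξ ∈ Set.uIcc a b, HasDerivAt f (f' ξ) ξ)
    (hf' : ContinuousOn f' (Set.uIcc a b))
    (hne : ∀ ξ ∈ Set.uIcc a b, x + 3 * t * ξ ^ 2 ≠ 0) :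
    Complex.I * ∫ ξ in a..b, airyPh x t ξ * (f ξ : ℂ) =
      airyPh x t b * ((f b / (x + 3 * t * b ^ 2) : ℝ) : ℂ)
      - airyPh x t a * ((f a / (x + 3 * t * a ^ 2) : ℝ) : ℂ)
      - (∫ ξ in a..b, airyPh x t ξ * ((f' ξ / (x + 3 * t * ξ ^ 2) : ℝ) : ℂ))
      + ∫ ξ in a..b, airyPh x t ξ * ((f ξ * (6 * t * ξ) / (x + 3 * t * ξ ^ 2) ^ 2 : ℝ) : ℂ) := by
  have hfc : ContinuousOn f (Set.uIcc a b) := fun ξ h => (hf ξ h).continuousAt.continuousWithinAt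
  have hph : Continuous (airyPh x t) := by unfold airyPh; fun_prop
  have hpc : ContinuousOn (fun ξ : ℝ => x + 3 * t * ξ ^ 2) (Set.uIcc a b) := by fun_prop
  have c1 : ContinuousOn (fun ξ => airyPh x t ξ * (f ξ : ℂ)) (Set.uIcc a b) :=
    hph.continuousOn.mul (Complex.continuous_ofReal.comp_continuousOn hfc)
  have c1' : ContinuousOn (fun ξ => Complex.I * (airyPh x t ξ * (f ξ : ℂ))) (Set.uIcc a b) :=
    continuousOn_const.mul c1
  have c2 : ContinuousOn (fun ξ => airyPh x t ξ * ((f' ξ / (x + 3 * t * ξ ^ 2) : ℝ) : ℂ))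
      (Set.uIcc a b) :=
    hph.continuousOn.mul (Complex.continuous_ofReal.comp_continuousOn (hf'.div hpc hne))
  have c3 : ContinuousOn (fun ξ => airyPh x t ξ *
      ((f ξ * (6 * t * ξ) / (x + 3 * t * ξ ^ 2) ^ 2 : ℝ) : ℂ)) (Set.uIcc a b) :=
    hph.continuousOn.mul (Complex.continuous_ofReal.comp_continuousOn
      ((hfc.mul (by fun_prop)).div (hpc.pow 2) (fun ξ h => pow_ne_zero 2 (hne ξ h))))
  have c4 : ContinuousOn (fun ξ => Complex.I * (airyPh x t ξ * (f ξ : ℂ)) +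
      airyPh x t ξ * ((f' ξ / (x + 3 * t * ξ ^ 2) : ℝ) : ℂ)) (Set.uIcc a b) := c1'.add c2
  have key := intervalIntegral.integral_eq_sub_of_hasDerivAt (a := a) (b := b)
    (f := fun ξ => airyPh x t ξ * ((f ξ / (x + 3 * t * ξ ^ 2) : ℝ) : ℂ))
    (f' := fun ξ => Complex.I * (airyPh x t ξ * (f ξ : ℂ)) +
      airyPh x t ξ * ((f' ξ / (x + 3 * t * ξ ^ 2) : ℝ) : ℂ) -
      airyPh x t ξ * ((f ξ * (6 * t * ξ) / (x + 3 * t * ξ ^ 2) ^ 2 : ℝ) : ℂ))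
    (by
      intro ξ hξ
      have hn := hne ξ hξ
      have hp : HasDerivAt (fun ξ : ℝ => x + 3 * t * ξ ^ 2) (6 * t * ξ) ξ := by
        exact (((hasDerivAt_pow 2 ξ).const_mul (3 * t)).const_add x).congr_deriv
          (by norm_num; ring)
      have hd := ((hf ξ hξ).div hp hn).ofReal_comp
      refine ((airyPh_hasDerivAt x t ξ).mul hd).congr_deriv ?_
      have hn' : ((x : ℂ) + 3 * t * ξ ^ 2) ≠ 0 := by exact_mod_cast hn
      try simp only [Pi.div_apply]
      push_cast
      field_simp
      ring)
    (c4.sub c3).intervalIntegrable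
  rw [intervalIntegral.integral_sub c4.intervalIntegrable c3.intervalIntegrable,
    intervalIntegral.integral_add c1'.intervalIntegrable
      c2.intervalIntegrable, intervalIntegral.integral_const_mul] at key
  rw [← key]; ring

lemma airy_ph_int_le (x t a b : ℝ) (hab : a ≤ b) (f : ℝ → ℝ) :
    ‖∫ ξ in a..b, airyPh x t ξ * (f ξ : ℂ)‖ ≤ ∫ ξ in a..b, |f ξ| := by
  refine (intervalIntegral.norm_integral_le_integral_norm hab).trans (le_of_eq ?_)
  congr 1; ext ξ
  rw [norm_mul, airyPh_norm, one_mul, Complex.norm_real, Real.norm_eq_abs]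

lemma airy_ibp_norm (x t a b l W : ℝ) (hab : a ≤ b) (f f' : ℝ → ℝ)
    (hf : ∀ ξ ∈ Set.uIcc a b, HasDerivAt f (f' ξ) ξ)
    (hf' : ContinuousOn f' (Set.uIcc a b)) (hl : 0 < l)
    (hne : ∀ ξ ∈ Set.uIcc a b, l ≤ |x + 3 * t * ξ ^ 2|) (ha : |f a| ≤ W) (hb : |f b| ≤ W) :
    ‖∫ ξ in a..b, airyPh x t ξ * (f ξ : ℂ)‖ ≤ 2 * W / l + (∫ ξ in a..b, |f' ξ|) / l
      + ∫ ξ in a..b, |f ξ * (6 * t * ξ) / (x + 3 * t * ξ ^ 2) ^ 2| := by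
  have hne' : ∀ ξ ∈ Set.uIcc a b, x + 3 * t * ξ ^ 2 ≠ 0 := fun ξ h =>
    abs_pos.mp (hl.trans_le (hne ξ h))
  have key := airy_ibp x t a b f f' hf hf' hne'
  have hn : ‖∫ ξ in a..b, airyPh x t ξ * (f ξ : ℂ)‖ =
    ‖Complex.I * ∫ ξ in a..b, airyPh x t ξ * (f ξ : ℂ)‖ := by simp
  have hbd : ∀ ξ ∈ Set.uIcc a b, |f ξ| ≤ W →
      ‖airyPh x t ξ * ((f ξ / (x + 3 * t * ξ ^ 2) : ℝ) : ℂ)‖ ≤ W / l := by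
    intro ξ h hw
    rw [norm_mul, airyPh_norm, one_mul, Complex.norm_real, Real.norm_eq_abs, abs_div]
    exact div_le_div₀ ((abs_nonneg _).trans hw) hw hl (hne ξ h)
  have h1 := hbd a Set.left_mem_uIcc ha
  have h2 := hbd b Set.right_mem_uIcc hb
  have h3 : ∫ ξ in a..b, |f' ξ / (x + 3 * t * ξ ^ 2)| ≤ (∫ ξ in a..b, |f' ξ|) / l := by
    rw [← intervalIntegral.integral_div]
    refine intervalIntegral.integral_mono_on hab ?_ ?_ ?_
    · exact ((hf'.div (by fun_prop) hne').abs).intervalIntegrable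
    · exact (hf'.abs.div_const l).intervalIntegrable
    · intro ξ hξ
      rw [← Set.uIcc_of_le hab] at hξ
      rw [abs_div]
      exact div_le_div_of_nonneg_left (abs_nonneg _) hl (hne ξ hξ)
  have h4 := airy_ph_int_le x t a b hab (fun ξ => f' ξ / (x + 3 * t * ξ ^ 2))
  have h5 := airy_ph_int_le x t a b hab (fun ξ => f ξ * (6 * t * ξ) / (x + 3 * t * ξ ^ 2) ^ 2)
  rw [hn, key]
  refine (norm_add_le _ _).trans ?_
  refine add_le_add ((norm_sub_le _ _).trans (add_le_add ((norm_sub_le _ _).trans ?_) (h4.trans h3))) h5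
  calc _ ≤ W / l + W / l := add_le_add h2 h1
    _ = 2 * W / l := by ring

/-- the weight -/
noncomputable def airyW (s ξ : ℝ) : ℝ := (1 + ξ ^ 2) ^ (-s)

/-- logarithmic derivative of the weight -/
noncomputable def airyR (s ξ : ℝ) : ℝ := -(2 * s * ξ) / (1 + ξ ^ 2)

/-- derivative of `airyR` -/
noncomputable def airyR' (s ξ : ℝ) : ℝ :=
  (-(2 * s) * (1 + ξ ^ 2) - -(2 * s * ξ) * (2 * ξ)) / (1 + ξ ^ 2) ^ 2

lemma airyW_pos (s ξ : ℝ) : 0 < airyW s ξ := by unfold airyW; positivity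

lemma airyW_neg (s ξ : ℝ) : airyW s (-ξ) = airyW s ξ := by unfold airyW; simp

lemma airyW_hasDerivAt (s ξ : ℝ) : HasDerivAt (airyW s) (airyW s ξ * airyR s ξ) ξ := by
  unfold airyW airyR
  have h0 : (0:ℝ) < 1 + ξ ^ 2 := by positivity
  have h1 : HasDerivAt (fun ξ : ℝ => 1 + ξ ^ 2) (2 * ξ) ξ :=
    ((hasDerivAt_pow 2 ξ).const_add 1).congr_deriv (by norm_num)
  refine (h1.rpow_const (p := -s) (Or.inl h0.ne')).congr_deriv ?_
  rw [Real.rpow_sub_one h0.ne']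
  field_simp

lemma airyR_hasDerivAt (s ξ : ℝ) : HasDerivAt (airyR s) (airyR' s ξ) ξ := by
  unfold airyR airyR'
  have h0 : (0:ℝ) < 1 + ξ ^ 2 := by positivity
  have h1 : HasDerivAt (fun ξ : ℝ => 1 + ξ ^ 2) (2 * ξ) ξ :=
    ((hasDerivAt_pow 2 ξ).const_add 1).congr_deriv (by norm_num)
  have h2 : HasDerivAt (fun ξ : ℝ => -(2 * s * ξ)) (-(2 * s)) ξ :=
    ((hasDerivAt_id ξ).const_mul (2 * s)).neg.congr_deriv (by norm_num)
  exact h2.div h1 h0.ne'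

lemma airyW_cont (s : ℝ) : Continuous (airyW s) :=
  continuous_iff_continuousAt.2 fun ξ => (airyW_hasDerivAt s ξ).continuousAt

lemma airyR_cont (s : ℝ) : Continuous (airyR s) :=
  continuous_iff_continuousAt.2 fun ξ => (airyR_hasDerivAt s ξ).continuousAt

lemma airyR'_cont (s : ℝ) : Continuous (airyR' s) := by
  unfold airyR'
  refine Continuous.div (by fun_prop) (by fun_prop) (fun ξ => by positivity)

lemma airyR_abs (s ξ : ℝ) (h0 : 0 ≤ s) (h1 : s ≤ 1) : |airyR s ξ| ≤ 1 := by
  unfold airyR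
  rw [abs_div, abs_of_pos (show (0:ℝ) < 1 + ξ ^ 2 by positivity), div_le_one (by positivity),
    abs_neg, abs_mul, abs_of_nonneg (by positivity : 0 ≤ 2 * s)]
  nlinarith [sq_nonneg (|ξ| - 1), sq_abs ξ, abs_nonneg ξ]

lemma airyR'_abs (s ξ : ℝ) (h0 : 0 ≤ s) (h1 : s ≤ 1) : |airyR' s ξ| ≤ 2 := by
  unfold airyR'
  rw [abs_div, abs_of_pos (show (0:ℝ) < (1 + ξ ^ 2) ^ 2 by positivity), div_le_iff₀ (by positivity),
    abs_le]
  have : 0 ≤ s * ξ ^ 2 := by positivity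
  have : s * ξ ^ 2 ≤ ξ ^ 2 := by nlinarith [sq_nonneg ξ]
  constructor <;> nlinarith [sq_nonneg ξ, sq_nonneg (ξ ^ 2)]

lemma airyW_anti (s a b : ℝ) (hs : 0 ≤ s) (ha : 0 ≤ a) (hab : a ≤ b) : airyW s b ≤ airyW s a := by
  unfold airyW
  apply Real.rpow_le_rpow_of_nonpos (by positivity) _ (by linarith)
  nlinarith

lemma airyW_le_one (s a : ℝ) (hs : 0 ≤ s) : airyW s a ≤ 1 := by
  unfold airyW
  exact Real.rpow_le_one_of_one_le_of_nonpos (by nlinarith [sq_nonneg a]) (by linarith)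

/-- first-order van der Corput -/
lemma airy_vdc (s x t a b l : ℝ) (hs : 0 ≤ s) (ha : 0 ≤ a) (hab : a ≤ b) (hl : 0 < l)
    (hne : ∀ ξ ∈ Set.Icc a b, l ≤ |x + 3 * t * ξ ^ 2|) :
    ‖∫ ξ in a..b, airyPh x t ξ * (airyW s ξ : ℂ)‖ ≤ 5 * airyW s a / l := by
  rw [← Set.uIcc_of_le hab] at hne
  have hne' : ∀ ξ ∈ Set.uIcc a b, x + 3 * t * ξ ^ 2 ≠ 0 := fun ξ h =>
    abs_pos.mp (hl.trans_le (hne ξ h))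
  have hWc := airyW_cont s
  have hRc := airyR_cont s
  have hpc : ContinuousOn (fun ξ : ℝ => x + 3 * t * ξ ^ 2) (Set.uIcc a b) := by fun_prop
  have hWa := airyW_pos s a
  have hWb := airyW_pos s b
  have key := airy_ibp_norm x t a b l (airyW s a) hab (airyW s) (fun ξ => airyW s ξ * airyR s ξ)
    (fun ξ _ => airyW_hasDerivAt s ξ) (by fun_prop) hl hne (by rw [abs_of_pos hWa])
    (by rw [abs_of_pos hWb]; exact airyW_anti s a b hs ha hab)
  have h1 : ∫ ξ in a..b, |airyW s ξ * airyR s ξ| ≤ airyW s a := by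
    have e : ∫ ξ in a..b, |airyW s ξ * airyR s ξ| = ∫ ξ in a..b, -(airyW s ξ * airyR s ξ) := by
      apply intervalIntegral.integral_congr
      intro ξ hξ
      rw [Set.uIcc_of_le hab] at hξ
      refine abs_of_nonpos (mul_nonpos_of_nonneg_of_nonpos (airyW_pos s ξ).le ?_)
      unfold airyR
      have : 0 ≤ ξ := ha.trans hξ.1
      exact div_nonpos_of_nonpos_of_nonneg (by simp; positivity) (by positivity)
    rw [e, intervalIntegral.integral_neg, intervalIntegral.integral_eq_sub_of_hasDerivAt
      (fun ξ _ => airyW_hasDerivAt s ξ) (Continuous.intervalIntegrable (by fun_prop) _ _)]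
    linarith
  have c3 : ContinuousOn (fun ξ : ℝ => (6 * t * ξ) / (x + 3 * t * ξ ^ 2) ^ 2) (Set.uIcc a b) :=
    ContinuousOn.div (by fun_prop) (by fun_prop) (fun ξ h => pow_ne_zero 2 (hne' ξ h))
  have h2 : ∫ ξ in a..b, |(6 * t * ξ) / (x + 3 * t * ξ ^ 2) ^ 2| ≤ 2 / l := by
    have hF : ∫ ξ in a..b, (6 * t * ξ) / (x + 3 * t * ξ ^ 2) ^ 2 =
        -(x + 3 * t * b ^ 2)⁻¹ - -(x + 3 * t * a ^ 2)⁻¹ := by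
      refine intervalIntegral.integral_eq_sub_of_hasDerivAt
        (f := fun ξ => -(x + 3 * t * ξ ^ 2)⁻¹) (fun ξ hξ => ?_) c3.intervalIntegrable
      have hp : HasDerivAt (fun ξ : ℝ => x + 3 * t * ξ ^ 2) (6 * t * ξ) ξ :=
        (((hasDerivAt_pow 2 ξ).const_mul (3 * t)).const_add x).congr_deriv (by norm_num; ring)
      exact (hp.fun_inv (hne' ξ hξ)).fun_neg.congr_deriv (by ring)
    have hab' : |-(x + 3 * t * b ^ 2)⁻¹ - -(x + 3 * t * a ^ 2)⁻¹| ≤ 2 / l := by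
      have e1 : |(x + 3 * t * b ^ 2)⁻¹| ≤ l⁻¹ := by
        rw [abs_inv]; exact inv_anti₀ hl (hne b Set.right_mem_uIcc)
      have e2 : |(x + 3 * t * a ^ 2)⁻¹| ≤ l⁻¹ := by
        rw [abs_inv]; exact inv_anti₀ hl (hne a Set.left_mem_uIcc)
      rw [abs_le] at e1 e2 ⊢
      rw [show 2 / l = l⁻¹ + l⁻¹ by ring]
      constructor <;> linarith [e1.1, e1.2, e2.1, e2.2]
    rw [← hF] at hab'
    refine le_trans (le_of_eq ?_) hab'
    rcases le_total 0 t with ht | ht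
    · have e : ∫ ξ in a..b, |(6 * t * ξ) / (x + 3 * t * ξ ^ 2) ^ 2| =
          ∫ ξ in a..b, (6 * t * ξ) / (x + 3 * t * ξ ^ 2) ^ 2 := by
        apply intervalIntegral.integral_congr
        intro ξ hξ
        rw [Set.uIcc_of_le hab] at hξ
        have : 0 ≤ ξ := ha.trans hξ.1
        exact abs_of_nonneg (by positivity)
      rw [← e, abs_of_nonneg]
      exact intervalIntegral.integral_nonneg hab (fun _ _ => abs_nonneg _)
    · have e : ∫ ξ in a..b, |(6 * t * ξ) / (x + 3 * t * ξ ^ 2) ^ 2| =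
          - ∫ ξ in a..b, (6 * t * ξ) / (x + 3 * t * ξ ^ 2) ^ 2 := by
        rw [← intervalIntegral.integral_neg]
        apply intervalIntegral.integral_congr
        intro ξ hξ
        rw [Set.uIcc_of_le hab] at hξ
        have : 0 ≤ ξ := ha.trans hξ.1
        refine abs_of_nonpos (div_nonpos_of_nonpos_of_nonneg ?_ (by positivity))
        nlinarith
      rw [← abs_neg (∫ ξ in a..b, (6 * t * ξ) / (x + 3 * t * ξ ^ 2) ^ 2), ← e, abs_of_nonneg]
      exact intervalIntegral.integral_nonneg hab (fun _ _ => abs_nonneg _)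
  have h3 : ∫ ξ in a..b, |airyW s ξ * (6 * t * ξ) / (x + 3 * t * ξ ^ 2) ^ 2| ≤
      airyW s a * (2 / l) := by
    refine le_trans ?_ (mul_le_mul_of_nonneg_left h2 hWa.le)
    rw [← intervalIntegral.integral_const_mul]
    refine intervalIntegral.integral_mono_on hab ?_ ?_ ?_
    · refine ContinuousOn.intervalIntegrable (ContinuousOn.abs ?_)
      exact ContinuousOn.div (by fun_prop) (by fun_prop) (fun ξ h => pow_ne_zero 2 (hne' ξ h))
    · exact (c3.abs.const_mul _).intervalIntegrable
    · intro ξ hξ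
      rw [mul_div_assoc, abs_mul, abs_of_pos (airyW_pos s ξ)]
      exact mul_le_mul_of_nonneg_right (airyW_anti s a ξ hs ha hξ.1) (abs_nonneg _)
  refine key.trans ?_
  have h1' : (∫ ξ in a..b, |airyW s ξ * airyR s ξ|) / l ≤ airyW s a / l :=
    div_le_div_of_nonneg_right h1 hl.le
  calc _ ≤ 2 * airyW s a / l + airyW s a / l + airyW s a * (2 / l) :=
        add_le_add (add_le_add le_rfl h1') h3
    _ = _ := by ring

/-- power bound on the weight -/
lemma airyW_le_pow (s ξ : ℝ) (hs : 0 ≤ s) (h : 0 < ξ) : airyW s ξ ≤ (ξ ^ 2) ^ (-s) := by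
  unfold airyW
  exact Real.rpow_le_rpow_of_nonpos (by positivity) (by linarith) (by linarith)

lemma airyW_A (s x : ℝ) (h0 : 0 ≤ s) (h1 : s ≤ 1) (hx : 1 ≤ x) :
    airyW s (√x / 5) / x ≤ 25 * x ^ (-(1/4 + s)) := by
  have hx0 : 0 < x := by linarith
  have h2 := airyW_le_pow s (√x / 5) h0 (by positivity)
  have h3 : ((√x / 5) ^ 2) ^ (-s) ≤ 25 * x ^ (-s) := by
    rw [div_pow, Real.sq_sqrt hx0.le, Real.div_rpow hx0.le (by norm_num),
      Real.rpow_neg (by norm_num : (0:ℝ) ≤ 5 ^ 2) s, div_inv_eq_mul, mul_comm]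
    refine mul_le_mul_of_nonneg_right ?_ (by positivity)
    calc ((5:ℝ) ^ 2) ^ s ≤ (5 ^ 2) ^ (1:ℝ) := Real.rpow_le_rpow_of_exponent_le (by norm_num) h1
      _ = 25 := by norm_num
  have h4 : x ^ (-s) / x ≤ x ^ (-(1/4 + s)) := by
    rw [← Real.rpow_sub_one hx0.ne']
    exact Real.rpow_le_rpow_of_exponent_le hx (by linarith)
  calc _ ≤ 25 * x ^ (-s) / x := div_le_div_of_nonneg_right (h2.trans h3) hx0.le
    _ = 25 * (x ^ (-s) / x) := by ring
    _ ≤ _ := by linarith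

lemma airyW_mid (s x z : ℝ) (h0 : 3/4 < s) (h1 : s ≤ 1) (hx : 1 ≤ x) (hz : 0 < z)
    (hzx : x / 6 ≤ z ^ 2) :
    √(z / x) / 4 * airyW s (z / 2) ≤ 6 * x ^ (-(1/4 + s)) := by
  have hx0 : 0 < x := by linarith
  have h2 := airyW_le_pow s (z / 2) (by linarith) (by positivity)
  have h3 : ((z / 2) ^ 2) ^ (-s) ≤ 4 * (z ^ 2) ^ (-s) := by
    rw [div_pow, Real.div_rpow (by positivity) (by norm_num),
      Real.rpow_neg (by norm_num : (0:ℝ) ≤ 2 ^ 2) s, div_inv_eq_mul, mul_comm]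
    refine mul_le_mul_of_nonneg_right ?_ (by positivity)
    calc ((2:ℝ) ^ 2) ^ s ≤ (2 ^ 2) ^ (1:ℝ) := Real.rpow_le_rpow_of_exponent_le (by norm_num) h1
      _ = 4 := by norm_num
  have h4 : √(z / x) = (z ^ 2) ^ (1/4 : ℝ) * x ^ (-(1/2) : ℝ) := by
    rw [Real.sqrt_div hz.le, Real.sqrt_eq_rpow, Real.sqrt_eq_rpow, Real.rpow_neg hx0.le,
      ← Real.rpow_natCast, ← Real.rpow_mul hz.le, div_eq_mul_inv]
    norm_num
  have h5 : (z ^ 2) ^ (1/4 - s) ≤ 6 * x ^ (1/4 - s) := by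
    calc (z ^ 2) ^ (1/4 - s) ≤ (x / 6) ^ (1/4 - s) :=
          Real.rpow_le_rpow_of_nonpos (by positivity) hzx (by linarith)
      _ = 6 ^ (s - 1/4) * x ^ (1/4 - s) := by
          rw [Real.div_rpow hx0.le (by norm_num), show s - 1/4 = -(1/4 - s) by ring,
            Real.rpow_neg (by norm_num)]
          field_simp
      _ ≤ 6 ^ (1:ℝ) * x ^ (1/4 - s) := by
          refine mul_le_mul_of_nonneg_right ?_ (by positivity)
          exact Real.rpow_le_rpow_of_exponent_le (by norm_num) (by linarith)
      _ = _ := by norm_num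
  calc √(z / x) / 4 * airyW s (z / 2) ≤ √(z / x) / 4 * (4 * (z ^ 2) ^ (-s)) :=
        mul_le_mul_of_nonneg_left (h2.trans h3) (by positivity)
    _ = ((z ^ 2) ^ (1/4 : ℝ) * (z ^ 2) ^ (-s)) * x ^ (-(1/2) : ℝ) := by rw [h4]; ring
    _ = (z ^ 2) ^ (1/4 - s) * x ^ (-(1/2) : ℝ) := by
        rw [← Real.rpow_add (by positivity)]; rfl
    _ ≤ (6 * x ^ (1/4 - s)) * x ^ (-(1/2) : ℝ) :=
        mul_le_mul_of_nonneg_right h5 (by positivity)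
    _ = 6 * x ^ (-(1/4 + s)) := by
        rw [mul_assoc, ← Real.rpow_add hx0]; congr 2; ring

lemma airy_ii (s x t a b : ℝ) :
    IntervalIntegrable (fun ξ => airyPh x t ξ * (airyW s ξ : ℂ)) volume a b := by
  have hWc := airyW_cont s
  have hph : Continuous (airyPh x t) := by unfold airyPh; fun_prop
  exact Continuous.intervalIntegrable (by fun_prop) _ _

lemma airy_outer_fin (s x t : ℝ) (h0 : 3/4 < s) (h1 : s ≤ 1) (hx : 1 ≤ x) (ht : |t| ≤ 2) :
    ∃ B₀, ∀ B, B₀ ≤ B →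
      ‖∫ ξ in (√x / 5)..B, airyPh x t ξ * (airyW s ξ : ℂ)‖ ≤ 1300 * x ^ (-(1/4 + s)) := by
  have hx0 : 0 < x := by linarith
  have hs0 : 0 ≤ s := by linarith
  have hA := airyW_A s x hs0 h1 hx
  have hp : 0 ≤ x ^ (-(1/4 + s)) := by positivity
  have hA0 : 0 ≤ √x / 5 := by positivity
  rcases le_or_gt 0 t with htp | htn
  · refine ⟨√x / 5, fun B hB => ?_⟩
    have := airy_vdc s x t (√x / 5) B x hs0 hA0 hB hx0 (fun ξ _ => by
      have : 0 ≤ 3 * t * ξ ^ 2 := by positivity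
      rw [abs_of_nonneg (by linarith)]; linarith)
    refine this.trans ?_
    rw [mul_div_assoc]; linarith
  · obtain ⟨r, hr⟩ : ∃ r, r = -t := ⟨_, rfl⟩
    have hr0 : 0 < r := by linarith
    have hr2 : r ≤ 2 := by rw [abs_of_neg htn] at ht; linarith
    obtain ⟨z, hzd⟩ : ∃ z, z = √(x / (3 * r)) := ⟨_, rfl⟩
    have hz0 : 0 < z := by rw [hzd]; positivity
    have hz2 : 3 * r * z ^ 2 = x := by
      rw [hzd, Real.sq_sqrt (by positivity)]; field_simp
    have hzx : x / 6 ≤ z ^ 2 := by nlinarith [sq_nonneg z]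
    have hmid := airyW_mid s x z h0 h1 hx hz0 hzx
    obtain ⟨d, hd⟩ : ∃ d, d = √(z / x) / 4 := ⟨_, rfl⟩
    have hd0 : 0 < d := by rw [hd]; positivity
    have hd2 : 16 * d ^ 2 * x = z := by
      rw [hd, div_pow, Real.sq_sqrt (by positivity)]; field_simp; norm_num
    rw [← hd] at hmid
    have hz4 : 1/4 ≤ z := by nlinarith
    have hdz : d ≤ z / 2 := by
      by_contra hcon
      push Not at hcon
      have : (z/2)^2 < d^2 := by nlinarith
      nlinarith
    have hAz : √x / 5 ≤ z / 2 := by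
      have : √x ^ 2 = x := Real.sq_sqrt hx0.le
      by_contra hcon
      push Not at hcon
      nlinarith [Real.sqrt_nonneg x]
    have hl : 0 < 3 * r * z * d := by positivity
    have hphi : ∀ ξ, x + 3 * t * ξ ^ 2 = 3 * r * (z - ξ) * (z + ξ) := by
      intro ξ; rw [← hz2, hr]; ring
    have hdl : 1 / (3 * r * z * d) = 16 * d := by
      rw [div_eq_iff hl.ne']
      have : 3 * r * z * (16 * d ^ 2 * x) = x := by rw [hd2]; linarith
      have h' : x * (16 * d * (3 * r * z * d)) = x * 1 := by linarith
      exact (mul_left_cancel₀ hx0.ne' h').symm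
    refine ⟨z + d, fun B hB => ?_⟩
    have p1 := airy_vdc s x t (√x / 5) (z / 2) (x / 2) hs0 hA0 hAz (by positivity) (fun ξ hξ => by
      have e : 0 ≤ ξ := hA0.trans hξ.1
      have e2 : ξ ^ 2 ≤ (z / 2) ^ 2 := pow_le_pow_left₀ e hξ.2 2
      refine le_trans ?_ (le_abs_self _)
      have : r * ξ ^ 2 ≤ r * (z / 2) ^ 2 := mul_le_mul_of_nonneg_left e2 hr0.le
      have e3 : t = -r := by linarith
      rw [e3]; nlinarith)
    have p2 := airy_vdc s x t (z / 2) (z - d) (3 * r * z * d) hs0 (by positivity) (by linarith) hl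
      (fun ξ hξ => by
        refine le_trans ?_ (le_abs_self _)
        rw [hphi]
        have : z * d ≤ (z + ξ) * (z - ξ) :=
          mul_le_mul (by linarith [hξ.1]) (by linarith [hξ.2]) hd0.le (by linarith [hξ.1])
        nlinarith)
    have p4 := airy_vdc s x t (z + d) B (3 * r * z * d) hs0 (by positivity) hB hl
      (fun ξ hξ => by
        refine le_trans ?_ (neg_le_abs _)
        rw [hphi]
        have : z * d ≤ (z + ξ) * (ξ - z) :=
          mul_le_mul (by linarith [hξ.1]) (by linarith [hξ.1]) hd0.le (by linarith [hξ.1])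
        nlinarith)
    have p3 : ‖∫ ξ in (z - d)..(z + d), airyPh x t ξ * (airyW s ξ : ℂ)‖ ≤
        airyW s (z / 2) * |(z + d) - (z - d)| := by
      refine intervalIntegral.norm_integral_le_of_norm_le_const (fun ξ hξ => ?_)
      rw [Set.uIoc_of_le (by linarith)] at hξ
      rw [norm_mul, airyPh_norm, one_mul, Complex.norm_real, Real.norm_eq_abs,
        abs_of_pos (airyW_pos s ξ)]
      exact airyW_anti s _ _ hs0 (by positivity) (by linarith [hξ.1])
    rw [show (z + d) - (z - d) = 2 * d by ring, abs_of_pos (by positivity)] at p3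
    have a2 : 5 * airyW s (z / 2) / (3 * r * z * d) = 80 * (d * airyW s (z / 2)) := by
      rw [← mul_one_div, hdl]; ring
    have a4 : 5 * airyW s (z + d) / (3 * r * z * d) ≤ 80 * (d * airyW s (z / 2)) := by
      rw [← a2]
      have := airyW_anti s (z / 2) (z + d) hs0 (by positivity) (by linarith)
      exact div_le_div_of_nonneg_right (by linarith) hl.le
    have a1 : 5 * airyW s (√x / 5) / (x / 2) = 10 * (airyW s (√x / 5) / x) := by
      field_simp; ring
    rw [a1] at p1
    rw [a2] at p2
    have hsplit : ∫ ξ in (√x / 5)..B, airyPh x t ξ * (airyW s ξ : ℂ) =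
        (∫ ξ in (√x / 5)..(z / 2), airyPh x t ξ * (airyW s ξ : ℂ)) +
        (∫ ξ in (z / 2)..(z - d), airyPh x t ξ * (airyW s ξ : ℂ)) +
        (∫ ξ in (z - d)..(z + d), airyPh x t ξ * (airyW s ξ : ℂ)) +
        (∫ ξ in (z + d)..B, airyPh x t ξ * (airyW s ξ : ℂ)) := by
      rw [intervalIntegral.integral_add_adjacent_intervals (airy_ii _ _ _ _ _) (airy_ii _ _ _ _ _),
        intervalIntegral.integral_add_adjacent_intervals (airy_ii _ _ _ _ _) (airy_ii _ _ _ _ _),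
        intervalIntegral.integral_add_adjacent_intervals (airy_ii _ _ _ _ _) (airy_ii _ _ _ _ _)]
    rw [hsplit]
    refine (norm_add_le _ _).trans ?_
    refine (add_le_add ((norm_add_le _ _).trans (add_le_add (norm_add_le _ _) le_rfl)) le_rfl).trans ?_
    have p4' := p4.trans a4
    have p3' : ‖∫ ξ in (z - d)..(z + d), airyPh x t ξ * (airyW s ξ : ℂ)‖ ≤
        2 * (d * airyW s (z / 2)) := p3.trans (le_of_eq (by ring))
    linarith

lemma airyW_integrable (s : ℝ) (h0 : 3/4 < s) : Integrable (airyW s) := by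
  have := integrable_rpow_neg_one_add_norm_sq (E := ℝ) (μ := volume) (r := 2 * s)
    (by simp; linarith)
  refine this.congr (Filter.Eventually.of_forall fun ξ => ?_)
  simp only [airyW, Real.norm_eq_abs, sq_abs]
  congr 1; ring

lemma airy_int (s x t : ℝ) (h0 : 3/4 < s) :
    Integrable (fun ξ => airyPh x t ξ * (airyW s ξ : ℂ)) := by
  have hph : Continuous (airyPh x t) := by unfold airyPh; fun_prop
  have hWc := airyW_cont s
  refine (airyW_integrable s h0).mono (Continuous.aestronglyMeasurable (by fun_prop))
    (Filter.Eventually.of_forall fun ξ => ?_)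
  rw [norm_mul, airyPh_norm, one_mul, Complex.norm_real]

lemma airy_outer (s x t : ℝ) (h0 : 3/4 < s) (h1 : s ≤ 1) (hx : 1 ≤ x) (ht : |t| ≤ 2) :
    ‖∫ ξ in Set.Ioi (√x / 5), airyPh x t ξ * (airyW s ξ : ℂ)‖ ≤ 1300 * x ^ (-(1/4 + s)) := by
  obtain ⟨B₀, hB⟩ := airy_outer_fin s x t h0 h1 hx ht
  have := (intervalIntegral_tendsto_integral_Ioi (√x / 5) (airy_int s x t h0).integrableOn
    Filter.tendsto_id).norm
  exact le_of_tendsto this (Filter.eventually_atTop.2 ⟨B₀, hB⟩)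

lemma airy_outer' (s x t : ℝ) (h0 : 3/4 < s) (h1 : s ≤ 1) (hx : 1 ≤ x) (ht : |t| ≤ 2) :
    ‖∫ ξ in Set.Iic (-(√x / 5)), airyPh x t ξ * (airyW s ξ : ℂ)‖ ≤ 1300 * x ^ (-(1/4 + s)) := by
  have e := integral_comp_neg_Ioi (√x / 5) (fun ξ => airyPh x t ξ * (airyW s ξ : ℂ))
  rw [← e]
  have e2 : (fun ξ => airyPh x t (-ξ) * (airyW s (-ξ) : ℂ)) =
      fun ξ => (starRingEnd ℂ) (airyPh x t ξ * (airyW s ξ : ℂ)) := by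
    ext ξ
    rw [airyPh_neg, airyW_neg, map_mul, airyPh_conj, Complex.conj_ofReal]
  rw [e2, integral_conj, RCLike.norm_conj]
  exact airy_outer s x t h0 h1 hx ht

lemma airy_int_bound (s a b M : ℝ) (h0 : 3/4 < s) (hab : a ≤ b) (hM : 0 ≤ M)
    (g : ℝ → ℝ) (hg : ContinuousOn g (Set.uIcc a b))
    (h : ∀ ξ ∈ Set.Icc a b, |g ξ| ≤ M * airyW s ξ) :
    ∫ ξ in a..b, |g ξ| ≤ M * ∫ ξ, airyW s ξ := by
  have hWc := airyW_cont s
  calc ∫ ξ in a..b, |g ξ| ≤ ∫ ξ in a..b, M * airyW s ξ :=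
        intervalIntegral.integral_mono_on hab hg.abs.intervalIntegrable
          (Continuous.intervalIntegrable (by fun_prop) _ _) h
    _ = M * ∫ ξ in a..b, airyW s ξ := intervalIntegral.integral_const_mul _ _
    _ ≤ _ := by
      refine mul_le_mul_of_nonneg_left ?_ hM
      rw [intervalIntegral.integral_of_le hab]
      exact setIntegral_le_integral (airyW_integrable s h0)
        (Filter.Eventually.of_forall fun ξ => (airyW_pos s ξ).le)

lemma airy_inner (s x t : ℝ) (h0 : 3/4 < s) (h1 : s ≤ 1) (hx : 1 ≤ x) (ht : |t| ≤ 2) :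
    ‖∫ ξ in (-(√x / 5))..(√x / 5), airyPh x t ξ * (airyW s ξ : ℂ)‖ ≤
      (108 + 72 * ∫ ξ, airyW s ξ) * x ^ (-(1/4 + s)) := by
  have hx0 : 0 < x := by linarith
  have hs0 : 0 ≤ s := by linarith
  have hWc := airyW_cont s
  have hRc := airyR_cont s
  have hR'c := airyR'_cont s
  have hAb := airyW_A s x hs0 h1 hx
  obtain ⟨p, hp⟩ : ∃ p, p = x ^ (-(1/4 + s)) := ⟨_, rfl⟩
  obtain ⟨q, hq⟩ : ∃ q, q = √x := ⟨_, rfl⟩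
  have hq1 : 1 ≤ q := by rw [hq]; exact Real.one_le_sqrt.2 hx
  have hq0 : 0 < q := by linarith
  have hqx : q ^ 2 = x := by rw [hq]; exact Real.sq_sqrt hx0.le
  have hq3 : 1 / q ^ 3 ≤ p := by
    have : 1 / q ^ 3 = x ^ (-(3/2) : ℝ) := by
      rw [hq, Real.sqrt_eq_rpow, ← Real.rpow_natCast, ← Real.rpow_mul hx0.le, Real.rpow_neg hx0.le]
      norm_num
    rw [this, hp]
    exact Real.rpow_le_rpow_of_exponent_le hx (by linarith)
  have hp0 : 0 ≤ p := le_trans (by positivity) hq3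
  rw [← hp] at hAb ⊢
  rw [← hq] at hAb ⊢
  obtain ⟨V, hV⟩ : ∃ V, V = ∫ ξ, airyW s ξ := ⟨_, rfl⟩
  have hV0 : 0 ≤ V := by rw [hV]; exact integral_nonneg fun ξ => (airyW_pos s ξ).le
  obtain ⟨A, hA⟩ : ∃ A, A = q / 5 := ⟨_, rfl⟩
  have hA0 : 0 < A := by rw [hA]; positivity
  obtain ⟨l, hl⟩ : ∃ l, l = q ^ 2 / 2 := ⟨_, rfl⟩
  have hl0 : 0 < l := by rw [hl]; positivity
  have hab : -A ≤ A := by linarith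
  have habs : ∀ ξ ∈ Set.uIcc (-A) A, |ξ| ≤ A := fun ξ hξ => by
    rw [Set.uIcc_of_le hab] at hξ; exact abs_le.2 hξ
  have hne : ∀ ξ ∈ Set.uIcc (-A) A, l ≤ x + 3 * t * ξ ^ 2 := by
    intro ξ hξ
    have e : ξ ^ 2 ≤ A ^ 2 := by rw [← sq_abs]; exact pow_le_pow_left₀ (abs_nonneg _) (habs ξ hξ) 2
    have e2 := (abs_le.1 ht).1
    have e3 : -2 * ξ ^ 2 ≤ t * ξ ^ 2 := mul_le_mul_of_nonneg_right e2 (sq_nonneg _)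
    rw [hA] at e
    rw [hl]; nlinarith
  have hne1 : ∀ ξ ∈ Set.uIcc (-A) A, l ≤ |x + 3 * t * ξ ^ 2| := fun ξ h =>
    (hne ξ h).trans (le_abs_self _)
  have hne0 : ∀ ξ ∈ Set.uIcc (-A) A, x + 3 * t * ξ ^ 2 ≠ 0 := fun ξ h =>
    (hl0.trans_le (hne ξ h)).ne'
  have h6 : ∀ ξ ∈ Set.uIcc (-A) A, |6 * t * ξ| ≤ 3 * q := by
    intro ξ hξ
    have e : |t| * |ξ| ≤ 2 * A := mul_le_mul ht (habs ξ hξ) (abs_nonneg _) (by norm_num)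
    rw [abs_mul, abs_mul, abs_of_pos (by norm_num : (0:ℝ) < 6), mul_assoc]
    rw [hA] at e; linarith
  have hdiv : ∀ ξ ∈ Set.uIcc (-A) A, |(6 * t * ξ) / (x + 3 * t * ξ ^ 2) ^ 2| ≤ 3 * q / l ^ 2 := by
    intro ξ hξ
    rw [abs_div, abs_of_pos (pow_pos (hl0.trans_le (hne ξ hξ)) 2)]
    exact div_le_div₀ (by positivity) (h6 ξ hξ) (by positivity)
      (pow_le_pow_left₀ hl0.le (hne ξ hξ) 2)
  have hinv : ∀ ξ ∈ Set.uIcc (-A) A, |(x + 3 * t * ξ ^ 2)⁻¹| ≤ l⁻¹ := by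
    intro ξ hξ
    rw [abs_inv]; exact inv_anti₀ hl0 (hne1 ξ hξ)
  have key := airy_ibp x t (-A) A (airyW s) (fun ξ => airyW s ξ * airyR s ξ)
    (fun ξ _ => airyW_hasDerivAt s ξ) (by fun_prop) hne0
  -- the second integration by parts
  have hfabs : ∀ ξ ∈ Set.uIcc (-A) A, |airyW s ξ * airyR s ξ / (x + 3 * t * ξ ^ 2)| ≤
      l⁻¹ * airyW s ξ := by
    intro ξ hξ
    rw [div_eq_mul_inv, abs_mul, abs_mul, abs_of_pos (airyW_pos s ξ), mul_comm]
    refine mul_le_mul (hinv ξ hξ) ?_ (by have := airyW_pos s ξ; positivity) (by positivity)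
    exact mul_le_of_le_one_right (airyW_pos s ξ).le (airyR_abs s ξ hs0 h1)
  have k2 := airy_ibp_norm x t (-A) A l l⁻¹ hab
    (fun ξ => airyW s ξ * airyR s ξ / (x + 3 * t * ξ ^ 2))
    (fun ξ => airyW s ξ * ((airyR s ξ ^ 2 + airyR' s ξ) * (x + 3 * t * ξ ^ 2)⁻¹
      - airyR s ξ * ((6 * t * ξ) / (x + 3 * t * ξ ^ 2) ^ 2)))
    (by
      intro ξ hξ
      have hp : HasDerivAt (fun ξ : ℝ => x + 3 * t * ξ ^ 2) (6 * t * ξ) ξ :=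
        (((hasDerivAt_pow 2 ξ).const_mul (3 * t)).const_add x).congr_deriv (by norm_num; ring)
      refine (((airyW_hasDerivAt s ξ).mul (airyR_hasDerivAt s ξ)).div hp (hne0 ξ hξ)).congr_deriv ?_
      have := hne0 ξ hξ
      simp only [Pi.mul_apply]
      field_simp)
    (by
      refine ContinuousOn.mul (by fun_prop) (ContinuousOn.sub (ContinuousOn.mul (by fun_prop)
        (ContinuousOn.inv₀ (by fun_prop) hne0)) (ContinuousOn.mul (by fun_prop)
        (ContinuousOn.div (by fun_prop) (by fun_prop) (fun ξ h => pow_ne_zero 2 (hne0 ξ h))))))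
    hl0 hne1
    ((hfabs _ Set.left_mem_uIcc).trans (mul_le_of_le_one_right (by positivity)
      (airyW_le_one s _ hs0)))
    ((hfabs _ Set.right_mem_uIcc).trans (mul_le_of_le_one_right (by positivity)
      (airyW_le_one s _ hs0)))
  have i1 := airy_int_bound s (-A) A (3 * l⁻¹ + 3 * q / l ^ 2) h0 hab (by positivity)
    (fun ξ => airyW s ξ * ((airyR s ξ ^ 2 + airyR' s ξ) * (x + 3 * t * ξ ^ 2)⁻¹
      - airyR s ξ * ((6 * t * ξ) / (x + 3 * t * ξ ^ 2) ^ 2)))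
    (by
      refine ContinuousOn.mul (by fun_prop) (ContinuousOn.sub (ContinuousOn.mul (by fun_prop)
        (ContinuousOn.inv₀ (by fun_prop) hne0)) (ContinuousOn.mul (by fun_prop)
        (ContinuousOn.div (by fun_prop) (by fun_prop) (fun ξ h => pow_ne_zero 2 (hne0 ξ h))))))
    (by
      intro ξ hξ
      rw [← Set.uIcc_of_le hab] at hξ
      rw [abs_mul, abs_of_pos (airyW_pos s ξ), mul_comm]
      refine mul_le_mul_of_nonneg_right ?_ (airyW_pos s ξ).le
      refine (abs_sub _ _).trans (add_le_add ?_ ?_)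
      · rw [abs_mul]
        refine mul_le_mul ?_ (hinv ξ hξ) (abs_nonneg _) (by norm_num)
        refine (abs_add_le _ _).trans ?_
        have e1 := airyR_abs s ξ hs0 h1
        have e2 := airyR'_abs s ξ hs0 h1
        rw [abs_pow]
        nlinarith [abs_nonneg (airyR s ξ)]
      · rw [abs_mul]
        calc _ ≤ 1 * (3 * q / l ^ 2) := mul_le_mul (airyR_abs s ξ hs0 h1) (hdiv ξ hξ)
              (abs_nonneg _) (by norm_num)
          _ = _ := one_mul _)
  have i2 := airy_int_bound s (-A) A (l⁻¹ * (3 * q / l ^ 2)) h0 hab (by positivity)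
    (fun ξ => airyW s ξ * airyR s ξ / (x + 3 * t * ξ ^ 2) * (6 * t * ξ) / (x + 3 * t * ξ ^ 2) ^ 2)
    (by
      exact ContinuousOn.div (ContinuousOn.mul (ContinuousOn.div (by fun_prop) (by fun_prop) hne0)
        (by fun_prop)) (by fun_prop) (fun ξ h => pow_ne_zero 2 (hne0 ξ h)))
    (by
      intro ξ hξ
      rw [← Set.uIcc_of_le hab] at hξ
      rw [mul_div_assoc, abs_mul]
      calc _ ≤ (l⁻¹ * airyW s ξ) * (3 * q / l ^ 2) := mul_le_mul (hfabs ξ hξ) (hdiv ξ hξ)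
              (abs_nonneg _) (by have := airyW_pos s ξ; positivity)
          _ = _ := by ring)
  have i3 := airy_int_bound s (-A) A (3 * q / l ^ 2) h0 hab (by positivity)
    (fun ξ => airyW s ξ * (6 * t * ξ) / (x + 3 * t * ξ ^ 2) ^ 2)
    (by
      exact ContinuousOn.div (by fun_prop) (by fun_prop) (fun ξ h => pow_ne_zero 2 (hne0 ξ h)))
    (by
      intro ξ hξ
      rw [← Set.uIcc_of_le hab] at hξ
      rw [mul_div_assoc, abs_mul, abs_of_pos (airyW_pos s ξ), mul_comm]
      exact mul_le_mul_of_nonneg_right (hdiv ξ hξ) (airyW_pos s ξ).le)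
  have i4 := airy_ph_int_le x t (-A) A hab
    (fun ξ => airyW s ξ * (6 * t * ξ) / (x + 3 * t * ξ ^ 2) ^ 2)
  rw [← hV] at i1 i2 i3
  rw [← hV, ← hA]
  rw [← hA] at hAb
  have hbd : ∀ ξ ∈ Set.uIcc (-A) A, airyW s ξ = airyW s A →
      ‖airyPh x t ξ * ((airyW s ξ / (x + 3 * t * ξ ^ 2) : ℝ) : ℂ)‖ ≤ 50 * p := by
    intro ξ h hw
    rw [norm_mul, airyPh_norm, one_mul, Complex.norm_real, Real.norm_eq_abs, abs_div,
      abs_of_pos (airyW_pos s ξ), hw]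
    calc _ ≤ airyW s A / l := div_le_div_of_nonneg_left (airyW_pos s A).le hl0 (hne1 ξ h)
      _ = 2 * (airyW s A / x) := by rw [hl, hqx]; field_simp
      _ ≤ _ := by linarith
  have b1 := hbd A Set.right_mem_uIcc rfl
  have b2 := hbd (-A) Set.left_mem_uIcc (airyW_neg s A)
  have hn : ‖∫ ξ in (-A)..A, airyPh x t ξ * (airyW s ξ : ℂ)‖ =
    ‖Complex.I * ∫ ξ in (-A)..A, airyPh x t ξ * (airyW s ξ : ℂ)‖ := by simp
  rw [hn, key]
  refine (norm_add_le _ _).trans ?_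
  refine (add_le_add ((norm_sub_le _ _).trans (add_le_add ((norm_sub_le _ _).trans
    (add_le_add b1 b2)) (k2.trans (add_le_add (add_le_add le_rfl
      (div_le_div_of_nonneg_right i1 hl0.le)) i2)))) (i4.trans i3)).trans ?_
  -- numerics
  have n1 : 2 * l⁻¹ / l ≤ 8 * p := by
    calc 2 * l⁻¹ / l = 8 * (1 / q ^ 3) * (1 / q) := by rw [hl]; field_simp; norm_num
      _ ≤ 8 * (1 / q ^ 3) * 1 := by gcongr; rw [div_le_one hq0]; exact hq1
      _ ≤ _ := by linarith
  have hq1' : 1 / q ≤ 1 := by rw [div_le_one hq0]; exact hq1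
  have n2 : (3 * l⁻¹ + 3 * q / l ^ 2) * V / l ≤ 36 * p * V := by
    calc (3 * l⁻¹ + 3 * q / l ^ 2) * V / l =
          (1 / q ^ 3) * (1 / q) * (12 + 24 * (1 / q)) * V := by rw [hl]; field_simp; ring
      _ ≤ p * 1 * (12 + 24 * 1) * V := by gcongr
      _ = _ := by ring
  have n3 : l⁻¹ * (3 * q / l ^ 2) * V ≤ 24 * p * V := by
    calc l⁻¹ * (3 * q / l ^ 2) * V =
          (1 / q ^ 3) * (1 / q) * (24 * (1 / q)) * V := by rw [hl]; field_simp; ring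
      _ ≤ p * 1 * (24 * 1) * V := by gcongr
      _ = _ := by ring
  have n4 : 3 * q / l ^ 2 * V ≤ 12 * p * V := by
    calc 3 * q / l ^ 2 * V = (1 / q ^ 3) * 12 * V := by rw [hl]; field_simp; ring
      _ ≤ p * 12 * V := by gcongr
      _ = _ := by ring
  calc _ ≤ 50 * p + 50 * p + (8 * p + 36 * p * V + 24 * p * V) + 12 * p * V := by gcongr
    _ = _ := by ring

/-- The kernel. -/
noncomputable def airyK (s x t : ℝ) : ℂ := ∫ ξ, airyPh x t ξ * (airyW s ξ : ℂ)

lemma airyK_norm_neg (s x t : ℝ) : ‖airyK s (-x) (-t)‖ = ‖airyK s x t‖ := by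
  unfold airyK
  rw [← RCLike.norm_conj (∫ ξ, airyPh x t ξ * (airyW s ξ : ℂ)), ← integral_conj]
  simp_rw [map_mul, airyPh_conj, Complex.conj_ofReal]

lemma airyK_pos (s x t : ℝ) (h0 : 3/4 < s) (h1 : s ≤ 1) (hx : 1 ≤ x) (ht : |t| ≤ 2) :
    ‖airyK s x t‖ ≤ (2708 + 72 * ∫ ξ, airyW s ξ) * x ^ (-(1/4 + s)) := by
  have hi := airy_int s x t h0
  have e : airyK s x t = (∫ ξ in Set.Iic (-(√x / 5)), airyPh x t ξ * (airyW s ξ : ℂ)) +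
      (∫ ξ in (-(√x / 5))..(√x / 5), airyPh x t ξ * (airyW s ξ : ℂ)) +
      ∫ ξ in Set.Ioi (√x / 5), airyPh x t ξ * (airyW s ξ : ℂ) := by
    rw [← intervalIntegral.integral_Iic_sub_Iic hi.integrableOn hi.integrableOn,
      add_sub_cancel, intervalIntegral.integral_Iic_add_Ioi hi.integrableOn hi.integrableOn]
    rfl
  rw [e]
  refine (norm_add_le _ _).trans ((add_le_add (norm_add_le _ _) le_rfl).trans ?_)
  have := airy_outer s x t h0 h1 hx ht
  have := airy_outer' s x t h0 h1 hx ht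
  have := airy_inner s x t h0 h1 hx ht
  linarith

lemma airyK_bound (s : ℝ) (h0 : 3/4 < s) (h1 : s ≤ 1) :
    ∃ C > 0, ∀ x t : ℝ, |t| ≤ 2 → ‖airyK s x t‖ ≤ C * (1 + ‖x‖) ^ (-(1/4 + s)) := by
  obtain ⟨V, hV⟩ : ∃ V, V = ∫ ξ, airyW s ξ := ⟨_, rfl⟩
  have hV0 : 0 ≤ V := by rw [hV]; exact integral_nonneg fun ξ => (airyW_pos s ξ).le
  have h2 : (1/4 : ℝ) ≤ 2 ^ (-(1/4 + s)) := by
    calc (1/4 : ℝ) = 2 ^ (-2 : ℝ) := by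
          rw [Real.rpow_neg (by norm_num)]; norm_num
      _ ≤ _ := Real.rpow_le_rpow_of_exponent_le (by norm_num) (by linarith)
  have main : ∀ x t : ℝ, |t| ≤ 2 → 0 ≤ x →
      ‖airyK s x t‖ ≤ 4 * (2708 + 72 * V) * (1 + ‖x‖) ^ (-(1/4 + s)) := by
    intro x t ht hx
    rw [Real.norm_of_nonneg hx]
    rcases le_total x 1 with hx1 | hx1
    · have e1 : ‖airyK s x t‖ ≤ V := by
        rw [hV]
        refine (norm_integral_le_integral_norm _).trans (le_of_eq ?_)
        congr 1; ext ξ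
        rw [norm_mul, airyPh_norm, one_mul, Complex.norm_real, Real.norm_of_nonneg (airyW_pos s ξ).le]
      have e2 : (2:ℝ) ^ (-(1/4 + s)) ≤ (1 + x) ^ (-(1/4 + s)) :=
        Real.rpow_le_rpow_of_nonpos (by linarith) (by linarith) (by linarith)
      nlinarith
    · have e1 := airyK_pos s x t h0 h1 hx1 ht
      rw [← hV] at e1
      have e2 : (2 * x) ^ (-(1/4 + s)) ≤ (1 + x) ^ (-(1/4 + s)) :=
        Real.rpow_le_rpow_of_nonpos (by linarith) (by linarith) (by linarith)
      rw [Real.mul_rpow (by norm_num) hx] at e2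
      have e3 : 0 ≤ x ^ (-(1/4 + s)) := by positivity
      have e4 : x ^ (-(1/4 + s)) ≤ 4 * (1 + x) ^ (-(1/4 + s)) := by nlinarith
      calc _ ≤ _ := e1
        _ ≤ (2708 + 72 * V) * (4 * (1 + x) ^ (-(1/4 + s))) := by gcongr
        _ = _ := by ring
  refine ⟨4 * (2708 + 72 * V), by positivity, fun x t ht => ?_⟩
  rcases le_total 0 x with hx | hx
  · exact main x t ht hx
  · rw [← airyK_norm_neg, ← norm_neg x]
    exact main (-x) (-t) (by rwa [abs_neg]) (by linarith)

lemma airy_ph_meas (τ : ℝ → ℝ) (hτ : Measurable τ) :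
    Measurable (fun p : ℝ × ℝ => airyPh p.2 (τ p.2) p.1) := by
  have : Measurable (fun p : ℝ × ℝ => ((p.2, τ p.2, p.1) : ℝ × ℝ × ℝ)) := by fun_prop
  exact airyPh_cont.measurable.comp this

set_option maxHeartbeats 1000000 in
lemma airy_ttA (s C : ℝ) (h0 : 3/4 < s) (hC : 0 < C)
    (hK : ∀ x t : ℝ, |t| ≤ 2 → ‖airyK s x t‖ ≤ C * (1 + ‖x‖) ^ (-(1/4 + s)))
    (τ : ℝ → ℝ) (hτ : Measurable τ) (hτ1 : ∀ x, |τ x| ≤ 1)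
    (g : ℝ → ℂ) (hgm : Measurable g) (hg1 : Integrable g) (hg2 : Integrable (fun x => ‖g x‖ ^ 2)) :
    Integrable (fun ξ => airyW s ξ *
        ‖∫ x, (starRingEnd ℂ) (g x) * airyPh x (τ x) ξ‖ ^ 2) ∧
    ∫ ξ, airyW s ξ * ‖∫ x, (starRingEnd ℂ) (g x) * airyPh x (τ x) ξ‖ ^ 2 ≤
      (∫ x : ℝ, C * (1 + ‖x‖) ^ (-(1/4 + s))) * ∫ x, ‖g x‖ ^ 2 := by
  let H : ℝ → ℝ := fun x => C * (1 + ‖x‖) ^ (-(1/4 + s))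
  have hH : Integrable H := (integrable_one_add_norm (by simp; linarith)).const_mul C
  have hHe : ∀ x, H (-x) = H x := fun x => by simp [H]
  have hH0 : ∀ x, 0 ≤ H x := fun x => by positivity
  have hWi := airyW_integrable s h0
  let F : ℝ → ℝ × ℝ → ℂ := fun ξ p =>
    (airyW s ξ : ℂ) * (((starRingEnd ℂ) (g p.1) * airyPh p.1 (τ p.1) ξ) *
      (g p.2 * (starRingEnd ℂ) (airyPh p.2 (τ p.2) ξ)))
  have hc : Measurable (starRingEnd ℂ) := Complex.continuous_conj.measurable
  have hFm : Measurable (Function.uncurry F) := by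
    have c1 : Measurable (fun q : ℝ × (ℝ × ℝ) => q.2.1) := measurable_fst.comp measurable_snd
    have c2 : Measurable (fun q : ℝ × (ℝ × ℝ) => q.2.2) := measurable_snd.comp measurable_snd
    have m1 : Measurable (fun q : ℝ × (ℝ × ℝ) => airyPh q.2.1 (τ q.2.1) q.1) :=
      Measurable.comp (g := fun p : ℝ × ℝ => airyPh p.2 (τ p.2) p.1) (airy_ph_meas τ hτ)
        (measurable_fst.prodMk c1)
    have m2 : Measurable (fun q : ℝ × (ℝ × ℝ) => airyPh q.2.2 (τ q.2.2) q.1) :=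
      Measurable.comp (g := fun p : ℝ × ℝ => airyPh p.2 (τ p.2) p.1) (airy_ph_meas τ hτ)
        (measurable_fst.prodMk c2)
    have m3 : Measurable (fun q : ℝ × (ℝ × ℝ) => (airyW s q.1 : ℂ)) :=
      Complex.measurable_ofReal.comp ((airyW_cont s).measurable.comp measurable_fst)
    have m4 : Measurable (fun q : ℝ × (ℝ × ℝ) => (starRingEnd ℂ) (g q.2.1)) := hc.comp (hgm.comp c1)
    have m5 : Measurable (fun q : ℝ × (ℝ × ℝ) => g q.2.2) := hgm.comp c2
    have m6 : Measurable (fun q : ℝ × (ℝ × ℝ) => (starRingEnd ℂ) (airyPh q.2.2 (τ q.2.2) q.1)) :=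
      hc.comp m2
    exact m3.mul ((m4.mul m1).mul (m5.mul m6))
  have hFi : Integrable (Function.uncurry F) (volume.prod (volume.prod volume)) := by
    have := hWi.mul_prod (hg1.norm.mul_prod hg1.norm)
    refine this.mono hFm.aestronglyMeasurable (Filter.Eventually.of_forall fun q => ?_)
    simp only [F, Function.uncurry, norm_mul, RCLike.norm_conj, airyPh_norm, Complex.norm_real,
      mul_one, norm_norm, le_refl]
  have hG : ∀ ξ, ∫ p, F ξ p ∂(volume.prod volume) = ((airyW s ξ *
      ‖∫ x, (starRingEnd ℂ) (g x) * airyPh x (τ x) ξ‖ ^ 2 : ℝ) : ℂ) := by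
    intro ξ
    simp only [F]
    rw [integral_const_mul, integral_prod_mul (fun x => (starRingEnd ℂ) (g x) * airyPh x (τ x) ξ)
      (fun x => g x * (starRingEnd ℂ) (airyPh x (τ x) ξ))]
    have : ∫ x, g x * (starRingEnd ℂ) (airyPh x (τ x) ξ) =
        (starRingEnd ℂ) (∫ x, (starRingEnd ℂ) (g x) * airyPh x (τ x) ξ) := by
      rw [← integral_conj]; simp
    rw [this, Complex.mul_conj, Complex.normSq_eq_norm_sq]
    push_cast; rfl
  have hKF : ∀ p : ℝ × ℝ, ∫ ξ, F ξ p = ((starRingEnd ℂ) (g p.1) * g p.2) *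
      airyK s (p.1 - p.2) (τ p.1 - τ p.2) := by
    intro p
    unfold airyK
    rw [← integral_const_mul]
    congr 1; ext ξ
    rw [← airyPh_mul_conj]; ring
  have hI2 : Integrable (fun p : ℝ × ℝ => ‖g p.2‖ ^ 2 * H (p.1 - p.2)) (volume.prod volume) :=
    hg2.convolution_integrand (ContinuousLinearMap.mul ℝ ℝ) hH
  have hI1 : Integrable (fun p : ℝ × ℝ => ‖g p.1‖ ^ 2 * H (p.1 - p.2)) (volume.prod volume) := by
    refine hI2.swap.congr (Filter.Eventually.of_forall fun p => ?_)
    simp only [Function.comp, Prod.swap]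
    rw [← hHe (p.1 - p.2), neg_sub]
  have v2 : ∫ p : ℝ × ℝ, ‖g p.2‖ ^ 2 * H (p.1 - p.2) ∂(volume.prod volume) =
      (∫ x, H x) * ∫ x, ‖g x‖ ^ 2 := by
    rw [integral_prod_symm _ hI2]
    simp only [integral_const_mul, integral_sub_right_eq_self]
    rw [integral_mul_const, mul_comm]
  have v1 : ∫ p : ℝ × ℝ, ‖g p.1‖ ^ 2 * H (p.1 - p.2) ∂(volume.prod volume) =
      (∫ x, H x) * ∫ x, ‖g x‖ ^ 2 := by
    rw [← v2, ← integral_prod_swap]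
    congr 1; ext p
    simp only [Prod.swap]
    rw [← hHe (p.2 - p.1), neg_sub]
  have hIntg : Integrable (fun ξ => airyW s ξ *
        ‖∫ x, (starRingEnd ℂ) (g x) * airyPh x (τ x) ξ‖ ^ 2) := by
    have := hFi.integral_prod_left
    simp only [Function.uncurry, hG] at this
    exact this.norm.congr (Filter.Eventually.of_forall fun ξ => by
      simp only [Complex.norm_real]
      exact Real.norm_of_nonneg (mul_nonneg (airyW_pos s ξ).le (sq_nonneg _)))
  refine ⟨hIntg, ?_⟩
  have hsw := integral_integral_swap hFi
  simp only [hG, hKF] at hsw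
  rw [integral_complex_ofReal] at hsw
  have hnn : 0 ≤ ∫ ξ, airyW s ξ * ‖∫ x, (starRingEnd ℂ) (g x) * airyPh x (τ x) ξ‖ ^ 2 :=
    integral_nonneg fun ξ => mul_nonneg (airyW_pos s ξ).le (sq_nonneg _)
  have hsw2 := congrArg norm hsw
  rw [Complex.norm_real, Real.norm_of_nonneg hnn] at hsw2
  rw [hsw2]
  have hbd : ∀ p : ℝ × ℝ, ‖((starRingEnd ℂ) (g p.1) * g p.2) *
      airyK s (p.1 - p.2) (τ p.1 - τ p.2)‖ ≤
      (1/2) * (‖g p.1‖ ^ 2 * H (p.1 - p.2)) + (1/2) * (‖g p.2‖ ^ 2 * H (p.1 - p.2)) := by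
    intro p
    have e1 := hK (p.1 - p.2) (τ p.1 - τ p.2) (by
      have a1 := abs_le.1 (hτ1 p.1)
      have a2 := abs_le.1 (hτ1 p.2)
      rw [abs_le]; constructor <;> linarith [a1.1, a1.2, a2.1, a2.2])
    rw [norm_mul, norm_mul, RCLike.norm_conj]
    calc _ ≤ ‖g p.1‖ * ‖g p.2‖ * H (p.1 - p.2) := mul_le_mul_of_nonneg_left e1 (by positivity)
      _ ≤ (1/2 * (‖g p.1‖ ^ 2 + ‖g p.2‖ ^ 2)) * H (p.1 - p.2) :=
        mul_le_mul_of_nonneg_right (by nlinarith [sq_nonneg (‖g p.1‖ - ‖g p.2‖)]) (hH0 _)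
      _ = _ := by ring
  refine (norm_integral_le_of_norm_le ((hI1.const_mul (1/2)).add (hI2.const_mul (1/2)))
    (Filter.Eventually.of_forall hbd)).trans (le_of_eq ?_)
  simp only [Pi.add_apply]
  rw [integral_add (hI1.const_mul (1/2)) (hI2.const_mul (1/2)), integral_const_mul,
    integral_const_mul, v1, v2]
  ring

lemma airy_ttB (s C : ℝ) (h0 : 3/4 < s) (hC : 0 < C)
    (hK : ∀ x t : ℝ, |t| ≤ 2 → ‖airyK s x t‖ ≤ C * (1 + ‖x‖) ^ (-(1/4 + s)))
    (hM : 0 < ∫ x : ℝ, C * (1 + ‖x‖) ^ (-(1/4 + s)))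
    (τ : ℝ → ℝ) (hτ : Measurable τ) (hτ1 : ∀ x, |τ x| ≤ 1)
    (a : ℝ → ℂ) (hac : Continuous a) (hai : Integrable a)
    (hE : Integrable (fun ξ => ‖a ξ‖ ^ 2 / airyW s ξ)) :
    ∫⁻ x, ENNReal.ofReal (‖∫ ξ, airyPh x (τ x) ξ * a ξ‖ ^ 2) ≤
      ENNReal.ofReal ((∫ x : ℝ, C * (1 + ‖x‖) ^ (-(1/4 + s))) * ∫ ξ, ‖a ξ‖ ^ 2 / airyW s ξ) := by
  obtain ⟨M, hMd⟩ : ∃ M, M = ∫ x : ℝ, C * (1 + ‖x‖) ^ (-(1/4 + s)) := ⟨_, rfl⟩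
  obtain ⟨E, hEd⟩ : ∃ E, E = ∫ ξ, ‖a ξ‖ ^ 2 / airyW s ξ := ⟨_, rfl⟩
  let f : ℝ → ℂ := fun x => ∫ ξ, airyPh x (τ x) ξ * a ξ
  have hphm : Measurable (fun p : ℝ × ℝ => airyPh p.1 (τ p.1) p.2) :=
    (airy_ph_meas τ hτ).comp (measurable_snd.prodMk measurable_fst)
  have hfm : Measurable f := by
    have : StronglyMeasurable (fun p : ℝ × ℝ => airyPh p.1 (τ p.1) p.2 * a p.2) :=
      (hphm.mul (hac.measurable.comp measurable_snd)).stronglyMeasurable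
    exact this.integral_prod_right'.measurable
  have hfb : ∀ x, ‖f x‖ ≤ ∫ ξ, ‖a ξ‖ := fun x => by
    refine (norm_integral_le_integral_norm _).trans (le_of_eq ?_)
    congr 1; ext ξ
    rw [norm_mul, airyPh_norm, one_mul]
  obtain ⟨L, hL⟩ : ∃ L, L = ∫ ξ, ‖a ξ‖ := ⟨_, rfl⟩
  rw [← hL] at hfb
  rw [← hMd, ← hEd]
  refine lintegral_le_of_forall_fin_meas_le _ ?_
  intro S hS hSf
  have hcS : IntegrableOn (fun _ : ℝ => L) S := integrableOn_const hSf
  have hcS2 : IntegrableOn (fun _ : ℝ => L ^ 2) S := integrableOn_const hSf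
  let g : ℝ → ℂ := S.indicator f
  have hgm : Measurable g := hfm.indicator hS
  have hfS : IntegrableOn f S :=
    hcS.mono' hfm.aestronglyMeasurable (Filter.Eventually.of_forall hfb)
  have hfS2 : IntegrableOn (fun x => ‖f x‖ ^ 2) S := by
    refine hcS2.mono' (hfm.norm.pow_const 2).aestronglyMeasurable
      (Filter.Eventually.of_forall fun x => ?_)
    rw [Real.norm_of_nonneg (by positivity)]
    exact pow_le_pow_left₀ (norm_nonneg _) (hfb x) 2
  have hg1 : Integrable g := hfS.integrable_indicator hS
  have hgn : (fun x => ‖g x‖ ^ 2) = S.indicator (fun x => ‖f x‖ ^ 2) := by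
    ext x
    by_cases hx : x ∈ S <;> simp [g, hx]
  have hg2 : Integrable (fun x => ‖g x‖ ^ 2) := by
    rw [hgn]; exact hfS2.integrable_indicator hS
  obtain ⟨hGi, hGb⟩ := airy_ttA s C h0 hC hK τ hτ hτ1 g hgm hg1 hg2
  rw [← hMd] at hGb
  obtain ⟨P, hP⟩ : ∃ P, P = ∫ x, ‖g x‖ ^ 2 := ⟨_, rfl⟩
  rw [← hP] at hGb
  have hPS : P = ∫ x in S, ‖f x‖ ^ 2 := by rw [hP, hgn, integral_indicator hS]
  have hlhs : ∫⁻ x in S, ENNReal.ofReal (‖∫ ξ, airyPh x (τ x) ξ * a ξ‖ ^ 2) = ENNReal.ofReal P := by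
    rw [hPS, ofReal_integral_eq_lintegral_ofReal hfS2
      (Filter.Eventually.of_forall fun x => by positivity)]
  rw [hlhs]
  apply ENNReal.ofReal_le_ofReal
  -- duality
  have hFi : Integrable (Function.uncurry (fun x ξ => (starRingEnd ℂ) (g x) *
      (airyPh x (τ x) ξ * a ξ))) (volume.prod volume) := by
    refine (hg1.norm.mul_prod hai.norm).mono ?_ (Filter.Eventually.of_forall fun q => ?_)
    · exact ((Complex.continuous_conj.measurable.comp (hgm.comp measurable_fst)).mul
        (hphm.mul (hac.measurable.comp measurable_snd))).aestronglyMeasurable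
    · simp only [Function.uncurry, norm_mul, RCLike.norm_conj, airyPh_norm, one_mul, norm_norm,
        le_refl]
  have hdual : (P : ℂ) = ∫ ξ, a ξ * ∫ x, (starRingEnd ℂ) (g x) * airyPh x (τ x) ξ := by
    have e1 : (P : ℂ) = ∫ x, ∫ ξ, (starRingEnd ℂ) (g x) * (airyPh x (τ x) ξ * a ξ) := by
      rw [hP, ← integral_complex_ofReal]
      congr 1; ext x
      rw [integral_const_mul]
      change _ = _ * f x
      by_cases hx : x ∈ S
      · simp only [g, Set.indicator_of_mem hx]
        rw [mul_comm, Complex.mul_conj, Complex.normSq_eq_norm_sq]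
      · simp [g, hx]
    rw [e1, integral_integral_swap hFi]
    congr 1; ext ξ
    rw [← integral_const_mul]
    congr 1; ext x
    ring
  have hP0 : 0 ≤ P := by rw [hP]; exact integral_nonneg fun x => by positivity
  rw [← hMd] at hM
  have hle : P ≤ M / 2 * E + 1 / (2 * M) * (M * P) := by
    have e : P = ‖∫ ξ, a ξ * ∫ x, (starRingEnd ℂ) (g x) * airyPh x (τ x) ξ‖ := by
      rw [← hdual, Complex.norm_real, Real.norm_of_nonneg hP0]
    have e2 : ‖∫ ξ, a ξ * ∫ x, (starRingEnd ℂ) (g x) * airyPh x (τ x) ξ‖ ≤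
        ∫ ξ, (M / 2 * (‖a ξ‖ ^ 2 / airyW s ξ) + 1 / (2 * M) * (airyW s ξ *
          ‖∫ x, (starRingEnd ℂ) (g x) * airyPh x (τ x) ξ‖ ^ 2)) := by
      refine norm_integral_le_of_norm_le ((hE.const_mul _).add (hGi.const_mul _))
        (Filter.Eventually.of_forall fun ξ => ?_)
      rw [norm_mul]
      generalize ‖∫ x, (starRingEnd ℂ) (g x) * airyPh x (τ x) ξ‖ = v
      generalize ‖a ξ‖ = u
      have hw := airyW_pos s ξ
      generalize airyW s ξ = w at hw
      have : M / 2 * (u ^ 2 / w) + 1 / (2 * M) * (w * v ^ 2) - u * v =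
        (M * u - w * v) ^ 2 / (2 * M * w) := by field_simp; ring
      have h2 : 0 ≤ (M * u - w * v) ^ 2 / (2 * M * w) := by positivity
      linarith
    rw [integral_add (hE.const_mul _) (hGi.const_mul _), integral_const_mul, integral_const_mul,
      ← hEd] at e2
    have : 1 / (2 * M) * (∫ ξ, airyW s ξ *
          ‖∫ x, (starRingEnd ℂ) (g x) * airyPh x (τ x) ξ‖ ^ 2) ≤ 1 / (2 * M) * (M * P) :=
      mul_le_mul_of_nonneg_left hGb (by positivity)
    linarith
  have : 1 / (2 * M) * (M * P) = P / 2 := by field_simp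
  linarith

lemma airy_uhat_eq (u : SchwartzMap ℝ ℂ) (ξ : ℝ) :
    (∫ y : ℝ, Complex.exp (-Complex.I * y * ξ) * u y)
      = (FourierTransform.fourier u : SchwartzMap ℝ ℂ) (ξ / (2 * Real.pi)) := by
  rw [SchwartzMap.fourier_coe, Real.fourier_real_eq_integral_exp_smul]
  refine integral_congr_ae (Filter.Eventually.of_forall fun y => ?_)
  simp only [smul_eq_mul]
  congr 2
  have : (Real.pi : ℂ) ≠ 0 := by exact_mod_cast Real.pi_ne_zero
  push_cast
  field_simp

lemma airy_uhat_cont (u : SchwartzMap ℝ ℂ) :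
    Continuous (fun ξ : ℝ => ∫ y : ℝ, Complex.exp (-Complex.I * y * ξ) * u y) := by
  simp_rw [airy_uhat_eq]
  exact (FourierTransform.fourier u : SchwartzMap ℝ ℂ).continuous.comp (by fun_prop)

lemma airy_uhat_decay (u : SchwartzMap ℝ ℂ) (k : ℕ) :
    ∃ D : ℝ, 0 ≤ D ∧ ∀ ξ : ℝ, (1 + |ξ|) ^ k *
      ‖∫ y : ℝ, Complex.exp (-Complex.I * y * ξ) * u y‖ ≤ D := by
  set f : SchwartzMap ℝ ℂ := FourierTransform.fourier u with hf
  obtain ⟨D, hD⟩ : ∃ D : ℝ, ∀ x : ℝ, (1 + ‖x‖) ^ k * ‖f x‖ ≤ D := by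
    have h : ∀ x : ℝ, _ := fun x =>
      SchwartzMap.one_add_le_sup_seminorm_apply (𝕜 := ℝ) (m := (k, 0)) le_rfl le_rfl f x
    simp only [norm_iteratedFDeriv_zero] at h
    exact ⟨_, h⟩
  have hD0 : 0 ≤ D := le_trans (by positivity) (hD 0)
  refine ⟨(2 * Real.pi) ^ k * D, by positivity, fun ξ => ?_⟩
  rw [airy_uhat_eq]
  have hpi : (1 : ℝ) ≤ 2 * Real.pi := by linarith [Real.pi_gt_three]
  have h1 : 1 + |ξ| ≤ (2 * Real.pi) * (1 + ‖ξ / (2 * Real.pi)‖) := by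
    rw [norm_div, Real.norm_eq_abs, Real.norm_eq_abs, abs_of_pos (by positivity : (0:ℝ) < 2 * Real.pi)]
    have : 2 * Real.pi * (1 + |ξ| / (2 * Real.pi)) = 2 * Real.pi + |ξ| := by field_simp
    rw [this]; linarith
  calc (1 + |ξ|) ^ k * ‖f (ξ / (2 * Real.pi))‖
      ≤ ((2 * Real.pi) * (1 + ‖ξ / (2 * Real.pi)‖)) ^ k * ‖f (ξ / (2 * Real.pi))‖ := by gcongr
    _ = (2 * Real.pi) ^ k * ((1 + ‖ξ / (2 * Real.pi)‖) ^ k * ‖f (ξ / (2 * Real.pi))‖) := by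
        rw [mul_pow]; ring
    _ ≤ _ := by gcongr; exact hD _

lemma airy_int2 : Integrable (fun ξ : ℝ => (1 + ‖ξ‖) ^ (-2 : ℝ)) := by
  refine integrable_one_add_norm ?_
  simp

lemma airy_neg2 (ξ : ℝ) : (1 + ‖ξ‖) ^ (-2 : ℝ) = ((1 + |ξ|) ^ 2)⁻¹ := by
  rw [Real.rpow_neg (by positivity)]
  norm_num [Real.norm_eq_abs]

lemma airy_uhat_integrable (u : SchwartzMap ℝ ℂ) :
    Integrable (fun ξ : ℝ => ∫ y : ℝ, Complex.exp (-Complex.I * y * ξ) * u y) := by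
  obtain ⟨D, hD0, hD⟩ := airy_uhat_decay u 2
  refine (airy_int2.const_mul D).mono' (airy_uhat_cont u).aestronglyMeasurable
    (Filter.Eventually.of_forall fun ξ => ?_)
  rw [airy_neg2, ← div_eq_mul_inv, le_div_iff₀ (by positivity), mul_comm]
  exact hD ξ

lemma airy_energy_integrable (u : SchwartzMap ℝ ℂ) (s : ℝ) :
    Integrable (fun ξ : ℝ => (1 + |ξ|) ^ (2 * s) *
          ‖∫ y : ℝ, Complex.exp (-Complex.I * y * ξ) * u y‖ ^ 2) := by
  obtain ⟨k, hk⟩ := exists_nat_ge s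
  obtain ⟨D, hD0, hD⟩ := airy_uhat_decay u (k + 1)
  have hc : Continuous (fun ξ : ℝ => (1 + |ξ|) ^ (2 * s)) :=
    Continuous.rpow_const (by fun_prop) (fun x => Or.inl (by positivity))
  refine (airy_int2.const_mul (D ^ 2)).mono'
    (hc.mul ((airy_uhat_cont u).norm.pow 2)).aestronglyMeasurable
    (Filter.Eventually.of_forall fun ξ => ?_)
  rw [airy_neg2, ← div_eq_mul_inv, le_div_iff₀ (by positivity), Real.norm_of_nonneg (by positivity)]
  set A := ‖∫ y : ℝ, Complex.exp (-Complex.I * y * ξ) * u y‖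
  have h1 : (1 + |ξ|) ^ (2 * s) ≤ (1 + |ξ|) ^ (2 * k) := by
    rw [← Real.rpow_natCast]
    refine Real.rpow_le_rpow_of_exponent_le (by linarith [abs_nonneg ξ]) ?_
    push_cast; linarith
  calc (1 + |ξ|) ^ (2 * s) * A ^ 2 * (1 + |ξ|) ^ 2
      ≤ (1 + |ξ|) ^ (2 * k) * A ^ 2 * (1 + |ξ|) ^ 2 := by gcongr
    _ = ((1 + |ξ|) ^ (k + 1) * A) ^ 2 := by ring
    _ ≤ D ^ 2 := by gcongr; exact hD ξ

lemma airy_divW_le (s s' : ℝ) (h : s' ≤ s) (h0 : 0 ≤ s') (ξ A : ℝ) :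
    A ^ 2 / airyW s' ξ ≤ (1 + |ξ|) ^ (2 * s) * A ^ 2 := by
  unfold airyW
  rw [Real.rpow_neg (by positivity), div_inv_eq_mul, mul_comm]
  gcongr
  have h1 : (1 + ξ ^ 2) ≤ (1 + |ξ|) ^ 2 := by
    nlinarith [abs_nonneg ξ, sq_abs ξ]
  calc (1 + ξ ^ 2) ^ s' ≤ ((1 + |ξ|) ^ 2) ^ s' := by gcongr
    _ = (1 + |ξ|) ^ (2 * s') := by
        rw [Real.rpow_mul (by positivity)]; norm_num
    _ ≤ _ := Real.rpow_le_rpow_of_exponent_le (by linarith [abs_nonneg ξ]) (by linarith)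

lemma airy_M_pos (s C : ℝ) (h0 : 3 / 4 < s) (hC : 0 < C) :
    0 < ∫ x : ℝ, C * (1 + ‖x‖) ^ (-(1 / 4 + s)) := by
  have hi : Integrable (fun x : ℝ => C * (1 + ‖x‖) ^ (-(1 / 4 + s))) := by
    refine (integrable_one_add_norm ?_).const_mul C
    simp; linarith
  rw [integral_pos_iff_support_of_nonneg (fun x => by positivity) hi]
  have : Function.support (fun x : ℝ => C * (1 + ‖x‖) ^ (-(1 / 4 + s))) = Set.univ := by
    ext x
    simp only [Function.mem_support, Set.mem_univ, iff_true]
    positivity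
  rw [this]; simp

lemma airy_U_cont (a : ℝ → ℂ) (hac : Continuous a) (hai : Integrable a) :
    Continuous (fun p : ℝ × ℝ => ∫ ξ, airyPh p.1 p.2 ξ * a ξ) := by
  refine continuous_of_dominated (bound := fun ξ => ‖a ξ‖) ?_ ?_ hai.norm ?_
  · intro p
    refine Continuous.aestronglyMeasurable ?_
    exact (airyPh_cont.comp (f := fun ξ : ℝ => (p.1, p.2, ξ)) (by fun_prop)).mul hac
  · intro p
    refine Filter.Eventually.of_forall fun ξ => ?_
    rw [norm_mul, airyPh_norm, one_mul]
  · refine Filter.Eventually.of_forall fun ξ => ?_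
    exact (airyPh_cont.comp (f := fun p : ℝ × ℝ => (p.1, p.2, ξ)) (by fun_prop)).mul
      continuous_const

/-- measurable near-maximizing times -/
noncomputable def airySel (V : ℝ → ℝ → ℝ) (q : ℕ → ℝ) : ℕ → ℝ → ℝ
  | 0 => fun _ => q 0
  | n + 1 => fun x => if V x (airySel V q n x) < V x (q (n + 1)) then q (n + 1)
      else airySel V q n x

lemma airySel_meas (V : ℝ → ℝ → ℝ) (hV : Continuous (fun p : ℝ × ℝ => V p.1 p.2)) (q : ℕ → ℝ)
    (n : ℕ) : Measurable (airySel V q n) := by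
  induction n with
  | zero => exact measurable_const
  | succ n ih =>
    refine Measurable.ite (measurableSet_lt ?_ ?_) measurable_const ih
    · exact hV.measurable.comp (measurable_id.prodMk ih)
    · exact hV.measurable.comp (measurable_id.prodMk measurable_const)

lemma airySel_abs (V : ℝ → ℝ → ℝ) (q : ℕ → ℝ) (hq : ∀ n, |q n| ≤ 1) (n : ℕ) (x : ℝ) :
    |airySel V q n x| ≤ 1 := by
  induction n with
  | zero => exact hq 0
  | succ n ih =>
    simp only [airySel]
    split_ifs
    · exact hq _
    · exact ih

lemma airySel_succ (V : ℝ → ℝ → ℝ) (q : ℕ → ℝ) (n : ℕ) (x : ℝ) :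
    V x (airySel V q n x) ≤ V x (airySel V q (n + 1) x) := by
  simp only [airySel]
  split_ifs with h
  · exact h.le
  · exact le_rfl

lemma airySel_ge (V : ℝ → ℝ → ℝ) (q : ℕ → ℝ) (n : ℕ) (x : ℝ) :
    V x (q n) ≤ V x (airySel V q n x) := by
  cases n with
  | zero => exact le_rfl
  | succ n =>
    simp only [airySel]
    split_ifs with h
    · exact le_rfl
    · exact not_lt.mp h

lemma airy_max_le (V : ℝ → ℝ → ℝ) (hV : Continuous (fun p : ℝ × ℝ => V p.1 p.2)) (L : ℝ)
    (hV0 : ∀ x t, 0 ≤ V x t) (hL : ∀ x t, V x t ≤ L) (B : ℝ≥0∞)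
    (hB : ∀ τ : ℝ → ℝ, Measurable τ → (∀ x, |τ x| ≤ 1) →
      ∫⁻ x, ENNReal.ofReal (V x (τ x) ^ 2) ≤ B)
    (F : ℝ → ℝ) (hF0 : ∀ x, 0 ≤ F x)
    (hF : ∀ x ℓ, (∀ t, |t| ≤ 1 → V x t ≤ ℓ) → F x ≤ ℓ) :
    ∫⁻ x, ENNReal.ofReal (F x ^ 2) ≤ B := by
  let cl : ℝ → ℝ := fun r => max (-1) (min 1 r)
  have hcl : Continuous cl := by fun_prop
  have hcl1 : ∀ r, |cl r| ≤ 1 := fun r => by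
    rw [abs_le]
    exact ⟨le_max_left _ _, max_le (by norm_num) (min_le_left _ _)⟩
  let q : ℕ → ℝ := fun n => cl (TopologicalSpace.denseSeq ℝ n)
  let τ := airySel V q
  have hmono : ∀ x, Monotone (fun n => V x (τ n x)) := fun x =>
    monotone_nat_of_le_succ fun n => airySel_succ V q n x
  have hbdd : ∀ x, BddAbove (Set.range fun n => V x (τ n x)) := fun x =>
    ⟨L, by rintro _ ⟨n, rfl⟩; exact hL _ _⟩
  have hℓ : ∀ x, F x ≤ ⨆ n, V x (τ n x) := by
    intro x
    refine hF x _ fun t ht => ?_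
    have hcx : Continuous (fun r => V x (cl r)) :=
      hV.comp (f := fun r => (x, cl r)) (by fun_prop)
    have hclosed : IsClosed {r | V x (cl r) ≤ ⨆ n, V x (τ n x)} :=
      isClosed_le hcx continuous_const
    have hall : ∀ r, V x (cl r) ≤ ⨆ n, V x (τ n x) := by
      intro r
      refine (TopologicalSpace.denseRange_denseSeq ℝ).induction_on
        (p := fun r => V x (cl r) ≤ ⨆ n, V x (τ n x)) r hclosed fun n => ?_
      exact (airySel_ge V q n x).trans (le_ciSup (hbdd x) n)
    have := hall t
    have hct : cl t = t := by
      rw [abs_le] at ht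
      simp only [cl]
      rw [min_eq_right ht.2, max_eq_right ht.1]
    rwa [hct] at this
  have hpt : ∀ x, ENNReal.ofReal (F x ^ 2) ≤ ⨆ n, ENNReal.ofReal (V x (τ n x) ^ 2) := by
    intro x
    have ht := tendsto_atTop_ciSup (hmono x) (hbdd x)
    have ht2 := (ENNReal.continuous_ofReal.tendsto _).comp (ht.pow 2)
    refine le_trans (ENNReal.ofReal_le_ofReal (pow_le_pow_left₀ (hF0 x) (hℓ x) 2)) ?_
    exact le_of_tendsto' ht2 fun n => le_iSup (fun n => ENNReal.ofReal (V x (τ n x) ^ 2)) n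
  calc ∫⁻ x, ENNReal.ofReal (F x ^ 2) ≤ ∫⁻ x, ⨆ n, ENNReal.ofReal (V x (τ n x) ^ 2) :=
        lintegral_mono hpt
    _ = ⨆ n, ∫⁻ x, ENNReal.ofReal (V x (τ n x) ^ 2) := by
        refine lintegral_iSup (fun n => ?_) ?_
        · exact ((hV.measurable.comp (measurable_id.prodMk
            (airySel_meas V hV q n))).pow_const 2).ennreal_ofReal
        · intro m n hmn x
          exact ENNReal.ofReal_le_ofReal (pow_le_pow_left₀ (hV0 _ _) (hmono x hmn) 2)
    _ ≤ B := iSup_le fun n => hB _ (airySel_meas V hV q n)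
        (airySel_abs V q (fun n => hcl1 _) n)

/-- Maximal-function estimate for the Airy group (Kenig–Ponce–Vega):
for `s > 3/4`, `‖e^{−t∂ₓ³}u₀‖_{L²ₓ L^∞_{|t|≤T}} ≤ C ‖u₀‖_{H^s}` for `0 < T ≤ 1`. -/
theorem airy_maximal (s : ℝ) (hs : 3 / 4 < s) :
    ∃ C > 0, ∀ T : ℝ, 0 < T → T ≤ 1 → ∀ u₀ : SchwartzMap ℝ ℂ,
      (∫⁻ x : ℝ, ENNReal.ofReal
          ((⨆ t ∈ Set.Icc (-T) T,
            ‖(1 / (2 * Real.pi) : ℂ) *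
              ∫ ξ : ℝ, Complex.exp (Complex.I * ((x : ℂ) * ξ + (t : ℂ) * (ξ : ℂ) ^ 3)) *
                ∫ y : ℝ, Complex.exp (-Complex.I * y * ξ) * u₀ y‖) ^ 2)) ^ ((1 : ℝ) / 2) ≤
      ENNReal.ofReal (C *
        (∫ ξ : ℝ, (1 + |ξ|) ^ (2 * s) *
          ‖∫ y : ℝ, Complex.exp (-Complex.I * y * ξ) * u₀ y‖ ^ 2) ^ ((1 : ℝ) / 2)) := by
  set s' := min s 1 with hs'
  have h0 : 3 / 4 < s' := lt_min hs (by norm_num)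
  obtain ⟨C, hC, hK⟩ := airyK_bound s' h0 (min_le_right _ _)
  have hM := airy_M_pos s' C h0 hC
  set M := ∫ x : ℝ, C * (1 + ‖x‖) ^ (-(1 / 4 + s')) with hMdef
  refine ⟨M ^ ((1 : ℝ) / 2), by positivity, fun T hT hT1 u₀ => ?_⟩
  set a : ℝ → ℂ := fun ξ => ∫ y : ℝ, Complex.exp (-Complex.I * y * ξ) * u₀ y with ha
  have hac : Continuous a := airy_uhat_cont u₀
  have hai : Integrable a := airy_uhat_integrable u₀
  have hEn : Integrable (fun ξ : ℝ => (1 + |ξ|) ^ (2 * s) * ‖a ξ‖ ^ 2) :=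
    airy_energy_integrable u₀ s
  have hle : ∀ ξ, ‖a ξ‖ ^ 2 / airyW s' ξ ≤ (1 + |ξ|) ^ (2 * s) * ‖a ξ‖ ^ 2 := fun ξ =>
    airy_divW_le s s' (min_le_left _ _) (by linarith) ξ _
  have hnn : ∀ ξ, 0 ≤ ‖a ξ‖ ^ 2 / airyW s' ξ := fun ξ =>
    div_nonneg (by positivity) (airyW_pos s' ξ).le
  have hE : Integrable (fun ξ => ‖a ξ‖ ^ 2 / airyW s' ξ) := by
    refine hEn.mono' ?_ (Filter.Eventually.of_forall fun ξ => ?_)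
    · exact ((hac.norm.pow 2).div (airyW_cont s')
        (fun ξ => (airyW_pos s' ξ).ne')).aestronglyMeasurable
    · rw [Real.norm_of_nonneg (hnn ξ)]; exact hle ξ
  have hEle := integral_mono hE hEn hle
  set E := ∫ ξ : ℝ, (1 + |ξ|) ^ (2 * s) * ‖a ξ‖ ^ 2 with hEdef
  have hE0 : 0 ≤ E := integral_nonneg fun ξ => by positivity
  have hcU := airy_U_cont a hac hai
  have hbU : ∀ x t, ‖∫ ξ, airyPh x t ξ * a ξ‖ ≤ ∫ ξ, ‖a ξ‖ := fun x t => by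
    refine (norm_integral_le_integral_norm _).trans (le_of_eq ?_)
    refine integral_congr_ae (Filter.Eventually.of_forall fun ξ => ?_)
    simp only [norm_mul, airyPh_norm, one_mul]
  have key : (∫⁻ x : ℝ, ENNReal.ofReal ((⨆ t ∈ Set.Icc (-T) T,
      ‖(1 / (2 * Real.pi) : ℂ) * ∫ ξ : ℝ, airyPh x t ξ * a ξ‖) ^ 2)) ≤ ENNReal.ofReal (M * E) := by
    refine airy_max_le (fun x t => ‖∫ ξ, airyPh x t ξ * a ξ‖) hcU.norm _
      (fun x t => norm_nonneg _) hbU _ ?_ _ ?_ ?_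
    · intro τ hτ hτ1
      refine (airy_ttB s' C h0 hC hK hM τ hτ hτ1 a hac hai hE).trans ?_
      exact ENNReal.ofReal_le_ofReal (mul_le_mul_of_nonneg_left hEle hM.le)
    · intro x
      exact Real.iSup_nonneg fun t => Real.iSup_nonneg fun _ => norm_nonneg _
    · intro x ℓ hℓ
      have hℓ0 : 0 ≤ ℓ := (norm_nonneg _).trans (hℓ 0 (by simp))
      refine Real.iSup_le (fun t => Real.iSup_le (fun ht => ?_) hℓ0) hℓ0
      refine le_trans ?_ (hℓ t (abs_le.2 ⟨by linarith [ht.1], by linarith [ht.2]⟩))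
      rw [norm_mul]
      refine mul_le_of_le_one_left (norm_nonneg _) ?_
      have : (1 / (2 * Real.pi) : ℂ) = ((1 / (2 * Real.pi) : ℝ) : ℂ) := by push_cast; rfl
      rw [this, Complex.norm_real, Real.norm_of_nonneg (by positivity), div_le_one (by positivity)]
      linarith [Real.pi_gt_three]
  calc _ ≤ (ENNReal.ofReal (M * E)) ^ ((1 : ℝ) / 2) :=
        ENNReal.rpow_le_rpow key (by norm_num)
    _ = ENNReal.ofReal (M ^ ((1 : ℝ) / 2) * E ^ ((1 : ℝ) / 2)) := by
        rw [ENNReal.ofReal_rpow_of_nonneg (by positivity) (by norm_num),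
          Real.mul_rpow hM.le hE0]
end
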